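/- arXiv:2008.03091 — 4 statements merged into one kernel-verified Lean document; each statement's English description precedes it below -/
import Mathlib

section
/- Any n-node finite connected graph G with diameter D and minor density δ = δ(G) admits, for every collection of parts P_1,...,P_k, a shortcut with congestion at most 8δD·⌈log₂ n⌉ and dilation at most 8δ(2D+1); in particular, G admits shortcuts with congestion O(δD log n) and dilation O(δD). -/
open SimpleGraph

/-- `H` is a minor of `G`. -/
def IsMinor {V W : Type} (G : SimpleGraph V) (H : SimpleGraph W) : Prop :=
  ∃ f : W → Set V,
    (∀ w, (f w).Nonempty) ∧
    (∀ w, (G.induce (f w)).Connected) ∧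
    (Pairwise fun w₁ w₂ => Disjoint (f w₁) (f w₂)) ∧
    (∀ w₁ w₂, H.Adj w₁ w₂ → ∃ u ∈ f w₁, ∃ v ∈ f w₂, G.Adj u v)

/-- The minor density `δ(G)`: the supremum of `|E'| / |V'|` over all minors `H = (V', E')`
of `G`. -/
noncomputable def minorDensity {V : Type} [Fintype V] (G : SimpleGraph V) : ℝ :=
  sSup {d : ℝ | ∃ (W : Type) (_ : Fintype W) (H : SimpleGraph W),
    IsMinor G H ∧ d = (Nat.card H.edgeSet : ℝ) / (Nat.card W : ℝ)}

/-- The subgraph `G[P] + H`: the union of the subgraph of `G` induced by `P` with the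
subgraph `H`. -/
def partGraph {V : Type} (G : SimpleGraph V) (P : Set V) (H : G.Subgraph) : G.Subgraph :=
  (⊤ : G.Subgraph).induce P ⊔ H

/-- The graph `Γ` has diameter at most `d`: it is connected and all pairwise distances are
at most `d`. -/
def DiamLE {α : Type} (Γ : SimpleGraph α) (d : ℝ) : Prop :=
  Γ.Connected ∧ ∀ u v : α, (Γ.dist u v : ℝ) ≤ d

/-!
Fix a breadth-first spanning tree, of depth at most `D`. Going from the deepest vertices to the
root, call a non-root vertex overcongested if more than `8δD` parts reach it by climbing in the
tree, where climbing stops at overcongested vertices. If every part is given its climbing paths,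
then no edge is used by more than `8δD` parts, and a part reaching `b` overcongested vertices gets
diameter at most `(b + 1)(2D + 1)`.

It remains to bound the number `E` of pairs of an overcongested vertex `v` and a part reaching it.
Sample every part with probability `p = 1 / (2D)`, cut the tree at the overcongested vertices and
at the sampled parts, and contract the pieces below the overcongested vertices as well as the
sampled parts. A pair survives as an edge of this minor if its part is sampled while the at most
`D - 1` parts on the way to `v` are not, so the expected number of edges is of order `p E`, against
`|O| + p k` vertices, with `|O| ≤ E / (8δD)` for the set `O` of overcongested vertices and `k` for
the number of parts. Minor density then yields `E ≤ 3δk`. Hence at least half of the parts reach at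
most `8δ - 1` overcongested vertices and can use their climbing paths; the other parts are treated
recursively. Parts with one vertex need no edges, and there are at most `n / 2` others, so
`⌈log₂ n⌉` rounds suffice.
-/

section RandomSubset

open Finset

variable {ι α : Type*}

/-- The probability that the random subset of `s` containing each element independently with
probability `p` equals `S`. It is meant for `S ⊆ s` only. -/
def sampleWeight (p : ℝ) (s S : Finset ι) : ℝ :=
  p ^ #S * (1 - p) ^ (#s - #S)

theorem sampleWeight_nonneg {p : ℝ} (hp₀ : 0 ≤ p) (hp₁ : p ≤ 1) (s S : Finset ι) :
    0 ≤ sampleWeight p s S :=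
  mul_nonneg (pow_nonneg hp₀ _) (pow_nonneg (sub_nonneg.2 hp₁) _)

theorem sum_sampleWeight_powerset (p : ℝ) (s : Finset ι) :
    ∑ S ∈ s.powerset, sampleWeight p s S = 1 := by
  simp only [sampleWeight, sum_pow_mul_eq_add_pow, add_sub_cancel, one_pow]

theorem sum_sampleWeight_Icc [DecidableEq ι] (p : ℝ) {A C s : Finset ι} (hAC : A ⊆ C)
    (hCs : C ⊆ s) :
    ∑ S ∈ Icc A C, sampleWeight p s S = p ^ #A * (1 - p) ^ (#s - #C) := by
  have hinj : Set.InjOn (A ∪ ·) ((C \ A).powerset : Set (Finset ι)) := by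
    intro S hS S' hS' (h : A ∪ S = A ∪ S')
    simp only [coe_powerset, Set.mem_preimage, Set.mem_powerset_iff, coe_subset,
      subset_sdiff] at hS hS'
    rw [← union_sdiff_cancel_left hS.2.symm, h, union_sdiff_cancel_left hS'.2.symm]
  rw [Icc_eq_image_powerset hAC, sum_image hinj]
  calc ∑ S ∈ (C \ A).powerset, sampleWeight p s (A ∪ S)
      = ∑ S ∈ (C \ A).powerset, p ^ #A * (1 - p) ^ (#s - #C) *
          (p ^ #S * (1 - p) ^ (#(C \ A) - #S)) := by
        refine sum_congr rfl fun S hS => ?_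
        obtain ⟨hSC, hSA⟩ := subset_sdiff.1 (mem_powerset.1 hS)
        have hexp : #s - #(A ∪ S) = (#s - #C) + (#(C \ A) - #S) := by
          have := card_le_card hCs
          have := card_sdiff_of_subset hAC
          have := card_union_of_disjoint hSA.symm
          have := card_le_card (union_subset hAC hSC)
          omega
        rw [sampleWeight, hexp, card_union_of_disjoint hSA.symm, pow_add, pow_add]
        ring
    _ = p ^ #A * (1 - p) ^ (#s - #C) := by
        rw [← mul_sum, sum_pow_mul_eq_add_pow, add_sub_cancel, one_pow, mul_one]

theorem sum_sampleWeight_mul_card_filter [DecidableEq ι] (p : ℝ) (s : Finset ι)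
    (N : Finset α) {c : α → ι} {B : α → Finset ι} (hcs : ∀ q ∈ N, c q ∈ s)
    (hcB : ∀ q ∈ N, c q ∉ B q) :
    ∑ S ∈ s.powerset, sampleWeight p s S * #{q ∈ N | c q ∈ S ∧ Disjoint S (B q)} =
      ∑ q ∈ N, p * (1 - p) ^ (#s - #(s \ B q)) := by
  simp only [card_filter, Nat.cast_sum, mul_sum, Nat.cast_ite, Nat.cast_one, Nat.cast_zero,
    mul_ite, mul_one, mul_zero]
  rw [sum_comm]
  refine sum_congr rfl fun q hq => ?_
  have hIcc : {S ∈ s.powerset | c q ∈ S ∧ Disjoint S (B q)} = Icc {c q} (s \ B q) := by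
    ext S
    simp only [mem_filter, mem_powerset, mem_Icc, singleton_subset_iff,
      subset_sdiff]
    tauto
  have hsub : {c q} ⊆ s \ B q :=
    singleton_subset_iff.2 (mem_sdiff.2 ⟨hcs q hq, hcB q hq⟩)
  rw [← sum_filter, hIcc, sum_sampleWeight_Icc p hsub sdiff_subset, card_singleton, pow_one]

theorem sum_sampleWeight_mul_card (p : ℝ) (s : Finset ι) :
    ∑ S ∈ s.powerset, sampleWeight p s S * #S = p * #s := by
  classical
  have h := sum_sampleWeight_mul_card_filter p s s (c := id) (B := fun _ => ∅)
    (fun _ h => h) (fun _ _ => notMem_empty _)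
  simp only [id_eq, disjoint_empty_right, and_true, sdiff_empty, Nat.sub_self, pow_zero, mul_one,
    sum_const, nsmul_eq_mul] at h
  rw [mul_comm p, ← h]
  refine sum_congr rfl fun S hS => ?_
  rw [filter_mem_eq_inter, inter_eq_right.2 (mem_powerset.1 hS)]

/- A random `S ⊆ s` contains `c q` and avoids `B q` with probability at least `p * (1 - p) ^ m`,
so the claim compares expectations. -/
theorem card_mul_le_of_forall_subset [DecidableEq ι] {s : Finset ι} {N : Finset α}
    {c : α → ι} {B : α → Finset ι} {m : ℕ} {p a b : ℝ} (hp₀ : 0 ≤ p) (hp₁ : p ≤ 1)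
    (hcs : ∀ q ∈ N, c q ∈ s) (hcB : ∀ q ∈ N, c q ∉ B q) (hBm : ∀ q ∈ N, #(B q) ≤ m)
    (h : ∀ S ⊆ s, (#{q ∈ N | c q ∈ S ∧ Disjoint S (B q)} : ℝ) ≤ a + b * #S) :
    #N * (p * (1 - p) ^ m) ≤ a + b * (p * #s) := by
  calc #N * (p * (1 - p) ^ m)
      = ∑ q ∈ N, p * (1 - p) ^ m := by rw [sum_const, nsmul_eq_mul]
    _ ≤ ∑ q ∈ N, p * (1 - p) ^ (#s - #(s \ B q)) := by
        refine sum_le_sum fun q hq => mul_le_mul_of_nonneg_left ?_ hp₀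
        refine pow_le_pow_of_le_one (sub_nonneg.2 hp₁) (sub_le_self 1 hp₀) ?_
        have := le_card_sdiff (B q) s
        have := hBm q hq
        omega
    _ = ∑ S ∈ s.powerset, sampleWeight p s S * #{q ∈ N | c q ∈ S ∧ Disjoint S (B q)} :=
        (sum_sampleWeight_mul_card_filter p s N hcs hcB).symm
    _ ≤ ∑ S ∈ s.powerset, sampleWeight p s S * (a + b * #S) :=
        sum_le_sum fun S hS => mul_le_mul_of_nonneg_left (h S (mem_powerset.1 hS))
          (sampleWeight_nonneg hp₀ hp₁ s S)
    _ = a * ∑ S ∈ s.powerset, sampleWeight p s S +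
          b * ∑ S ∈ s.powerset, sampleWeight p s S * #S := by
        rw [mul_sum, mul_sum, ← sum_add_distrib]
        exact sum_congr rfl fun S _ => by ring
    _ = a + b * (p * #s) := by
        rw [sum_sampleWeight_powerset, sum_sampleWeight_mul_card, mul_one]

end RandomSubset

theorem exp_neg_one_le_one_sub_inv_pow (n : ℕ) :
    Real.exp (-1) ≤ (1 - ((n : ℝ) + 1)⁻¹) ^ n := by
  rcases n.eq_zero_or_pos with rfl | hn
  · simp
  have hbase : 1 - ((n : ℝ) + 1)⁻¹ = (1 + (n : ℝ)⁻¹)⁻¹ := by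
    field_simp
    ring
  rw [hbase, inv_pow, Real.exp_neg]
  exact inv_anti₀ (by positivity) Real.one_add_inv_pow_le_exp

/- Squaring, `(1 - p) ^ (2 * (D - 1)) * (1 - p / 2) ^ 2 ≥ (1 - p) ^ (2 * D - 1) ≥ exp (-1)` for
`p = 1 / (2 * D)`, and `exp (-1) > (7 / 12) ^ 2`. -/
theorem seven_div_twelve_le_pow_mul {D : ℕ} (hD : 0 < D) {p : ℝ} (hp : p = (2 * D : ℝ)⁻¹) :
    7 / 12 ≤ (1 - p) ^ (D - 1) * (1 - p / 2) := by
  have hp₁ : p ≤ 1 := by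
    rw [hp]
    exact inv_le_one_of_one_le₀ (by norm_cast; omega)
  have hexp : Real.exp (-1) ≤ (1 - p) ^ (2 * D - 1) := by
    have h := exp_neg_one_le_one_sub_inv_pow (2 * D - 1)
    rwa [← Nat.cast_succ, show (2 * D - 1).succ = 2 * D by omega, Nat.cast_mul, Nat.cast_two,
      ← hp] at h
  have he : (7 / 12 : ℝ) ^ 2 ≤ Real.exp (-1) := by
    rw [Real.exp_neg, le_inv_comm₀ (by norm_num) (Real.exp_pos 1)]
    exact Real.exp_one_lt_d9.le.trans (by norm_num)
  have hpow : 0 ≤ (1 - p) ^ (D - 1) := pow_nonneg (sub_nonneg.2 hp₁) _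
  refine le_of_sq_le_sq ?_ (mul_nonneg hpow (by linarith))
  calc (7 / 12 : ℝ) ^ 2 ≤ (1 - p) ^ (2 * D - 1) := he.trans hexp
    _ = ((1 - p) ^ (D - 1)) ^ 2 * (1 - p) := by
        rw [← pow_mul, ← pow_succ]
        congr 1
        omega
    _ ≤ ((1 - p) ^ (D - 1)) ^ 2 * (1 - p / 2) ^ 2 := by
        gcongr
        nlinarith [sq_nonneg p]
    _ = ((1 - p) ^ (D - 1) * (1 - p / 2)) ^ 2 := (mul_pow _ _ _).symm

section MinorDensity

variable {V : Type} {G : SimpleGraph V}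

theorem IsMinor.card_le [Finite V] {W : Type} {H : SimpleGraph W} (h : IsMinor G H) :
    Nat.card W ≤ Nat.card V := by
  obtain ⟨f, hne, -, hdisj, -⟩ := h
  choose g hg using hne
  refine Nat.card_le_card_of_injective g fun a b hab => ?_
  by_contra hne
  exact Set.disjoint_left.1 (hdisj hne) (hg a) (hab ▸ hg b)

theorem bddAbove_minor_densities [Finite V] (G : SimpleGraph V) :
    BddAbove {d : ℝ | ∃ (W : Type) (_ : Fintype W) (H : SimpleGraph W),
      IsMinor G H ∧ d = (Nat.card H.edgeSet : ℝ) / (Nat.card W : ℝ)} := by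
  classical
  refine ⟨Nat.card V, ?_⟩
  rintro _ ⟨W, _, H, hH, rfl⟩
  have hedges : Nat.card H.edgeSet ≤ Nat.card V * Nat.card W :=
    calc Nat.card H.edgeSet
        = H.edgeFinset.card := by rw [Nat.card_eq_fintype_card, edgeFinset_card]
      _ ≤ (Nat.card W).choose 2 := by
        rw [Nat.card_eq_fintype_card]
        exact H.card_edgeFinset_le_card_choose_two
      _ ≤ Nat.card W * Nat.card W := by
        rw [Nat.choose_two_right]
        exact (Nat.div_le_self _ _).trans (Nat.mul_le_mul_left _ (Nat.sub_le _ _))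
      _ ≤ Nat.card V * Nat.card W := Nat.mul_le_mul_right _ hH.card_le
  exact div_le_of_le_mul₀ (Nat.cast_nonneg _) (Nat.cast_nonneg _) (mod_cast hedges)

variable [Fintype V]

theorem IsMinor.card_edgeSet_le {W : Type} [Finite W] {H : SimpleGraph W} (h : IsMinor G H) :
    (Nat.card H.edgeSet : ℝ) ≤ minorDensity G * Nat.card W := by
  rcases isEmpty_or_nonempty W with hW | hW
  · simp [Subsingleton.elim H ⊥]
  · rw [← div_le_iff₀ (Nat.cast_pos.2 Nat.card_pos)]
    exact le_csSup (bddAbove_minor_densities G) ⟨W, Fintype.ofFinite W, H, h, rfl⟩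

theorem minorDensity_nonneg (G : SimpleGraph V) : 0 ≤ minorDensity G := by
  refine Real.sSup_nonneg ?_
  rintro _ ⟨W, _, H, -, rfl⟩
  positivity

theorem card_le_minorDensity_mul {α β : Type} {s : Finset α} {t : Finset β}
    {f : α → Set V} {g : β → Set V} {N : Finset (α × β)}
    (hf : ∀ a ∈ s, (G.induce (f a)).Connected) (hg : ∀ b ∈ t, (G.induce (g b)).Connected)
    (hff : (s : Set α).PairwiseDisjoint f) (hgg : (t : Set β).PairwiseDisjoint g)
    (hfg : ∀ a ∈ s, ∀ b ∈ t, Disjoint (f a) (g b))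
    (hN : ∀ q ∈ N, q.1 ∈ s ∧ q.2 ∈ t ∧ ∃ u ∈ f q.1, ∃ v ∈ g q.2, G.Adj u v) :
    (N.card : ℝ) ≤ minorDensity G * (s.card + t.card) := by
  let branch : s ⊕ t → Set V := Sum.elim (fun a => f a) (fun b => g b)
  let H : SimpleGraph (s ⊕ t) := fromRel fun x y => ∃ u ∈ branch x, ∃ v ∈ branch y, G.Adj u v
  have hbranch : ∀ x, (G.induce (branch x)).Connected := by
    rintro (a | b)
    exacts [hf a a.2, hg b b.2]
  have hdisj : Pairwise fun x y => Disjoint (branch x) (branch y) := by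
    rintro (a | b) (a' | b') hne
    · exact hff a.2 a'.2 fun h => hne (congrArg Sum.inl (Subtype.ext h))
    · exact hfg a a.2 b' b'.2
    · exact (hfg a' a'.2 b b.2).symm
    · exact hgg b.2 b'.2 fun h => hne (congrArg Sum.inr (Subtype.ext h))
  have hminor : IsMinor G H := by
    refine ⟨branch, fun x => Set.nonempty_coe_sort.1 (hbranch x).nonempty, hbranch, hdisj, ?_⟩
    rintro x y ⟨-, h | ⟨u, hu, v, hv, huv⟩⟩
    exacts [h, ⟨v, hv, u, hu, huv.symm⟩]
  let edge : N → H.edgeSet := fun q =>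
    ⟨s(Sum.inl ⟨q.1.1, (hN q q.2).1⟩, Sum.inr ⟨q.1.2, (hN q q.2).2.1⟩),
      by simp, Or.inl (hN q q.2).2.2⟩
  have hedge : Function.Injective edge := by
    rintro ⟨⟨a, b⟩, hq⟩ ⟨⟨a', b'⟩, hq'⟩ h
    have hends := congrArg Subtype.val h
    simp only [edge, Sym2.eq_iff, Sum.inl.injEq, Sum.inr.injEq, reduceCtorEq, Subtype.mk.injEq,
      and_false, or_false] at hends
    exact Subtype.ext (Prod.ext hends.1 hends.2)
  calc (N.card : ℝ) ≤ Nat.card H.edgeSet := by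
        rw [← Fintype.card_coe, ← Nat.card_eq_fintype_card]
        exact_mod_cast Nat.card_le_card_of_injective edge hedge
    _ ≤ minorDensity G * Nat.card (s ⊕ t) := hminor.card_edgeSet_le
    _ = minorDensity G * (s.card + t.card) := by
        rw [Nat.card_eq_fintype_card, Fintype.card_sum, Fintype.card_coe, Fintype.card_coe,
          Nat.cast_add]

theorem one_half_le_minorDensity {u v : V} (huv : G.Adj u v) : 1 / 2 ≤ minorDensity G := by
  have hsingleton : ∀ w : V, (G.induce {w}).Connected := fun w => .of_subsingleton
  have h := card_le_minorDensity_mul (G := G) (s := {()}) (t := {()}) (f := fun _ => {u})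
    (g := fun _ => {v}) (N := {((), ())}) (fun _ _ => hsingleton u) (fun _ _ => hsingleton v)
    (by simp) (by simp)
    (by simpa using huv.ne) (by simpa using huv)
  norm_num at h
  linarith

end MinorDensity

theorem exists_set_forall_mem_iff_of_wellFounded {α : Type*} {r : α → α → Prop} (hr : WellFounded r)
    {F : Set α → α → Prop}
    (hF : ∀ A B a, (∀ b, r b a → (b ∈ A ↔ b ∈ B)) → F A a → F B a) :
    ∃ A : Set α, ∀ a, a ∈ A ↔ F A a := by
  let φ : α → Prop := hr.fix fun a ih => F {b | ∃ h : r b a, ih b h} a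
  have hφ : ∀ a, φ a ↔ F {b | ∃ _ : r b a, φ b} a := fun a => iff_of_eq (hr.fix_eq _ a)
  have hagree : ∀ a b, r b a → (b ∈ {b | ∃ _ : r b a, φ b} ↔ b ∈ {b | φ b}) :=
    fun _ _ hba => exists_prop_of_true hba
  exact ⟨{a | φ a}, fun a => (hφ a).trans
    ⟨hF _ _ a (hagree a), hF _ _ a fun b hba => (hagree a b hba).symm⟩⟩

open scoped Classical in
theorem card_filter_not_disjoint_le {ι V : Type*} {s : Finset ι} {P : ι → Set V}
    (hP : (s : Set ι).PairwiseDisjoint P) (Z : Finset V) :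
    {i ∈ s | ¬Disjoint (P i) (Z : Set V)}.card ≤ Z.card := by
  have hmeet : ∀ i ∈ {i ∈ s | ¬Disjoint (P i) (Z : Set V)}, ∃ v ∈ Z, v ∈ P i := by
    intro i hi
    obtain ⟨v, hvP, hvZ⟩ := Set.not_disjoint_iff.1 (Finset.mem_filter.1 hi).2
    exact ⟨v, hvZ, hvP⟩
  refine Finset.card_le_card_of_forall_subsingleton (fun i v => v ∈ P i) hmeet ?_
  rintro v - i ⟨hi, hvi⟩ j ⟨hj, hvj⟩
  exact hP.elim_set (Finset.mem_filter.1 hi).1 (Finset.mem_filter.1 hj).1 v hvi hvj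

section Dist

variable {α : Type*} {Γ : SimpleGraph α}

theorem exists_dist_eq_of_le_dist {u v : α} {t : ℕ} (ht : t ≤ Γ.dist u v) :
    ∃ y, Γ.dist u y = t := by
  by_cases huv : Γ.Reachable u v
  · obtain ⟨p, hp⟩ := huv.exists_walk_length_eq_dist
    refine ⟨p.getVert t, ?_⟩
    rw [← length_eq_dist_of_subwalk hp (p.isSubwalk_take t), Walk.take_length, hp, min_eq_left ht]
  · rw [dist_eq_zero_of_not_reachable huv] at ht
    exact ⟨u, by rw [dist_self]; omega⟩

/- Each class meets at most `L + 1` of the vertices at distances `0, 1, ..., dist u v` from `u`. -/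
theorem dist_add_one_le_mul_card (hΓ : Γ.Connected) {β : Type*} {f : α → β} {F : Finset β} {L : ℕ}
    (hF : ∀ a, f a ∈ F) (hL : ∀ a b, f a = f b → Γ.dist a b ≤ L) (u v : α) :
    Γ.dist u v + 1 ≤ (L + 1) * F.card := by
  classical
  have hexists : ∀ t : ℕ, ∃ y, t ≤ Γ.dist u v → Γ.dist u y = t := fun t => by
    by_cases ht : t ≤ Γ.dist u v
    · exact (exists_dist_eq_of_le_dist ht).imp fun _ hy _ => hy
    · exact ⟨u, fun h => absurd h ht⟩
  choose y hy using hexists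
  have hclass : ∀ b ∈ F, {t ∈ Finset.range (Γ.dist u v + 1) | f (y t) = b}.card ≤ L + 1 := by
    intro b _
    set times := {t ∈ Finset.range (Γ.dist u v + 1) | f (y t) = b}
    rcases times.eq_empty_or_nonempty with hempty | hne
    · simp [hempty]
    have hmem : ∀ t ∈ times, t ≤ Γ.dist u v ∧ f (y t) = b := fun t ht => by
      simpa only [times, Finset.mem_filter, Finset.mem_range, Nat.lt_succ_iff] using ht
    have hsub : times ⊆ Finset.Icc (times.min' hne) (times.min' hne + L) := by
      intro t ht
      obtain ⟨htd, htb⟩ := hmem t ht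
      obtain ⟨hmd, hmb⟩ := hmem _ (times.min'_mem hne)
      have htriangle := hΓ.dist_triangle (u := u) (v := y (times.min' hne)) (w := y t)
      have hclose := hL _ _ (hmb.trans htb.symm)
      rw [hy _ htd, hy _ hmd] at htriangle
      exact Finset.mem_Icc.2 ⟨times.min'_le t ht, by omega⟩
    refine (Finset.card_le_card hsub).trans ?_
    rw [Nat.card_Icc]
    omega
  calc Γ.dist u v + 1 = (Finset.range (Γ.dist u v + 1)).card := (Finset.card_range _).symm
    _ ≤ (L + 1) * F.card :=
      Finset.card_le_mul_card_image_of_maps_to (fun t _ => hF (y t)) _ hclass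

theorem exists_adj_dist_add_one_eq (hΓ : Γ.Connected) {r v : α} (hv : v ≠ r) :
    ∃ w, Γ.Adj v w ∧ Γ.dist r w + 1 = Γ.dist r v := by
  obtain ⟨p, hp⟩ := hΓ.exists_walk_length_eq_dist v r
  cases p with
  | nil => exact absurd rfl hv
  | @cons _ w _ hvw q =>
    refine ⟨w, hvw, ?_⟩
    rw [dist_comm, dist_comm (u := r), ← hp, Walk.length_cons,
      length_eq_dist_of_subwalk hp ⟨.cons hvw .nil, .nil, by simp⟩]

end Dist

/-- A spanning tree of `G`, given by the parent of every vertex other than the root; `depth`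
drops by one along every edge towards the root, which determines it up to a constant only. The
value `parent root` is irrelevant. -/
structure RootedSpanningTree {V : Type*} (G : SimpleGraph V) where
  root : V
  parent : V → V
  depth : V → ℕ
  adj_parent : ∀ v, v ≠ root → G.Adj v (parent v)
  depth_parent : ∀ v, v ≠ root → depth (parent v) + 1 = depth v

theorem exists_rootedSpanningTree {V : Type*} {G : SimpleGraph V} (hG : G.Connected) (r : V) :
    ∃ T : RootedSpanningTree G, T.root = r ∧ ∀ v, T.depth v = G.dist r v := by
  have hcloser : ∀ v, ∃ w, v ≠ r → G.Adj v w ∧ G.dist r w + 1 = G.dist r v := fun v => by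
    by_cases hv : v = r
    · exact ⟨r, fun h => absurd hv h⟩
    · exact (exists_adj_dist_add_one_eq hG hv).imp fun _ hw _ => hw
  choose parent hparent using hcloser
  exact ⟨⟨r, parent, G.dist r, fun v hv => (hparent v hv).1, fun v hv => (hparent v hv).2⟩,
    rfl, fun _ => rfl⟩

namespace RootedSpanningTree

section Climb

variable {V : Type*} {G : SimpleGraph V} (T : RootedSpanningTree G)

/-- One step from a vertex towards the root, allowed unless the vertex is the root or belongs to
the barrier `X`. -/
def Step (X : Set V) (a b : V) : Prop :=
  a ≠ T.root ∧ a ∉ X ∧ b = T.parent a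

/-- `T.Climb X a b`: the path in `T` from `a` towards the root reaches `b` with no vertex of `X`
before `b`; the end `b` itself may lie in `X`. -/
abbrev Climb (X : Set V) : V → V → Prop :=
  Relation.ReflTransGen (T.Step X)

/-- All vertices reached by climbing from `A`, stopping at the barrier `X`. -/
def upClosure (X A : Set V) : Set V :=
  {v | ∃ x ∈ A, T.Climb X x v}

/-- The subtree hanging below `v` after cutting `T` above every vertex of `X`. -/
def basin (X : Set V) (v : V) : Set V :=
  {x | T.Climb X x v}

variable {T}

theorem Step.depth_eq {X : Set V} {a b : V} (h : T.Step X a b) : T.depth b + 1 = T.depth a := by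
  obtain ⟨ha, -, rfl⟩ := h
  exact T.depth_parent a ha

theorem Step.adj {X : Set V} {a b : V} (h : T.Step X a b) : G.Adj a b := by
  obtain ⟨ha, -, rfl⟩ := h
  exact T.adj_parent a ha

theorem Climb.depth_le {X : Set V} {x v : V} (h : T.Climb X x v) : T.depth v ≤ T.depth x := by
  induction h with
  | refl => exact le_rfl
  | tail _ hstep ih =>
    have := hstep.depth_eq
    omega

theorem Climb.of_deeper_iff {X Y : Set V} {x v : V} (h : T.Climb X x v)
    (hXY : ∀ w, T.depth v < T.depth w → (w ∈ X ↔ w ∈ Y)) : T.Climb Y x v := by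
  induction h using Relation.ReflTransGen.head_induction_on with
  | refl => exact .refl
  | head hstep hclimb ih =>
    have hdepth := hstep.depth_eq
    have hle := Climb.depth_le hclimb
    obtain ⟨hroot, hX, rfl⟩ := hstep
    exact .head ⟨hroot, mt (hXY _ (by omega)).2 hX, rfl⟩ ih

theorem Climb.eq_or_notMem {X : Set V} {x v : V} (h : T.Climb X x v) : x = v ∨ x ∉ X := by
  rcases h.cases_head with rfl | ⟨c, ⟨-, hX, -⟩, -⟩
  exacts [Or.inl rfl, Or.inr hX]

theorem Climb.eq_of_mem {X : Set V} {x v w : V} (hv : T.Climb X x v) (hw : T.Climb X x w)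
    (hvX : v ∈ X) (hwX : w ∈ X) : v = w := by
  have hunique : Relator.RightUnique (T.Step X) := by
    rintro a b c ⟨-, -, rfl⟩ ⟨-, -, rfl⟩
    rfl
  rcases Relation.ReflTransGen.total_of_right_unique hunique hv hw with h | h
  · exact (Climb.eq_or_notMem h).resolve_right (not_not_intro hvX)
  · exact ((Climb.eq_or_notMem h).resolve_right (not_not_intro hwX)).symm

/- `Z` consists of the vertices passed after the last visit to `A`. -/
theorem Climb.exists_last_exit {X A : Set V} {x v : V} (h : T.Climb X x v) (hx : x ∈ A)
    (hv : v ∉ A) :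
    ∃ u ∈ A, u ≠ T.root ∧ ∃ Z : Finset V, v ∈ Z ∧ Disjoint A Z ∧ Z.card + T.depth v ≤ T.depth x ∧
      ∀ Y : Set V, Disjoint Y Z → T.Climb (X ∪ Y) (T.parent u) v := by
  classical
  induction h with
  | refl => exact absurd hx hv
  | @tail y w hclimb hstep ih =>
    have hdepth := hstep.depth_eq
    obtain ⟨hroot, hX, rfl⟩ := hstep
    by_cases hy : y ∈ A
    · refine ⟨y, hy, hroot, {T.parent y}, Finset.mem_singleton_self _, ?_, ?_, fun _ _ => .refl⟩
      · simpa only [Finset.coe_singleton, Set.disjoint_singleton_right] using hv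
      · have := Climb.depth_le hclimb
        rw [Finset.card_singleton]
        omega
    · obtain ⟨u, huA, hu, Z, hyZ, hAZ, hcard, hZ⟩ := ih hy
      refine ⟨u, huA, hu, insert (T.parent y) Z, Finset.mem_insert_self _ _, ?_, ?_, ?_⟩
      · rw [Finset.coe_insert, Set.disjoint_insert_right]
        exact ⟨hv, hAZ⟩
      · have := Finset.card_insert_le (T.parent y) Z
        omega
      · intro Y hY
        rw [Finset.coe_insert, Set.disjoint_insert_right] at hY
        have hyY : y ∉ Y := Set.disjoint_right.1 hY.2 hyZ
        exact (hZ Y hY.2).tail ⟨hroot, fun h => h.elim hX hyY, rfl⟩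

theorem disjoint_basin {X Q : Set V} {v : V} (hQ : Q ⊆ X) (hv : v ∉ Q) :
    Disjoint (T.basin X v) Q := by
  refine Set.disjoint_left.2 fun x hx hxQ => ?_
  rcases Climb.eq_or_notMem hx with rfl | hxX
  exacts [hv hxQ, hxX (hQ hxQ)]

variable (T)

theorem exists_climb_mem_or_eq_root (X : Set V) (x : V) :
    ∃ v, T.Climb X x v ∧ (v ∈ X ∨ v = T.root) := by
  induction hn : T.depth x using Nat.strong_induction_on generalizing x with
  | _ n ih =>
    by_cases hroot : x = T.root
    · exact ⟨x, .refl, Or.inr hroot⟩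
    by_cases hX : x ∈ X
    · exact ⟨x, .refl, Or.inl hX⟩
    have hstep : T.Step X x (T.parent x) := ⟨hroot, hX, rfl⟩
    obtain ⟨v, hclimb, hv⟩ := ih _ (by have := hstep.depth_eq; omega) (T.parent x) rfl
    exact ⟨v, .head hstep hclimb, hv⟩

theorem pairwiseDisjoint_basin (X : Set V) : X.PairwiseDisjoint (T.basin X) :=
  fun _ hv _ hw hne => Set.disjoint_left.2 fun _ hxv hxw => hne (Climb.eq_of_mem hxv hxw hv hw)

theorem connected_induce_basin (X : Set V) (v : V) : (G.induce (T.basin X v)).Connected := by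
  have hv : v ∈ T.basin X v := .refl
  refine connected_iff_exists_forall_reachable _ |>.2 ⟨⟨v, hv⟩, ?_⟩
  rintro ⟨x, hx : T.Climb X x v⟩
  refine Reachable.symm ?_
  induction hx using Relation.ReflTransGen.head_induction_on with
  | refl => exact .refl _
  | @head a c hstep hclimb ih =>
    have hac : (G.induce (T.basin X v)).Adj ⟨a, .head hstep hclimb⟩ ⟨c, hclimb⟩ := hstep.adj
    exact hac.reachable.trans ih

end Climb

section Load

open Finset

variable {V ι : Type*} {G : SimpleGraph V} (T : RootedSpanningTree G)

open scoped Classical in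
/-- The number of parts `P i` with `i ∈ s` from which one reaches `v` by climbing up to the
barrier `X`. -/
noncomputable def load (X : Set V) (P : ι → Set V) (s : Finset ι) (v : V) : ℕ :=
  #{i ∈ s | v ∈ T.upClosure X (P i)}

/-- `O` consists of the non-root vertices of load more than `c`, where climbing stops at `O`
itself. The load of `v` depends only on the vertices of `O` deeper than `v`. -/
def IsOvercongested (P : ι → Set V) (s : Finset ι) (c : ℝ) (O : Finset V) : Prop :=
  ∀ v, v ∈ O ↔ v ≠ T.root ∧ c < T.load O P s v

open scoped Classical in
/-- The pairs of a vertex `v ∈ O` and a part `P i` with `i ∈ s` such that one reaches `v` by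
climbing from `P i`; the at most one part that contains `v` is excluded. -/
noncomputable def incidences (O : Finset V) (P : ι → Set V) (s : Finset ι) : Finset (V × ι) :=
  {q ∈ O ×ˢ s | q.1 ∈ T.upClosure O (P q.2) \ P q.2}

variable {T}

theorem load_eq_of_deeper_iff {X Y : Set V} (P : ι → Set V) (s : Finset ι) {v : V}
    (hXY : ∀ w, T.depth v < T.depth w → (w ∈ X ↔ w ∈ Y)) : T.load X P s v = T.load Y P s v := by
  classical
  refine congrArg card (filter_congr fun i _ => exists_congr fun x => and_congr_right fun _ => ?_)
  exact ⟨fun h => h.of_deeper_iff hXY, fun h => h.of_deeper_iff fun w hw => (hXY w hw).symm⟩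

variable (T) in
theorem exists_isOvercongested [Finite V] (P : ι → Set V) (s : Finset ι) (c : ℝ) :
    ∃ O, T.IsOvercongested P s c O := by
  have hwf : WellFounded fun w v => T.depth v < T.depth w :=
    Finite.wellFounded_of_trans_of_irrefl (InvImage (· > ·) T.depth)
  obtain ⟨O, hO⟩ := exists_set_forall_mem_iff_of_wellFounded hwf
    (F := fun O v => v ≠ T.root ∧ c < T.load O P s v)
    fun A B v hAB h => by rwa [← load_eq_of_deeper_iff P s hAB]
  refine ⟨O.toFinite.toFinset, fun v => ?_⟩
  rw [Set.Finite.mem_toFinset, Set.Finite.coe_toFinset, hO]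

open scoped Classical in
theorem sum_load_eq_sum_card (X : Set V) (P : ι → Set V) (s : Finset ι) (O : Finset V) :
    ∑ v ∈ O, T.load X P s v = ∑ i ∈ s, #{v ∈ O | v ∈ T.upClosure X (P i)} :=
  sum_card_bipartiteAbove_eq_sum_card_bipartiteBelow fun v i => v ∈ T.upClosure X (P i)

theorem sum_load_le_card_incidences_add_card {P : ι → Set V} {s : Finset ι}
    (hP : (s : Set ι).PairwiseDisjoint P) (O : Finset V) :
    ∑ v ∈ O, T.load O P s v ≤ #(T.incidences O P s) + #O := by
  classical
  have hload : ∀ v, T.load O P s v ≤ #{i ∈ s | v ∈ T.upClosure O (P i) \ P i} + 1 := by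
    intro v
    have hone : #{i ∈ s | v ∈ P i} ≤ 1 := by
      simpa using card_filter_not_disjoint_le hP {v}
    calc T.load O P s v
        ≤ #({i ∈ s | v ∈ T.upClosure O (P i) \ P i} ∪ {i ∈ s | v ∈ P i}) := by
          refine card_le_card fun i => ?_
          simp only [mem_filter, mem_union, Set.mem_sdiff]
          tauto
      _ ≤ #{i ∈ s | v ∈ T.upClosure O (P i) \ P i} + 1 :=
        (card_union_le _ _).trans (Nat.add_le_add_left hone _)
  calc ∑ v ∈ O, T.load O P s v
      ≤ ∑ v ∈ O, (#{i ∈ s | v ∈ T.upClosure O (P i) \ P i} + 1) := sum_le_sum fun v _ => hload v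
    _ = #(T.incidences O P s) + #O := by
      rw [incidences, card_filter, sum_product, sum_add_distrib, sum_const, smul_eq_mul, mul_one]
      simp only [card_filter]

theorem exists_blocking_parts {X : Set V} {P : ι → Set V} {s : Finset ι}
    (hP : (s : Set ι).PairwiseDisjoint P) {D : ℕ} (hD : ∀ v, T.depth v ≤ D) {v : V} {i : ι}
    (hroot : v ≠ T.root) (hup : v ∈ T.upClosure X (P i)) (hv : v ∉ P i) :
    ∃ B : Finset ι, i ∉ B ∧ #B ≤ D - 1 ∧ ∀ S ⊆ s, Disjoint S B →
      v ∉ ⋃ j ∈ S, P j ∧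
        ∃ u ∈ P i, u ≠ T.root ∧ T.Climb (X ∪ ⋃ j ∈ S, P j) (T.parent u) v := by
  classical
  obtain ⟨x, hx, hclimb⟩ := hup
  obtain ⟨u, hu, huroot, Z, hvZ, hPZ, hcard, hZ⟩ := hclimb.exists_last_exit hx hv
  refine ⟨{j ∈ s | ¬Disjoint (P j) (Z : Set V)}, ?_, ?_, fun S hS hSB => ?_⟩
  · simp [hPZ]
  · have := card_filter_not_disjoint_le hP Z
    have := T.depth_parent v hroot
    have := hD x
    omega
  · have hdisj : Disjoint (⋃ j ∈ S, P j) (Z : Set V) := by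
      refine Set.disjoint_iUnion₂_left.2 fun j hj => ?_
      by_contra hjZ
      exact disjoint_left.1 hSB hj (mem_filter.2 ⟨hS hj, hjZ⟩)
    exact ⟨Set.disjoint_right.1 hdisj hvZ, u, hu, huroot, hZ _ hdisj⟩

end Load

section Density

open Finset

variable {V ι : Type} [Fintype V] {G : SimpleGraph V} {T : RootedSpanningTree G}
  {P : ι → Set V} {s : Finset ι} {O : Finset V}

/- Cut the tree at `O` and at the parts in `s`; the basins of the vertices of `O` outside these
parts, together with the parts, are the branch sets of a minor with an edge for every pair. -/
theorem card_le_minorDensity_mul_of_climb {N : Finset (V × ι)}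
    (hP : (s : Set ι).PairwiseDisjoint P) (hconn : ∀ i ∈ s, (G.induce (P i)).Connected)
    (hN : ∀ q ∈ N, q.1 ∈ O ∧ q.2 ∈ s ∧ q.1 ∉ ⋃ j ∈ s, P j ∧
      ∃ u ∈ P q.2, u ≠ T.root ∧ T.Climb (O ∪ ⋃ j ∈ s, P j) (T.parent u) q.1) :
    (#N : ℝ) ≤ minorDensity G * (#O + #s) := by
  classical
  set Q := ⋃ j ∈ s, P j
  have hbasin : ∀ v ∈ {v ∈ O | v ∉ Q}, ∀ i ∈ s, Disjoint (T.basin (O ∪ Q) v) (P i) :=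
    fun v hv i hi => (disjoint_basin Set.subset_union_right (mem_filter.1 hv).2).mono_right
      (Set.subset_biUnion_of_mem (u := P) hi)
  have hO : (({v ∈ O | v ∉ Q} : Finset V) : Set V) ⊆ O ∪ Q := fun v hv =>
    Or.inl (mem_filter.1 hv).1
  calc (#N : ℝ) ≤ minorDensity G * (#{v ∈ O | v ∉ Q} + #s) := by
        refine card_le_minorDensity_mul (fun v _ => T.connected_induce_basin _ v) hconn
          ((T.pairwiseDisjoint_basin _).subset hO) hP hbasin fun q hq => ?_
        obtain ⟨hqO, hqs, hqQ, u, hu, huroot, hclimb⟩ := hN q hq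
        exact ⟨mem_filter.2 ⟨hqO, hqQ⟩, hqs, T.parent u, hclimb, u, hu,
          (T.adj_parent u huroot).symm⟩
    _ ≤ minorDensity G * (#O + #s) := by
        gcongr
        · exact minorDensity_nonneg G
        · exact filter_subset _ _

theorem card_incidences_mul_le (hP : (s : Set ι).PairwiseDisjoint P)
    (hconn : ∀ i ∈ s, (G.induce (P i)).Connected) {D : ℕ} (hD : ∀ v, T.depth v ≤ D)
    (hO : ∀ v ∈ O, v ≠ T.root) {p : ℝ} (hp₀ : 0 ≤ p) (hp₁ : p ≤ 1) :
    #(T.incidences O P s) * (p * (1 - p) ^ (D - 1)) ≤ minorDensity G * (#O + p * #s) := by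
  classical
  have hmem : ∀ q ∈ T.incidences O P s,
      q.1 ∈ O ∧ q.2 ∈ s ∧ q.1 ∈ T.upClosure O (P q.2) ∧ q.1 ∉ P q.2 := by
    simp only [incidences, mem_filter, mem_product, Set.mem_sdiff, and_assoc, imp_self,
      implies_true]
  have hblock : ∀ q : V × ι, ∃ B : Finset ι, q ∈ T.incidences O P s → q.2 ∉ B ∧ #B ≤ D - 1 ∧
      ∀ S ⊆ s, Disjoint S B → q.1 ∉ ⋃ j ∈ S, P j ∧
        ∃ u ∈ P q.2, u ≠ T.root ∧ T.Climb (O ∪ ⋃ j ∈ S, P j) (T.parent u) q.1 := by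
    intro q
    by_cases hq : q ∈ T.incidences O P s
    · obtain ⟨hqO, -, hup, hqP⟩ := hmem q hq
      exact (exists_blocking_parts hP hD (hO _ hqO) hup hqP).imp fun _ h _ => h
    · exact ⟨∅, fun h => absurd h hq⟩
  choose B hB using hblock
  have hsample : ∀ S ⊆ s, (#{q ∈ T.incidences O P s | q.2 ∈ S ∧ Disjoint S (B q)} : ℝ) ≤
      minorDensity G * #O + minorDensity G * #S := by
    intro S hS
    rw [← mul_add]
    refine card_le_minorDensity_mul_of_climb (T := T) (hP.subset (coe_subset.2 hS))
      (fun i hi => hconn i (hS hi)) fun q hq => ?_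
    obtain ⟨hq, hqS, hSB⟩ := mem_filter.1 hq
    exact ⟨(hmem q hq).1, hqS, (hB q hq).2.2 S hS hSB⟩
  rw [mul_add]
  exact card_mul_le_of_forall_subset hp₀ hp₁ (fun q hq => (hmem q hq).2.1)
    (fun q hq => (hB q hq).1) (fun q hq => (hB q hq).2.1) hsample

theorem IsOvercongested.sum_load_le (hP : (s : Set ι).PairwiseDisjoint P)
    (hconn : ∀ i ∈ s, (G.induce (P i)).Connected) {D : ℕ} (hD : ∀ v, T.depth v ≤ D)
    (hD₀ : 0 < D) (hδ : 1 / 2 ≤ minorDensity G)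
    (hO : T.IsOvercongested P s (8 * minorDensity G * D) O) :
    ∑ v ∈ O, (T.load O P s v : ℝ) ≤ 3 * minorDensity G * #s := by
  set δ := minorDensity G
  set E := ∑ v ∈ O, (T.load O P s v : ℝ)
  obtain ⟨p, hp⟩ : ∃ p, p = (2 * D : ℝ)⁻¹ := ⟨_, rfl⟩
  have hp₀ : 0 < p := by rw [hp]; positivity
  have hp₁ : p ≤ 1 := hp ▸ inv_le_one_of_one_le₀ (by norm_cast; omega)
  have hE₀ : 0 ≤ E := sum_nonneg fun _ _ => Nat.cast_nonneg _
  have hOE : 4 * δ * #O ≤ E * p := by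
    calc 4 * δ * #O = #O • (8 * δ * D) * p := by
          rw [hp, nsmul_eq_mul]
          field_simp
          ring
      _ ≤ E * p := by
          gcongr
          exact card_nsmul_le_sum _ _ _ fun v hv => ((hO v).1 hv).2.le
  have hEN : E * (1 - p / 2) ≤ #(T.incidences O P s) := by
    have hsum : E ≤ #(T.incidences O P s) + #O := by
      simpa only [E, Nat.cast_sum, Nat.cast_add] using
        Nat.cast_le (α := ℝ).2 (sum_load_le_card_incidences_add_card hP O)
    have : 2 * (#O : ℝ) ≤ 4 * δ * #O := by gcongr; linarith
    linarith
  have hmain : E * (7 / 12) * p ≤ E * p / 4 + δ * #s * p :=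
    calc E * (7 / 12) * p ≤ E * ((1 - p) ^ (D - 1) * (1 - p / 2)) * p := by
          gcongr
          exact seven_div_twelve_le_pow_mul hD₀ hp
      _ = E * (1 - p / 2) * (p * (1 - p) ^ (D - 1)) := by ring
      _ ≤ #(T.incidences O P s) * (p * (1 - p) ^ (D - 1)) := by
          have := pow_nonneg (sub_nonneg.2 hp₁) (D - 1)
          gcongr
      _ ≤ δ * (#O + p * #s) :=
          card_incidences_mul_le hP hconn hD (fun v hv => ((hO v).1 hv).1) hp₀.le hp₁
      _ ≤ E * p / 4 + δ * #s * p := by linarith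
  have : E * (7 / 12) ≤ E / 4 + δ * #s := le_of_mul_le_mul_right (by linarith) hp₀
  linarith

open scoped Classical in
theorem IsOvercongested.two_mul_card_filter_le (hP : (s : Set ι).PairwiseDisjoint P)
    (hconn : ∀ i ∈ s, (G.induce (P i)).Connected) {D : ℕ} (hD : ∀ v, T.depth v ≤ D)
    (hD₀ : 0 < D) (hδ : 1 / 2 ≤ minorDensity G)
    (hO : T.IsOvercongested P s (8 * minorDensity G * D) O) :
    2 * #{i ∈ s | 8 * minorDensity G < #{v ∈ O | v ∈ T.upClosure O (P i)} + 1} ≤ #s := by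
  set δ := minorDensity G
  set bad := {i ∈ s | 8 * δ < #{v ∈ O | v ∈ T.upClosure O (P i)} + 1}
  have hbad : 6 * δ * #bad ≤ 3 * δ * #s :=
    calc 6 * δ * #bad = #bad • (6 * δ) := by rw [nsmul_eq_mul, mul_comm]
      _ ≤ ∑ i ∈ bad, (#{v ∈ O | v ∈ T.upClosure O (P i)} : ℝ) :=
          card_nsmul_le_sum _ _ _ fun i hi => by linarith [(mem_filter.1 hi).2]
      _ ≤ ∑ i ∈ s, (#{v ∈ O | v ∈ T.upClosure O (P i)} : ℝ) :=
          sum_le_sum_of_subset_of_nonneg (filter_subset _ _) fun _ _ _ => Nat.cast_nonneg _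
      _ = ∑ v ∈ O, (T.load O P s v : ℝ) := mod_cast (sum_load_eq_sum_card _ P s O).symm
      _ ≤ 3 * δ * #s := hO.sum_load_le hP hconn hD hD₀ hδ
  have : (2 * #bad : ℝ) ≤ #s := by nlinarith
  exact_mod_cast this

end Density

section Shortcut

variable {V : Type} {G : SimpleGraph V} (T : RootedSpanningTree G)

/-- The union of the tree paths that climb from `A` up to the barrier `X`. -/
def shortcut (X A : Set V) : G.Subgraph where
  verts := T.upClosure X A
  Adj a b := (a ∈ T.upClosure X A ∧ T.Step X a b) ∨ (b ∈ T.upClosure X A ∧ T.Step X b a)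
  adj_sub := by
    rintro a b (⟨-, h⟩ | ⟨-, h⟩)
    exacts [h.adj, h.adj.symm]
  edge_vert := by
    rintro a b (⟨ha, -⟩ | ⟨⟨x, hx, hclimb⟩, hstep⟩)
    exacts [ha, ⟨x, hx, hclimb.tail hstep⟩]
  symm := ⟨fun _ _ => Or.symm⟩

variable {T}

theorem mem_edgeSet_shortcut {X A : Set V} {e : Sym2 V} :
    e ∈ (T.shortcut X A).edgeSet ↔ ∃ a b, e = s(a, b) ∧ a ∈ T.upClosure X A ∧ T.Step X a b := by
  induction e with | h a b =>
  constructor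
  · rintro (⟨ha, hstep⟩ | ⟨hb, hstep⟩)
    exacts [⟨a, b, rfl, ha, hstep⟩, ⟨b, a, Sym2.eq_swap, hb, hstep⟩]
  · rintro ⟨c, d, he, hc, hstep⟩
    rw [he]
    exact Or.inl ⟨hc, hstep⟩

theorem Step.eq_of_sym2_eq {X : Set V} {a b c d : V} (hab : T.Step X a b) (hcd : T.Step X c d)
    (h : s(a, b) = s(c, d)) : a = c := by
  rcases Sym2.eq_iff.1 h with ⟨hac, -⟩ | ⟨rfl, rfl⟩
  · exact hac
  · have := hab.depth_eq
    have := hcd.depth_eq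
    omega

open scoped Classical in
theorem card_filter_mem_edgeSet_shortcut_le {ι : Type*} {X : Set V} {P : ι → Set V} {s : Finset ι}
    {c : ℝ} (hc : 0 ≤ c) (hX : ∀ v, v ≠ T.root → v ∉ X → T.load X P s v ≤ c) (e : Sym2 V) :
    ({i ∈ s | e ∈ (T.shortcut X (P i)).edgeSet}.card : ℝ) ≤ c := by
  rcases Finset.eq_empty_or_nonempty {i ∈ s | e ∈ (T.shortcut X (P i)).edgeSet} with h | ⟨i, hi⟩
  · simpa [h] using hc
  obtain ⟨a, b, rfl, -, hstep⟩ := mem_edgeSet_shortcut.1 (Finset.mem_filter.1 hi).2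
  refine le_trans ?_ (hX a hstep.1 hstep.2.1)
  refine Nat.cast_le.2 (Finset.card_le_card (Finset.monotone_filter_right s fun j _ hj => ?_))
  obtain ⟨c, d, he, hc, hstep'⟩ := mem_edgeSet_shortcut.1 hj
  rwa [hstep.eq_of_sym2_eq hstep' he]

theorem mem_verts_partGraph_shortcut {X A : Set V} {v : V} :
    v ∈ (partGraph G A (T.shortcut X A)).verts ↔ v ∈ T.upClosure X A :=
  ⟨fun h => h.elim (fun hv => ⟨v, hv, .refl⟩) id, Or.inr⟩

theorem Climb.exists_walk {X A : Set V} {x v : V} (h : T.Climb X x v)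
    (hx : x ∈ (partGraph G A (T.shortcut X A)).verts) :
    ∃ hv : v ∈ (partGraph G A (T.shortcut X A)).verts,
      ∃ p : (partGraph G A (T.shortcut X A)).coe.Walk ⟨x, hx⟩ ⟨v, hv⟩,
        p.length + T.depth v = T.depth x := by
  set K := partGraph G A (T.shortcut X A)
  induction h with
  | refl => exact ⟨hx, .nil, by simp⟩
  | @tail y v _ hstep ih =>
    obtain ⟨hy, p, hp⟩ := ih
    have hyv : K.Adj y v := Or.inr (Or.inl ⟨mem_verts_partGraph_shortcut.1 hy, hstep⟩)
    have hadj : K.coe.Adj ⟨y, hy⟩ ⟨v, K.edge_vert hyv.symm⟩ := hyv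
    refine ⟨K.edge_vert hyv.symm, p.concat hadj, ?_⟩
    have := hstep.depth_eq
    rw [Walk.length_concat]
    omega

theorem connected_partGraph_shortcut {X A : Set V} (hA : (G.induce A).Connected) :
    (partGraph G A (T.shortcut X A)).coe.Connected := by
  set K := partGraph G A (T.shortcut X A)
  let φ : G.induce A →g K.coe :=
    ⟨fun a => ⟨a, Or.inl a.2⟩, fun {a b} hab => Or.inl ⟨a.2, b.2, hab⟩⟩
  obtain ⟨x₀⟩ := hA.nonempty
  refine connected_iff_exists_forall_reachable _ |>.2 ⟨φ x₀, ?_⟩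
  rintro ⟨v, hv⟩
  obtain ⟨x, hx, hclimb⟩ := mem_verts_partGraph_shortcut.1 hv
  obtain ⟨_, p, -⟩ := hclimb.exists_walk (A := A) (φ ⟨x, hx⟩).2
  exact ((hA x₀ ⟨x, hx⟩).map φ).trans p.reachable

theorem dist_partGraph_shortcut_le {X A : Set V} {D : ℕ} (hD : ∀ v, T.depth v ≤ D)
    {x y : (partGraph G A (T.shortcut X A)).verts} {v : V}
    (hx : T.Climb X x v) (hy : T.Climb X y v) :
    (partGraph G A (T.shortcut X A)).coe.dist x y ≤ 2 * D := by
  obtain ⟨_, p, hp⟩ := hx.exists_walk x.2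
  obtain ⟨_, q, hq⟩ := hy.exists_walk y.2
  have hdist : (partGraph G A (T.shortcut X A)).coe.dist x y ≤ _ := dist_le (p.append q.reverse)
  rw [Walk.length_append, Walk.length_reverse] at hdist
  have := hD x
  have := hD y
  omega

/- The vertices are grouped by where climbing from them stops: at a vertex of `O` or at the root. -/
open scoped Classical in
theorem diamLE_partGraph_shortcut {O : Finset V} {A : Set V} (hA : (G.induce A).Connected) {D : ℕ}
    (hD : ∀ v, T.depth v ≤ D) {b : ℝ}
    (hb : ({v ∈ O | v ∈ T.upClosure O A}.card : ℝ) + 1 ≤ b) :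
    DiamLE (partGraph G A (T.shortcut O A)).coe (b * (2 * D + 1)) := by
  set F := {v ∈ O | v ∈ T.upClosure O A}
  choose top hclimb htop using T.exists_climb_mem_or_eq_root O
  have hconn := connected_partGraph_shortcut (T := T) (X := O) hA
  refine ⟨hconn, fun x y => ?_⟩
  have hF : ∀ w : (partGraph G A (T.shortcut O A)).verts, top w ∈ insert T.root F := by
    rintro ⟨w, hw⟩
    obtain ⟨z, hz, hzw⟩ := mem_verts_partGraph_shortcut.1 hw
    rcases htop w with hO | hroot
    · exact Finset.mem_insert_of_mem (Finset.mem_filter.2 ⟨hO, z, hz, hzw.trans (hclimb w)⟩)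
    · exact Finset.mem_insert.2 (Or.inl hroot)
  have hdist := dist_add_one_le_mul_card hconn hF (L := 2 * D)
    (fun w w' h => dist_partGraph_shortcut_le hD (hclimb w) (h ▸ hclimb w')) x y
  calc ((partGraph G A (T.shortcut O A)).coe.dist x y : ℝ)
      ≤ (2 * D + 1) * (insert T.root F).card := by
        exact_mod_cast (Nat.le_succ _).trans hdist
    _ ≤ (2 * D + 1) * (F.card + 1) := by
        gcongr
        exact_mod_cast Finset.card_insert_le _ _
    _ ≤ b * (2 * D + 1) := by
        rw [mul_comm b]
        gcongr

end Shortcut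

end RootedSpanningTree

section IsShortcutOn

variable {V ι : Type} {G : SimpleGraph V} {P : ι → Set V} {s t : Finset ι}
  {H K : ι → G.Subgraph} {c c' d : ℝ}

open scoped Classical in
/-- The subgraphs `H i` with `i ∈ s` are a shortcut with congestion `c` and dilation `d` for the
parts `P i` with `i ∈ s`. -/
structure IsShortcutOn (P : ι → Set V) (s : Finset ι) (H : ι → G.Subgraph) (c d : ℝ) : Prop where
  congestion : ∀ e, ({i ∈ s | e ∈ (H i).edgeSet}.card : ℝ) ≤ c
  dilation : ∀ i ∈ s, DiamLE (partGraph G (P i) (H i)).coe d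

theorem isShortcutOn_bot (hc : 0 ≤ c) (hd : 0 ≤ d) (hne : ∀ i ∈ s, (P i).Nonempty)
    (hsub : ∀ i ∈ s, (P i).Subsingleton) : IsShortcutOn P s (fun _ => (⊥ : G.Subgraph)) c d := by
  refine ⟨fun e => by simpa using hc, fun i hi => ?_⟩
  have hverts : (partGraph G (P i) ⊥).verts = P i := by simp [partGraph]
  have : Subsingleton (partGraph G (P i) ⊥).verts := by
    rw [hverts]
    exact (hsub i hi).coe_sort
  have : Nonempty (partGraph G (P i) ⊥).verts := by
    rw [hverts]
    exact (hne i hi).coe_sort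
  refine ⟨.of_subsingleton, fun u v => ?_⟩
  simpa [Subsingleton.elim u v] using hd

open scoped Classical in
theorem IsShortcutOn.union_piecewise (hH : IsShortcutOn P s H c d) (hK : IsShortcutOn P t K c' d) :
    IsShortcutOn P (s ∪ t) (s.piecewise H K) (c + c') d := by
  refine ⟨fun e => ?_, fun i hi => ?_⟩
  · have hsub : {i ∈ s ∪ t | e ∈ (s.piecewise H K i).edgeSet} ⊆
        {i ∈ s | e ∈ (H i).edgeSet} ∪ {i ∈ t | e ∈ (K i).edgeSet} := by
      intro i hi
      by_cases his : i ∈ s <;> simp_all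
    calc ({i ∈ s ∪ t | e ∈ (s.piecewise H K i).edgeSet}.card : ℝ)
        ≤ {i ∈ s | e ∈ (H i).edgeSet}.card + {i ∈ t | e ∈ (K i).edgeSet}.card :=
          mod_cast (Finset.card_le_card hsub).trans (Finset.card_union_le _ _)
      _ ≤ c + c' := add_le_add (hH.congestion e) (hK.congestion e)
  · by_cases his : i ∈ s
    · rw [Finset.piecewise_eq_of_mem _ _ _ his]
      exact hH.dilation i his
    · rw [Finset.piecewise_eq_of_notMem _ _ _ his]
      exact hK.dilation i ((Finset.mem_union.1 hi).resolve_left his)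

end IsShortcutOn

theorem two_mul_card_le_of_nontrivial {V ι : Type*} [Fintype V] {P : ι → Set V} {s : Finset ι}
    (hP : (s : Set ι).PairwiseDisjoint P) (hnt : ∀ i ∈ s, (P i).Nontrivial) :
    2 * s.card ≤ Fintype.card V := by
  classical
  calc 2 * s.card = ∑ _i ∈ s, 2 := by rw [Finset.sum_const, smul_eq_mul, mul_comm]
    _ ≤ ∑ i ∈ s, (P i).toFinset.card := Finset.sum_le_sum fun i hi =>
        Finset.one_lt_card_iff_nontrivial.2 (Set.toFinset_nontrivial.2 (hnt i hi))
    _ = (s.biUnion fun i => (P i).toFinset).card := (Finset.card_biUnion fun i hi j hj hij =>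
        Set.disjoint_toFinset.2 (hP hi hj hij)).symm
    _ ≤ Fintype.card V := Finset.card_le_univ _

section Existence

variable {V ι : Type} [Fintype V] {G : SimpleGraph V} {P : ι → Set V} {s : Finset ι} {D : ℕ}

open scoped Classical in
theorem exists_isShortcutOn_sdiff [Nontrivial V] (hG : G.Connected)
    (hD : ∀ u v, G.dist u v ≤ D) (hP : (s : Set ι).PairwiseDisjoint P)
    (hconn : ∀ i ∈ s, (G.induce (P i)).Connected) :
    ∃ bad ⊆ s, 2 * bad.card ≤ s.card ∧ ∃ H : ι → G.Subgraph, IsShortcutOn P (s \ bad) H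
      (8 * minorDensity G * D) (8 * minorDensity G * (2 * D + 1)) := by
  obtain ⟨r, v, hrv⟩ := exists_pair_ne V
  obtain ⟨T, hroot, hdepth⟩ := exists_rootedSpanningTree hG r
  have hTD : ∀ u, T.depth u ≤ D := fun u => (hdepth u).trans_le (hD r u)
  have hδ : 1 / 2 ≤ minorDensity G :=
    one_half_le_minorDensity (T.adj_parent v (hroot ▸ hrv.symm))
  have hD₀ : 0 < D := (hG.pos_dist_of_ne hrv).trans_le (hD r v)
  obtain ⟨O, hO⟩ := T.exists_isOvercongested P s (8 * minorDensity G * D)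
  refine ⟨_, Finset.filter_subset _ _, hO.two_mul_card_filter_le hP hconn hTD hD₀ hδ,
    fun i => T.shortcut O (P i), fun e => ?_, fun i hi => ?_⟩
  · have hload : ∀ u, u ≠ T.root → u ∉ (O : Set V) →
        T.load O P s u ≤ 8 * minorDensity G * D :=
      fun u hu huO => not_lt.1 fun h => huO ((hO u).2 ⟨hu, h⟩)
    refine le_trans ?_ (T.card_filter_mem_edgeSet_shortcut_le (by positivity) hload e)
    exact Nat.cast_le.2 (Finset.card_le_card (Finset.filter_subset_filter _ Finset.sdiff_subset))
  · obtain ⟨his, hgood⟩ := Finset.mem_sdiff.1 hi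
    refine T.diamLE_partGraph_shortcut (hconn i his) hTD (not_lt.1 fun h => ?_)
    exact hgood (Finset.mem_filter.2 ⟨his, h⟩)

theorem exists_isShortcutOn_of_card_lt_two_pow [Nontrivial V] (hG : G.Connected)
    (hD : ∀ u v, G.dist u v ≤ D) (hP : (s : Set ι).PairwiseDisjoint P)
    (hconn : ∀ i ∈ s, (G.induce (P i)).Connected) {j : ℕ} (hs : s.card < 2 ^ j) :
    ∃ H : ι → G.Subgraph, IsShortcutOn P s H
      (8 * minorDensity G * D * j) (8 * minorDensity G * (2 * D + 1)) := by
  classical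
  have hδ := minorDensity_nonneg G
  induction j generalizing s with
  | zero =>
    obtain rfl : s = ∅ := Finset.card_eq_zero.1 (by omega)
    exact ⟨_, isShortcutOn_bot (by positivity) (by positivity) (by simp) (by simp)⟩
  | succ j ih =>
    obtain ⟨bad, hbad, hcard, H, hH⟩ := exists_isShortcutOn_sdiff hG hD hP hconn
    obtain ⟨K, hK⟩ := ih (hP.subset (Finset.coe_subset.2 hbad)) (fun i hi => hconn i (hbad hi))
      (by rw [pow_succ] at hs; omega)
    have hHK := hH.union_piecewise hK
    rw [Finset.sdiff_union_of_subset hbad] at hHK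
    exact ⟨_, by convert hHK using 1; push_cast; ring⟩

theorem exists_isShortcutOn (hG : G.Connected) (hD : ∀ u v, G.dist u v ≤ D)
    (hP : (s : Set ι).PairwiseDisjoint P) (hconn : ∀ i ∈ s, (G.induce (P i)).Connected) :
    ∃ H : ι → G.Subgraph, IsShortcutOn P s H
      (8 * minorDensity G * D * Nat.clog 2 (Fintype.card V))
      (8 * minorDensity G * (2 * D + 1)) := by
  classical
  have hδ := minorDensity_nonneg G
  have hne : ∀ i ∈ s, (P i).Nonempty := fun i hi => Set.nonempty_coe_sort.1 (hconn i hi).nonempty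
  rcases subsingleton_or_nontrivial V with _ | _
  · exact ⟨_, isShortcutOn_bot (by positivity) (by positivity) hne
      fun _ _ => Set.subsingleton_of_subsingleton⟩
  have hnt : {i ∈ s | (P i).Nontrivial} ⊆ s := Finset.filter_subset _ _
  have hPnt := hP.subset (Finset.coe_subset.2 hnt)
  have hlog : {i ∈ s | (P i).Nontrivial}.card < 2 ^ Nat.clog 2 (Fintype.card V) := by
    have := two_mul_card_le_of_nontrivial hPnt fun i hi => (Finset.mem_filter.1 hi).2
    have := Nat.le_pow_clog one_lt_two (Fintype.card V)
    have := Nat.two_pow_pos (Nat.clog 2 (Fintype.card V))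
    omega
  obtain ⟨H, hH⟩ :=
    exists_isShortcutOn_of_card_lt_two_pow hG hD hPnt (fun i hi => hconn i (hnt hi)) hlog
  have hbot : IsShortcutOn P {i ∈ s | ¬(P i).Nontrivial} (fun _ => (⊥ : G.Subgraph)) 0
      (8 * minorDensity G * (2 * D + 1)) :=
    isShortcutOn_bot le_rfl (by positivity) (fun i hi => hne i (Finset.mem_filter.1 hi).1)
      fun i hi => Set.not_nontrivial_iff.1 (Finset.mem_filter.1 hi).2
  have hunion := hH.union_piecewise hbot
  rw [add_zero, Finset.filter_union_filter_not_eq] at hunion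
  exact ⟨_, hunion⟩

end Existence

/-- **Theorem.** Any `n`-node finite connected graph `G` with diameter `D` and minor density
`δ = δ(G)` admits, for every collection of parts `P 0, ..., P (k-1)`, a shortcut with
congestion at most `8δD⌈log₂ n⌉` and dilation at most `8δ(2D+1)`. -/
theorem shortcuts_of_minor_density
    {V : Type} [Fintype V] (G : SimpleGraph V) (hG : G.Connected)
    (D : ℕ) (hD : ∀ u v : V, G.dist u v ≤ D)
    (δ : ℝ) (hδ : minorDensity G = δ)
    (k : ℕ) (P : Fin k → Set V)
    (hdisj : Pairwise fun i j => Disjoint (P i) (P j))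
    (hconn : ∀ i, (G.induce (P i)).Connected) :
    ∃ H : Fin k → G.Subgraph,
      (∀ e : Sym2 V,
        ({i : Fin k | e ∈ (H i).edgeSet}.ncard : ℝ) ≤
          8 * δ * D * (Nat.clog 2 (Fintype.card V))) ∧
      (∀ i, DiamLE (partGraph G (P i) (H i)).coe (8 * δ * (2 * D + 1))) := by
  classical
  subst hδ
  obtain ⟨H, hH⟩ := exists_isShortcutOn (s := Finset.univ) hG hD (hdisj.set_pairwise _)
    fun i _ => hconn i
  refine ⟨H, fun e => ?_, fun i => hH.dilation i (Finset.mem_univ i)⟩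
  rw [← Finset.coe_filter_univ, Set.ncard_coe_finset]
  exact hH.congestion e
end

section
/- For all natural numbers δ ≥ 5 and D ≥ 2δ, there exists a finite connected graph G with diameter at most D and minor density δ(G) ≤ δ, together with a collection of parts in G, such that every shortcut for these parts has quality (congestion plus dilation) at least (δ-3)D/6 = Ω(δD). -/
/-!
Take a clique of `k` apexes and many disjoint paths, each with `k * s` vertices, and join the `a`-th
apex to the vertex at position `a * s` of every path. Going through the clique, any two vertices
are at distance at most `2 * s + 1`. Deleting the `k` apexes leaves a linear forest, and having a
set of `k` vertices whose deletion leaves a graph orientable with outdegree at most one passes to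
minors, so a minor on `w` vertices has at most `(k + 1) * w` edges.

The parts are the paths. Position along the paths changes by at most one along every edge that is
not a clique edge, so a part whose shortcut avoids the clique has diameter at least `k * s - 1`.
Otherwise every part uses one of the boundedly many clique edges, and with enough paths some clique
edge is congested.
-/

open SimpleGraph

lemma ncard_setOf_not_disjoint_le {α ι : Type*} {f : ι → Set α}
    (hf : Pairwise fun i j => Disjoint (f i) (f j)) {A : Set α} (hA : A.Finite) :
    {i | ¬ Disjoint (f i) A}.ncard ≤ A.ncard := by
  have hmeet (i : {i | ¬ Disjoint (f i) A}) : ∃ a ∈ f i, a ∈ A := Set.not_disjoint_iff.1 i.2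
  choose a haf haA using hmeet
  have ha : Function.Injective a := fun i j h =>
    Subtype.ext (hf.eq (Set.not_disjoint_iff.2 ⟨a i, haf i, h ▸ haf j⟩))
  calc {i | ¬ Disjoint (f i) A}.ncard = (Set.range a).ncard :=
        (Set.ncard_range_of_injective ha).symm
    _ ≤ A.ncard := Set.ncard_le_ncard (Set.range_subset_iff.2 haA) hA

/-- Every edge of `G - A` joins a vertex `u` to its parent `p u`, so that orienting edges towards
the parent gives outdegree at most one. Such a `p` exists precisely when `G - A` is a pseudoforest,
that is, when each of its components has at most one cycle. -/
def IsParentMap {V : Type*} (G : SimpleGraph V) (A : Set V) (p : V → V) : Prop :=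
  ∀ ⦃u v⦄, u ∉ A → v ∉ A → G.Adj u v → p u = v ∨ p v = u

namespace IsParentMap

section

variable {V : Type*} {G : SimpleGraph V} {A : Set V} {p : V → V}

/- A neighbour in `S` of a descendant of `u` is its parent or one of its children, hence again a
descendant of `u`, because `u` itself has its parent outside `S`. -/
lemma reflTransGen_of_walk (hp : IsParentMap G A p) {S : Set V} (hS : Disjoint S A) {u : V}
    (hu : p u ∉ S) {x y : S} (w : (G.induce S).Walk x y)
    (hx : Relation.ReflTransGen (fun a b => p a = b ∧ b ∈ S) x u) :
    Relation.ReflTransGen (fun a b => p a = b ∧ b ∈ S) y u := by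
  induction w with
  | nil => exact hx
  | @cons x z _ hxz _ ih =>
    apply ih
    rcases hp (hS.notMem_of_mem_left x.2) (hS.notMem_of_mem_left z.2) hxz with hpx | hpz
    · rcases hx.cases_head with rfl | ⟨b, ⟨rfl, -⟩, hb⟩
      · exact absurd (hpx ▸ z.2) hu
      · rwa [← hpx]
    · exact hx.head ⟨hpz, x.2⟩

lemma subsingleton_exit (hp : IsParentMap G A p) {S : Set V} (hS : Disjoint S A)
    (hconn : (G.induce S).Preconnected) : {u ∈ S | p u ∉ S}.Subsingleton := by
  rintro u ⟨huS, hu⟩ v ⟨hvS, hv⟩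
  obtain ⟨w⟩ := hconn ⟨u, huS⟩ ⟨v, hvS⟩
  rcases (hp.reflTransGen_of_walk hS hu w .refl).cases_head with hvu | ⟨b, ⟨rfl, hb⟩, -⟩
  · exact hvu.symm
  · exact absurd hb hv

lemma card_edgeSet_le [Finite V] (hp : IsParentMap G A p) :
    Nat.card G.edgeSet ≤ (A.ncard + 1) * Nat.card V := by
  let e : Option A × V → Sym2 V
    | (none, v) => s(v, p v)
    | (some a, v) => s(v, a)
  have hsub : G.edgeSet ⊆ Set.range e := by
    refine Sym2.ind fun u v huv => ?_
    by_cases hu : u ∈ A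
    · exact ⟨(some ⟨u, hu⟩, v), Sym2.eq_swap⟩
    by_cases hv : v ∈ A
    · exact ⟨(some ⟨v, hv⟩, u), rfl⟩
    rcases hp hu hv huv with h | h
    · exact ⟨(none, u), congrArg (s(u, ·)) h⟩
    · exact ⟨(none, v), (congrArg (s(v, ·)) h).trans Sym2.eq_swap⟩
  calc Nat.card G.edgeSet ≤ Nat.card (Set.range e) := Nat.card_mono (Set.toFinite _) hsub
    _ ≤ Nat.card (Option A × V) := Finite.card_range_le e
    _ = (A.ncard + 1) * Nat.card V := by
        rw [Nat.card_prod, Finite.card_option, Nat.card_coe_set_eq]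

end

variable {V : Type} {G : SimpleGraph V} {A : Set V} {p : V → V}

lemma exists_of_isMinor {W : Type} {H : SimpleGraph W} (hp : IsParentMap G A p) (hA : A.Finite)
    (hGH : IsMinor G H) :
    ∃ (B : Set W) (q : W → W), B.ncard ≤ A.ncard ∧ IsParentMap H B q := by
  obtain ⟨f, -, hconn, hdisj, hadj⟩ := hGH
  have branch_unique {w w' : W} {v : V} (hw : v ∈ f w) (hw' : v ∈ f w') : w = w' :=
    hdisj.eq (Set.not_disjoint_iff.2 ⟨v, hw, hw'⟩)
  let B : Set W := {w | ¬ Disjoint (f w) A}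
  let Exits (w w' : W) : Prop := w ≠ w' ∧ ∃ u ∈ f w, p u ∈ f w'
  have exits_unique {w w₁ w₂ : W} (hw : w ∉ B) : Exits w w₁ → Exits w w₂ → w₁ = w₂ := by
    rintro ⟨hne₁, u₁, hu₁, hpu₁⟩ ⟨hne₂, u₂, hu₂, hpu₂⟩
    have hu : u₁ = u₂ := hp.subsingleton_exit (not_not.1 hw) (hconn w).preconnected
      ⟨hu₁, fun h => hne₁ (branch_unique h hpu₁)⟩ ⟨hu₂, fun h => hne₂ (branch_unique h hpu₂)⟩
    exact branch_unique hpu₁ (hu ▸ hpu₂)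
  have exists_parent (w : W) : ∃ w', ∀ w'', w ∉ B → Exits w w'' → w' = w'' := by
    by_cases h : ∃ w', Exits w w'
    · obtain ⟨w', hw'⟩ := h
      exact ⟨w', fun w'' hw => exits_unique hw hw'⟩
    · exact ⟨w, fun w'' _ h'' => absurd ⟨w'', h''⟩ h⟩
  choose q hq using exists_parent
  refine ⟨B, q, ncard_setOf_not_disjoint_le hdisj hA, fun w w' hw hw' hww' => ?_⟩
  obtain ⟨u, hu, v, hv, huv⟩ := hadj w w' hww'
  have huA : u ∉ A := (not_not.1 hw).notMem_of_mem_left hu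
  have hvA : v ∉ A := (not_not.1 hw').notMem_of_mem_left hv
  rcases hp huA hvA huv with rfl | rfl
  · exact Or.inl (hq w w' hw ⟨hww'.ne, u, hu, hv⟩)
  · exact Or.inr (hq w' w hw' ⟨hww'.ne', v, hv, hu⟩)

lemma minorDensity_le [Fintype V] (hp : IsParentMap G A p) : minorDensity G ≤ A.ncard + 1 := by
  refine Real.sSup_le ?_ (by positivity)
  rintro _ ⟨W, _, H, hGH, rfl⟩
  obtain ⟨B, q, hBA, hq⟩ := hp.exists_of_isMinor A.toFinite hGH
  refine div_le_of_le_mul₀ (by positivity) (by positivity) ?_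
  exact_mod_cast hq.card_edgeSet_le.trans (Nat.mul_le_mul_right _ (Nat.add_le_add_right hBA 1))

end IsParentMap

section Distance

variable {V : Type*} {G : SimpleGraph V}

lemma edist_le_of_isClique {K : Set V} (hK : G.IsClique K) {r : ℕ∞}
    (h : ∀ v, ∃ a ∈ K, G.edist v a ≤ r) (u v : V) : G.edist u v ≤ 2 * r + 1 := by
  obtain ⟨a, ha, hua⟩ := h u
  obtain ⟨b, hb, hvb⟩ := h v
  have hab : G.edist a b ≤ 1 :=
    edist_le_one_iff_adj_or_eq.2 (or_iff_not_imp_right.2 (hK ha hb))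
  calc G.edist u v ≤ G.edist u a + (G.edist a b + G.edist b v) :=
        G.edist_triangle.trans (by gcongr; exact G.edist_triangle)
    _ ≤ r + (1 + r) := by rw [G.edist_comm (u := b)]; gcongr
    _ = 2 * r + 1 := by ring

lemma le_add_dist_of_adj {x : V → ℕ} (hx : ∀ u v, G.Adj u v → x v ≤ x u + 1) {u v : V}
    (huv : G.Reachable u v) : x v ≤ x u + G.dist u v := by
  have le_add_length {u v : V} (w : G.Walk u v) : x v ≤ x u + w.length := by
    induction w with
    | nil => simp
    | cons h w ih =>
      rw [Walk.length_cons]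
      have := hx _ _ h
      omega
  obtain ⟨w, hw⟩ := huv.exists_walk_length_eq_dist
  exact hw ▸ le_add_length w

end Distance

lemma card_le_congestion_mul_card {V ι ε : Type*} [Fintype ι] [Fintype ε] {G : SimpleGraph V}
    {H : ι → G.Subgraph} {c : ℕ} (hcong : ∀ e, {i | e ∈ (H i).edgeSet}.ncard ≤ c) (e : ε → Sym2 V)
    (huse : ∀ i, ∃ a, e a ∈ (H i).edgeSet) : Fintype.card ι ≤ c * Fintype.card ε := by
  classical
  choose φ hφ using huse
  refine Finset.card_le_mul_card_image_of_maps_to (f := φ) (fun _ _ => Finset.mem_univ _) c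
    fun a _ => le_trans ?_ (hcong (e a))
  rw [← Set.ncard_coe_finset]
  refine Set.ncard_le_ncard (fun i hi => ?_) (Set.toFinite _)
  obtain rfl : φ i = a := by simpa using hi
  exact hφ i

/-- A clique of apexes `κ` together with disjoint paths on `n` vertices indexed by `ι`, where the
apex `a` is joined to the vertex at position `pos a` of each path (to none if `n ≤ pos a`). -/
def apexPaths {κ : Type*} (pos : κ → ℕ) (ι : Type*) (n : ℕ) : SimpleGraph (κ ⊕ ι × Fin n) where
  Adj
    | .inl a, .inl b => a ≠ b
    | .inl a, .inr v => v.2 = pos a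
    | .inr u, .inl b => u.2 = pos b
    | .inr u, .inr v => u.1 = v.1 ∧ (pathGraph n).Adj u.2 v.2
  symm := ⟨by
    rintro (a | u) (b | v) h
    exacts [Ne.symm h, h, h, ⟨h.1.symm, h.2.symm⟩]⟩
  loopless := ⟨by
    rintro (a | u) h
    exacts [h rfl, h.2.ne rfl]⟩

namespace apexPaths

/-- The vertex set of the path with index `i`. -/
def row (κ : Type*) {ι : Type*} (n : ℕ) (i : ι) : Set (κ ⊕ ι × Fin n) :=
  Set.range fun x => .inr (i, x)

section

variable {κ ι : Type*} {pos : κ → ℕ} {n : ℕ}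

lemma pairwise_disjoint_row : Pairwise fun i j : ι => Disjoint (row κ n i) (row κ n j) := by
  intro i j hij
  rw [Set.disjoint_left]
  rintro _ ⟨x, rfl⟩ ⟨y, hy⟩
  exact hij (congrArg Prod.fst (Sum.inr_injective hy)).symm

lemma connected_induce_row (hn : n ≠ 0) (i : ι) :
    ((apexPaths pos ι n).induce (row κ n i)).Connected := by
  obtain ⟨n, rfl⟩ := Nat.exists_eq_succ_of_ne_zero hn
  let toRow : pathGraph (n + 1) →g (apexPaths pos ι (n + 1)).induce (row κ (n + 1) i) :=
    ⟨Set.rangeFactorization _, fun h => ⟨rfl, h⟩⟩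
  exact (pathGraph_connected n).map toRow Set.rangeFactorization_surjective

lemma isClique_range_inl : (apexPaths pos ι n).IsClique (Set.range Sum.inl) := by
  rintro _ ⟨a, rfl⟩ _ ⟨b, rfl⟩ hab
  exact fun h => hab (congrArg Sum.inl h)

lemma edist_inr_inl_le {i : ι} {a : κ} {x : Fin n} {t : ℕ} (hx : x = pos a + t) :
    (apexPaths pos ι n).edist (.inr (i, x)) (.inl a) ≤ t + 1 := by
  induction t generalizing x with
  | zero =>
    have hadj : (apexPaths pos ι n).Adj (.inr (i, x)) (.inl a) := hx
    simpa using (edist_eq_one_iff_adj.2 hadj).le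
  | succ t ih =>
    let y : Fin n := ⟨pos a + t, by omega⟩
    have hadj : (apexPaths pos ι n).Adj (.inr (i, x)) (.inr (i, y)) :=
      ⟨rfl, pathGraph_adj.2 (Or.inr hx.symm)⟩
    calc (apexPaths pos ι n).edist (.inr (i, x)) (.inl a)
        ≤ (apexPaths pos ι n).edist (.inr (i, x)) (.inr (i, y)) +
          (apexPaths pos ι n).edist (.inr (i, y)) (.inl a) :=
          SimpleGraph.edist_triangle
      _ ≤ 1 + (t + 1) := add_le_add (edist_eq_one_iff_adj.2 hadj).le (ih rfl)
      _ = (t + 1 : ℕ) + 1 := by push_cast; ring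

lemma edist_le {k s : ℕ} (hs : 0 < s) (u v : Fin k ⊕ ι × Fin (k * s)) :
    (apexPaths (fun a : Fin k => a * s) ι (k * s)).edist u v ≤ 2 * s + 1 := by
  refine edist_le_of_isClique isClique_range_inl (fun v => ?_) u v
  rcases v with a | ⟨i, x⟩
  · exact ⟨_, ⟨a, rfl⟩, by simp⟩
  · let a : Fin k := ⟨x / s, Nat.div_lt_of_lt_mul (Nat.mul_comm k s ▸ x.2)⟩
    refine ⟨_, ⟨a, rfl⟩, (edist_inr_inl_le (pos := fun a : Fin k => a * s)
      (Nat.div_add_mod' x s).symm).trans ?_⟩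
    exact_mod_cast Nat.mod_lt x hs

/-- The position of a vertex along the paths, an apex being placed where it is attached. -/
def position (pos : κ → ℕ) : κ ⊕ ι × Fin n → ℕ :=
  Sum.elim pos fun v => v.2

lemma position_le_of_adj {u v : κ ⊕ ι × Fin n} (h : (apexPaths pos ι n).Adj u v) :
    (∃ a b, u = .inl a ∧ v = .inl b) ∨ position pos v ≤ position pos u + 1 := by
  rcases u with a | ⟨i, x⟩ <;> rcases v with b | ⟨j, y⟩
  · exact Or.inl ⟨a, b, rfl, rfl⟩
  · have hy : y = pos a := h
    simp only [position, Sum.elim_inl, Sum.elim_inr]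
    omega
  · have hx : x = pos b := h
    simp only [position, Sum.elim_inl, Sum.elim_inr]
    omega
  · have hxy := pathGraph_adj.1 h.2
    simp only [position, Sum.elim_inr] at hxy ⊢
    omega

end

variable {κ ι : Type} {pos : κ → ℕ} {n c d : ℕ}

lemma isParentMap :
    IsParentMap (apexPaths pos ι n) (Set.range Sum.inl)
      (Sum.map id (Prod.map id Order.succ)) := by
  rintro (a | ⟨i, x⟩) (b | ⟨j, y⟩) hu hv h
  · exact absurd ⟨a, rfl⟩ hu
  · exact absurd ⟨a, rfl⟩ hu
  · exact absurd ⟨b, rfl⟩ hv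
  · obtain ⟨rfl, hxy⟩ := h
    rcases hxy with hxy | hyx
    · exact Or.inl (congrArg (fun z => Sum.inr (i, z)) hxy.succ_eq)
    · exact Or.inr (congrArg (fun z => Sum.inr (i, z)) hyx.succ_eq)

lemma minorDensity_le [Fintype κ] [Fintype ι] :
    minorDensity (apexPaths pos ι n) ≤ Fintype.card κ + 1 := by
  simpa [Set.ncard_range_of_injective Sum.inl_injective] using
    (isParentMap (pos := pos) (ι := ι) (n := n)).minorDensity_le

lemma exists_apex_edge_mem {i : ι} {H : (apexPaths pos ι n).Subgraph}
    (hconn : (partGraph (apexPaths pos ι n) (row κ n i) H).coe.Connected)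
    (hdist : ∀ u v, (partGraph (apexPaths pos ι n) (row κ n i) H).coe.dist u v ≤ d)
    (hd : d + 1 < n) : ∃ ab : κ × κ, s(.inl ab.1, .inl ab.2) ∈ H.edgeSet := by
  by_contra! hno
  set Q := partGraph (apexPaths pos ι n) (row κ n i) H
  let rowVertex (x : Fin n) : Q.verts := ⟨.inr (i, x), Or.inl ⟨x, rfl⟩⟩
  have position_step (u v : Q.verts) (huv : Q.coe.Adj u v) :
      position pos v.1 ≤ position pos u.1 + 1 := by
    refine (position_le_of_adj (Q.adj_sub huv)).resolve_left ?_
    rintro ⟨a, b, hu, hv⟩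
    rcases (show Q.Adj u v from huv) with ⟨⟨x, hx⟩, -⟩ | hH
    · exact Sum.inr_ne_inl (hx.trans hu)
    · exact hno (a, b) (hu ▸ hv ▸ hH)
  let first : Q.verts := rowVertex ⟨0, by omega⟩
  let last : Q.verts := rowVertex ⟨n - 1, by omega⟩
  have hlen : n - 1 ≤ 0 + Q.coe.dist first last :=
    le_add_dist_of_adj position_step (hconn.preconnected first last)
  have := hdist first last
  omega

lemma card_le_congestion_mul_or_le_dilation [Fintype κ] [Fintype ι]
    {H : ι → (apexPaths pos ι n).Subgraph}
    (hdil : ∀ i, (partGraph (apexPaths pos ι n) (row κ n i) (H i)).coe.Connected ∧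
      ∀ u v, (partGraph (apexPaths pos ι n) (row κ n i) (H i)).coe.dist u v ≤ d)
    (hcong : ∀ e, {i | e ∈ (H i).edgeSet}.ncard ≤ c) :
    Fintype.card ι ≤ c * Fintype.card κ ^ 2 ∨ n ≤ d + 1 := by
  rw [or_iff_not_imp_right, not_le, sq, ← Fintype.card_prod]
  exact fun hd => card_le_congestion_mul_card hcong (fun ab => s(.inl ab.1, .inl ab.2))
    fun i => exists_apex_edge_mem (hdil i).1 (hdil i).2 hd

end apexPaths

lemma sub_three_mul_le_of_sub_one_mul_sub_two_le {a b q : ℕ} (hb : 3 ≤ b)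
    (h : (a - 1) * (b - 2) ≤ 2 * (q + 1)) : (a - 3) * b ≤ 6 * q := by
  rcases le_total a 3 with ha | ha
  · simp [Nat.sub_eq_zero_of_le ha]
  obtain ⟨a, rfl⟩ := Nat.exists_eq_add_of_le' ha
  obtain ⟨b, rfl⟩ := Nat.exists_eq_add_of_le' hb
  simp only [Nat.reduceSubDiff, Nat.add_sub_cancel] at h ⊢
  nlinarith [Nat.zero_le (a * b)]

theorem shortcut_quality_lower_bound_general (δ D : ℕ) (hδ : 2 ≤ δ) (hD : 3 ≤ D) :
    ∃ (V : Type) (_ : Fintype V) (G : SimpleGraph V) (m : ℕ) (P : Fin m → Set V),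
      G.Connected ∧
      (∀ u v : V, G.dist u v ≤ D) ∧
      minorDensity G ≤ δ ∧
      (Pairwise fun i j => Disjoint (P i) (P j)) ∧
      (∀ i, (G.induce (P i)).Connected) ∧
      (∀ (H : Fin m → G.Subgraph) (c d : ℕ),
        (∀ i, (partGraph G (P i) (H i)).coe.Connected ∧
          ∀ u v, (partGraph G (P i) (H i)).coe.dist u v ≤ d) →
        (∀ e : Sym2 V, {i : Fin m | e ∈ (H i).edgeSet}.ncard ≤ c) →
        (δ - 1) * (D - 2) ≤ 2 * (c + d + 1)) := by
  obtain ⟨k, rfl⟩ : ∃ k, δ = k + 1 := ⟨δ - 1, by omega⟩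
  obtain ⟨s, hs⟩ : ∃ s, s = (D - 1) / 2 := ⟨_, rfl⟩
  have hk0 : 0 < k := by omega
  have hs0 : 0 < s := by omega
  let G := apexPaths (fun a : Fin k => a * s) (Fin (k * s * k ^ 2)) (k * s)
  have : Nonempty (Fin k ⊕ Fin (k * s * k ^ 2) × Fin (k * s)) := ⟨.inl ⟨0, hk0⟩⟩
  have hedist (u v) : G.edist u v ≤ (2 * s + 1 : ℕ) := mod_cast apexPaths.edist_le hs0 u v
  have hreach (u v) : G.Reachable u v :=
    reachable_of_edist_ne_top (ne_top_of_le_ne_top (ENat.natCast_ne_top _) (hedist u v))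
  refine ⟨_, inferInstance, G, _, apexPaths.row (Fin k) (k * s), ⟨hreach⟩,
    fun u v => (ENat.toNat_le_of_le_natCast (hedist u v)).trans (by omega),
    by simpa using apexPaths.minorDensity_le (κ := Fin k) (n := k * s),
    apexPaths.pairwise_disjoint_row,
    apexPaths.connected_induce_row (Nat.mul_pos hk0 hs0).ne', fun H c d hdil hcong => ?_⟩
  have hks : k * s ≤ c + d + 1 := by
    rcases apexPaths.card_le_congestion_mul_or_le_dilation hdil hcong with hc | hd
    · have : k * s ≤ c := Nat.le_of_mul_le_mul_right (by simpa using hc) (pow_pos hk0 2)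
      omega
    · omega
  calc k * (D - 2) ≤ k * (2 * s) := Nat.mul_le_mul_left k (by omega)
    _ = 2 * (k * s) := by ring
    _ ≤ 2 * (c + d + 1) := Nat.mul_le_mul_left 2 hks

/-- **Lemma (lower bound, full shortcuts).** For all naturals `δ ≥ 5` and `D ≥ 2δ`, there
exists a finite connected graph `G` with diameter at most `D` and minor density
`δ(G) ≤ δ`, together with a collection of parts in `G`, such that every shortcut for these
parts of congestion `c` and dilation `d` has quality `c + d ≥ (δ-3)·D/6`. -/
theorem shortcut_quality_lower_bound (δ D : ℕ) (hδ : 5 ≤ δ) (hD : 2 * δ ≤ D) :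
    ∃ (V : Type) (_ : Fintype V) (G : SimpleGraph V) (m : ℕ) (P : Fin m → Set V),
      G.Connected ∧
      (∀ u v : V, G.dist u v ≤ D) ∧
      minorDensity G ≤ δ ∧
      (Pairwise fun i j => Disjoint (P i) (P j)) ∧
      (∀ i, (G.induce (P i)).Connected) ∧
      (∀ (H : Fin m → G.Subgraph) (c d : ℕ),
        (∀ i, (partGraph G (P i) (H i)).coe.Connected ∧
          ∀ u v, (partGraph G (P i) (H i)).coe.dist u v ≤ d) →
        (∀ e : Sym2 V, {i : Fin m | e ∈ (H i).edgeSet}.ncard ≤ c) →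
        (δ - 3) * D ≤ 6 * (c + d)) := by
  obtain ⟨V, hV, G, m, P, hG, hdiam, hdens, hdisj, hP, hqual⟩ :=
    shortcut_quality_lower_bound_general δ D (by omega) (by omega)
  exact ⟨V, hV, G, m, P, hG, hdiam, hdens, hdisj, hP, fun H c d hdil hcong =>
    sub_three_mul_le_of_sub_one_mul_sub_two_le (by omega) (hqual H c d hdil hcong)⟩
end

section
/- For every finite graph G, let r(G) denote the largest r such that the complete graph K_r is a minor of G. Then (r(G) - 1)/2 ≤ δ(G) ≤ 8·r(G)·√(log₂ r(G)); in particular δ(G) = Θ̃(r(G)). -/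
open SimpleGraph

/-- The complete-graph minor size `r(G)`: the largest `r` such that the complete graph
`K_r` is a minor of `G`. -/
noncomputable def completeMinorSize {V : Type} [Fintype V] (G : SimpleGraph V) : ℕ :=
  sSup {r : ℕ | IsMinor G (⊤ : SimpleGraph (Fin r))}

/-!
The lower bound is the density of the complete graph itself. For the upper bound, choose a minor
`H` of smallest order `n` with at least `t(n)` edges. Contracting an edge of `H` destroys more than
`t(n) - t(n - 1)` edges, so its ends have many common neighbours, and the neighbourhood of a vertex
of small degree is a dense graph. Taking `t(n)` proportional to `n`, induction on the neighbourhood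
gives clique minors of logarithmic order, which suffices for `r ≤ 9` (Mader). Taking `t(n) = k n`
and then `t(n)` proportional to `n ^ (3 / 2)` gives a minor of order at most `M`, where
`k / 2 - 1 ≤ M`, whose degrees all exceed `3 M / 4 - 5 / 4`.

In such a minor, cut a random permutation of the vertices into blocks of size about `√(log₂ r)`.
Few blocks are disconnected or have many vertices outside their neighbourhood, and the expected
number of pairs of the other blocks with no edge between them is small. Discarding one block for
each failure leaves more than `r` pairwise adjacent connected blocks, hence a `K_{r+1}` minor, if
the original density is more than `8 r √(log₂ r)`.
-/

section Minors

variable {V W U : Type} {G : SimpleGraph V} {H : SimpleGraph W} {K : SimpleGraph U}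

lemma connected_induce_iUnion {f : W → Set V} (hf : ∀ w, (G.induce (f w)).Connected)
    (hadj : ∀ w₁ w₂, H.Adj w₁ w₂ → ∃ u ∈ f w₁, ∃ v ∈ f w₂, G.Adj u v) (hH : H.Connected) :
    (G.induce (⋃ w, f w)).Connected := by
  have reachable_of_mem {w x y} (hx : x ∈ f w) (hy : y ∈ f w) :
      (G.induce (⋃ w, f w)).Reachable ⟨x, Set.mem_iUnion_of_mem w hx⟩
        ⟨y, Set.mem_iUnion_of_mem w hy⟩ :=
    ((hf w).preconnected ⟨x, hx⟩ ⟨y, hy⟩).map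
      (induceHomOfLE G (Set.subset_iUnion f w)).toHom
  have reachable_of_walk {a b} (p : H.Walk a b) : ∀ {x y} (hx : x ∈ f a) (hy : y ∈ f b),
      (G.induce (⋃ w, f w)).Reachable ⟨x, Set.mem_iUnion_of_mem a hx⟩
        ⟨y, Set.mem_iUnion_of_mem b hy⟩ := by
    induction p with
    | nil => exact reachable_of_mem
    | cons h _ ih =>
      intro x y hx hy
      obtain ⟨u, hu, v, hv, huv⟩ := hadj _ _ h
      exact ((reachable_of_mem hx hu).trans (Adj.reachable (induce_adj.2 huv))).trans (ih hv hy)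
  obtain ⟨w₀⟩ := hH.nonempty
  obtain ⟨x₀, hx₀⟩ := (hf w₀).nonempty
  rw [connected_iff_exists_forall_reachable]
  refine ⟨⟨x₀, Set.mem_iUnion_of_mem w₀ hx₀⟩, ?_⟩
  rintro ⟨y, hy⟩
  obtain ⟨w, hw⟩ := Set.mem_iUnion.1 hy
  obtain ⟨p⟩ := hH.preconnected w₀ w
  exact reachable_of_walk p hx₀ hw

lemma connected_induce_image (φ : H →g G) {s : Set W} (hs : (H.induce s).Connected) :
    (G.induce (φ '' s)).Connected := by
  have hconn : ∀ w : s, (G.induce {φ w}).Connected := fun _ => .of_subsingleton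
  have hadj (w₁ w₂ : s) (h : (H.induce s).Adj w₁ w₂) :
      ∃ u ∈ ({φ w₁} : Set V), ∃ v ∈ ({φ w₂} : Set V), G.Adj u v :=
    ⟨_, rfl, _, rfl, φ.map_adj h⟩
  have himage : φ '' s = ⋃ w : s, {φ w} := by
    rw [Set.iUnion_singleton_eq_range, Set.image_eq_range]
  exact himage ▸ connected_induce_iUnion hconn hadj hs

namespace IsMinor

lemma of_isContained (h : H ⊑ G) : IsMinor G H := by
  obtain ⟨φ⟩ := h
  exact ⟨fun w => {φ w}, fun _ => Set.singleton_nonempty _, fun _ => .of_subsingleton,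
    fun _ _ hne => Set.disjoint_singleton.2 (φ.injective.ne hne),
    fun _ _ hadj => ⟨_, rfl, _, rfl, φ.toHom.map_adj hadj⟩⟩

protected lemma trans (hGH : IsMinor G H) (hHK : IsMinor H K) : IsMinor G K := by
  obtain ⟨f, hf_ne, hf_conn, hf_disj, hf_adj⟩ := hGH
  obtain ⟨g, hg_ne, hg_conn, hg_disj, hg_adj⟩ := hHK
  refine ⟨fun k => ⋃ w : g k, f w, fun k => ?_, fun k => ?_, fun k l hkl => ?_,
    fun k l hkl => ?_⟩
  · obtain ⟨w, hw⟩ := hg_ne k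
    exact (hf_ne w).mono (Set.subset_iUnion (fun w : g k => f w) ⟨w, hw⟩)
  · exact connected_induce_iUnion (fun w => hf_conn w) (fun _ _ h => hf_adj _ _ h) (hg_conn k)
  · simp only [Set.disjoint_iUnion_left, Set.disjoint_iUnion_right]
    exact fun w' w => hf_disj ((hg_disj hkl).ne_of_mem w.2 w'.2)
  · obtain ⟨w, hw, w', hw', hww'⟩ := hg_adj k l hkl
    obtain ⟨u, hu, v, hv, huv⟩ := hf_adj w w' hww'
    exact ⟨u, Set.mem_iUnion_of_mem ⟨w, hw⟩ hu, v, Set.mem_iUnion_of_mem ⟨w', hw'⟩ hv, huv⟩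

lemma card_le_s6 [Finite V] (h : IsMinor G H) : Nat.card W ≤ Nat.card V := by
  obtain ⟨f, hf_ne, -, hf_disj, -⟩ := h
  choose g hg using hf_ne
  refine Nat.card_le_card_of_injective g fun a b hab => ?_
  by_contra hne
  exact (hf_disj hne).ne_of_mem (hg a) (hg b) hab

lemma map_of_connected_fibers {g : V → W} (hg : ∀ w, (G.induce (g ⁻¹' {w})).Connected) :
    IsMinor G (G.map g) := by
  refine ⟨fun w => g ⁻¹' {w}, fun w => Set.nonempty_coe_sort.1 (hg w).nonempty, hg,
    fun w₁ w₂ hne => Disjoint.preimage g (Set.disjoint_singleton.2 hne), ?_⟩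
  rintro w₁ w₂ ⟨-, u, v, huv, hu, hv⟩
  exact ⟨u, hu, v, hv, huv⟩

lemma top_of_card_le [Fintype W] [Fintype U] (h : IsMinor G (⊤ : SimpleGraph U))
    (hWU : Fintype.card W ≤ Fintype.card U) : IsMinor G (⊤ : SimpleGraph W) :=
  h.trans (of_isContained (isContained_top_iff.2 (Function.Embedding.nonempty_of_card_le hWU)))

lemma top_option_of_neighborSet {v : V}
    (h : IsMinor (G.induce (G.neighborSet v)) (⊤ : SimpleGraph W)) :
    IsMinor G (⊤ : SimpleGraph (Option W)) := by
  obtain ⟨f, hf_ne, hf_conn, hf_disj, hf_adj⟩ := h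
  have hv_disj (w : W) : Disjoint {v} (Subtype.val '' f w) := by
    rw [Set.disjoint_singleton_left]
    rintro ⟨x, -, hx⟩
    exact G.ne_of_adj x.2 hx.symm
  refine ⟨fun o => o.elim {v} fun w => Subtype.val '' f w, ?_, ?_, ?_, ?_⟩
  · rintro (_ | w)
    · exact Set.singleton_nonempty v
    · exact (hf_ne w).image _
  · rintro (_ | w)
    · exact Connected.of_subsingleton (V := ({v} : Set V))
    · exact connected_induce_image (Embedding.induce _).toHom (hf_conn w)
  · rintro (_ | w) (_ | w') hne
    · exact absurd rfl hne
    · exact hv_disj w'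
    · exact (hv_disj w).symm
    · exact (Set.disjoint_image_iff Subtype.val_injective).2
        (hf_disj (Option.some_injective W |>.ne_iff.1 hne))
  · rintro (_ | w) (_ | w') hne
    · exact absurd rfl hne
    · obtain ⟨x, hx⟩ := hf_ne w'
      exact ⟨v, rfl, x, ⟨x, hx, rfl⟩, x.2⟩
    · obtain ⟨x, hx⟩ := hf_ne w
      exact ⟨x, ⟨x, hx, rfl⟩, v, rfl, x.2.symm⟩
    · obtain ⟨x, hx, y, hy, hxy⟩ := hf_adj w w' (Option.some_injective W |>.ne_iff.1 hne)
      exact ⟨x, ⟨x, hx, rfl⟩, y, ⟨y, hy, rfl⟩, hxy⟩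

end IsMinor

lemma isMinor_top_fin_one [Nonempty V] (G : SimpleGraph V) :
    IsMinor G (⊤ : SimpleGraph (Fin 1)) := by
  refine .of_isContained ((not_cliqueFree_iff_top_isContained _).1 ?_)
  simp [cliqueFree_one]

lemma isMinor_top_fin_two (hG : 0 < G.edgeSet.ncard) : IsMinor G (⊤ : SimpleGraph (Fin 2)) := by
  refine .of_isContained ((not_cliqueFree_iff_top_isContained _).1 ?_)
  rw [cliqueFree_two]
  rintro rfl
  simp at hG

end Minors

section EdgeCounts

variable {V : Type} (G : SimpleGraph V)

lemma ncard_neighborSet_eq_degree (v : V) [Fintype (G.neighborSet v)] :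
    (G.neighborSet v).ncard = G.degree v := by
  rw [Set.ncard_eq_toFinset_card', degree, neighborFinset]

lemma sum_ncard_neighborSet [Fintype V] :
    ∑ v, (G.neighborSet v).ncard = 2 * G.edgeSet.ncard := by
  classical
  simp_rw [ncard_neighborSet_eq_degree, Set.ncard_eq_toFinset_card']
  exact G.sum_degrees_eq_twice_card_edges

lemma two_mul_ncard_edgeSet_le [Finite V] : 2 * G.edgeSet.ncard ≤ Nat.card V ^ 2 := by
  have := Fintype.ofFinite V
  rw [← sum_ncard_neighborSet, sq, Nat.card_eq_fintype_card]
  refine Finset.sum_le_card_nsmul _ _ _ fun v _ => ?_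
  simpa using Set.ncard_le_card (G.neighborSet v)

lemma card_mul_le_two_mul_ncard_edgeSet [Finite V] {d : ℝ}
    (hd : ∀ v, d ≤ (G.neighborSet v).ncard) : Nat.card V * d ≤ 2 * G.edgeSet.ncard := by
  have := Fintype.ofFinite V
  have hsum := Finset.card_nsmul_le_sum Finset.univ _ d fun v _ => hd v
  rw [nsmul_eq_mul, Finset.card_univ, ← Nat.card_eq_fintype_card] at hsum
  exact hsum.trans_eq (by exact_mod_cast sum_ncard_neighborSet G)

lemma exists_ncard_neighborSet_mul_card_le [Finite V] [Nonempty V] :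
    ∃ v, (G.neighborSet v).ncard * Nat.card V ≤ 2 * G.edgeSet.ncard := by
  have := Fintype.ofFinite V
  obtain ⟨v, -, hv⟩ := Finset.exists_min_image Finset.univ (fun v => (G.neighborSet v).ncard)
    Finset.univ_nonempty
  refine ⟨v, ?_⟩
  rw [← sum_ncard_neighborSet, mul_comm, Nat.card_eq_fintype_card]
  exact Finset.card_nsmul_le_sum _ _ _ hv

lemma ncard_edgeSet_le_induce_compl_singleton [Finite V] (x : V) :
    G.edgeSet.ncard ≤ (G.induce {x}ᶜ).edgeSet.ncard + (G.neighborSet x).ncard := by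
  classical
  have := Fintype.ofFinite V
  have hcard := G.card_edgeFinset_induce_compl_singleton x
  have hdel := G.card_edgeFinset_deleteIncidenceSet x
  simp only [Set.ncard_eq_toFinset_card']
  change G.edgeFinset.card ≤ (G.induce {x}ᶜ).edgeFinset.card + G.degree x
  lia

lemma ncard_neighborSet_induce_neighborSet (v : V) (u : G.neighborSet v) :
    ((G.induce (G.neighborSet v)).neighborSet u).ncard = (G.commonNeighbors v u).ncard := by
  rw [← Set.ncard_image_of_injective _ Subtype.val_injective]
  congr 1
  ext w
  simp [mem_commonNeighbors, and_comm]

end EdgeCounts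

section Contraction

variable {V : Type} {G : SimpleGraph V} {y : V}

open scoped Classical in
/-- The map identifying the vertex `y` with another vertex `x`. When `x` and `y` are adjacent in
`G`, the graph `G.map (identify x)` is the contraction of the edge `xy`. -/
noncomputable def identify (x : ({y}ᶜ : Set V)) (w : V) : ({y}ᶜ : Set V) :=
  if h : w = y then x else ⟨w, h⟩

lemma identify_self (x : ({y}ᶜ : Set V)) : identify x y = x := dif_pos rfl

lemma identify_coe (x w : ({y}ᶜ : Set V)) : identify x w = w := dif_neg w.2

lemma preimage_identify_subset (x w : ({y}ᶜ : Set V)) : identify x ⁻¹' {w} ⊆ {w.1, y} := by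
  intro v hv
  by_cases hvy : v = y
  · exact Or.inr hvy
  · exact Or.inl (congrArg Subtype.val ((identify_coe x ⟨v, hvy⟩).symm.trans hv))

lemma IsMinor.map_identify {x : ({y}ᶜ : Set V)} (hxy : G.Adj x y) :
    IsMinor G (G.map (identify x)) := by
  refine IsMinor.map_of_connected_fibers fun w => ?_
  have hw : w.1 ∈ identify x ⁻¹' {w} := identify_coe x w
  by_cases hwx : w = x
  · subst hwx
    have hfiber : identify w ⁻¹' {w} = {w.1, y} :=
      (preimage_identify_subset w w).antisymm (Set.pair_subset hw (identify_self w))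
    exact hfiber ▸ induce_pair_connected_of_adj hxy
  · have hfiber : identify x ⁻¹' {w} = {w.1} := by
      refine (Set.singleton_subset_iff.2 hw).antisymm' fun v hv => ?_
      refine (preimage_identify_subset x w hv).resolve_right ?_
      rintro rfl
      exact hwx (hv.symm.trans (identify_self x))
    exact hfiber ▸ Connected.of_subsingleton

lemma ncard_neighborSet_le_add_commonNeighbors [Finite V] (x : ({y}ᶜ : Set V)) :
    (G.neighborSet y).ncard ≤ {z : ({y}ᶜ : Set V) | G.Adj y z ∧ ¬ G.Adj x z ∧ z ≠ x}.ncard +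
      (G.commonNeighbors x y).ncard + 1 := by
  set Z : Set ({y}ᶜ : Set V) := {z | G.Adj y z ∧ ¬ G.Adj x z ∧ z ≠ x}
  have hsub : G.neighborSet y ⊆ Subtype.val '' Z ∪ G.commonNeighbors x y ∪ {x.1} := by
    intro z hz
    by_cases hzx : z = x
    · exact Or.inr hzx
    by_cases hxz : G.Adj x z
    · exact Or.inl (Or.inr ⟨hxz, hz⟩)
    · exact Or.inl (Or.inl ⟨⟨z, hz.ne'⟩, ⟨hz, hxz, mt (congrArg Subtype.val) hzx⟩, rfl⟩)
  calc _ ≤ _ := Set.ncard_le_ncard hsub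
    _ ≤ _ := Set.ncard_union_le _ _
    _ ≤ _ := by
      gcongr
      · exact (Set.ncard_union_le _ _).trans
          (by rw [Set.ncard_image_of_injective _ Subtype.val_injective])
      · exact (Set.ncard_singleton _).le

lemma ncard_edgeSet_le_map_identify [Finite V] (x : ({y}ᶜ : Set V)) :
    G.edgeSet.ncard ≤
      (G.map (identify x)).edgeSet.ncard + (G.commonNeighbors x y).ncard + 1 := by
  let Z : Set ({y}ᶜ : Set V) := {z | G.Adj y z ∧ ¬ G.Adj x z ∧ z ≠ x}
  have hZ : ((s(x, ·)) '' Z).ncard = Z.ncard :=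
    Set.ncard_image_of_injective _ fun _ _ => Sym2.congr_right.1
  have hdisj : Disjoint (G.induce {y}ᶜ).edgeSet ((s(x, ·)) '' Z) := by
    rw [Set.disjoint_right]
    rintro _ ⟨z, hz, rfl⟩ h
    exact hz.2.1 h
  have hsub : (G.induce {y}ᶜ).edgeSet ∪ (s(x, ·)) '' Z ⊆ (G.map (identify x)).edgeSet := by
    rw [Set.union_subset_iff]
    refine ⟨fun e => ?_, ?_⟩
    · induction e with | _ a b =>
      exact fun h => ⟨G.ne_of_adj h ∘ congrArg Subtype.val, a, b, h, identify_coe x a,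
        identify_coe x b⟩
    · rintro _ ⟨z, hz, rfl⟩
      exact ⟨hz.2.2.symm, y, z, hz.1, identify_self x, identify_coe x z⟩
  have hmap := Set.ncard_le_ncard hsub
  rw [Set.ncard_union_eq hdisj, hZ] at hmap
  have hdel := ncard_edgeSet_le_induce_compl_singleton G y
  have hN := ncard_neighborSet_le_add_commonNeighbors (G := G) x
  lia

end Contraction

section DenseNeighborhood

lemma two_le_card_of_edgeSet_nonempty {V : Type} [Finite V] {G : SimpleGraph V}
    (h : G.edgeSet.Nonempty) : 2 ≤ Nat.card V := by
  obtain ⟨e, he⟩ := h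
  induction e with | _ a b =>
  exact Finite.one_lt_card_iff_nontrivial.2 ⟨a, b, G.ne_of_adj he⟩

-- Take a smallest minor `H` with at least `t |H|` edges: contracting an edge at a vertex `v` of
-- small degree must destroy many edges, so its ends have many common neighbours.
lemma exists_isMinor_dense_neighborSet {t : ℕ → ℝ} (ht_mono : Monotone t)
    (ht_pos : ∀ n, 0 < n → 0 < t n) {V : Type} [Finite V] [Nonempty V] (G : SimpleGraph V)
    (hG : t (Nat.card V) ≤ G.edgeSet.ncard) :
    ∃ (W : Type) (_ : Finite W) (H : SimpleGraph W) (v : W), IsMinor G H ∧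
      t (Nat.card W) ≤ H.edgeSet.ncard ∧
      (H.neighborSet v).ncard * Nat.card W ≤ 2 * H.edgeSet.ncard ∧ (H.neighborSet v).Nonempty ∧
      ∀ u, (H.edgeSet.ncard : ℝ) - t (Nat.card W - 1) <
        ((H.induce (H.neighborSet v)).neighborSet u).ncard + 1 := by
  induction hn : Nat.card V using Nat.strong_induction_on generalizing V with | _ n ih =>
  subst hn
  obtain ⟨v, hv⟩ := exists_ncard_neighborSet_mul_card_le G
  have he : 0 < G.edgeSet.ncard := by exact_mod_cast (ht_pos _ Nat.card_pos).trans_le hG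
  have hcard : 2 ≤ Nat.card V :=
    two_le_card_of_edgeSet_nonempty (Set.nonempty_of_ncard_ne_zero he.ne')
  have hcompl : Nat.card ({v}ᶜ : Set V) = Nat.card V - 1 := by
    rw [Nat.card_coe_set_eq, Set.ncard_compl, Set.ncard_singleton]
  have : Nonempty ({v}ᶜ : Set V) := Finite.card_pos_iff.1 (by lia)
  by_cases hsmaller : ∃ H : SimpleGraph ({v}ᶜ : Set V),
      IsMinor G H ∧ t (Nat.card V - 1) ≤ H.edgeSet.ncard
  · obtain ⟨H, hGH, hH⟩ := hsmaller
    obtain ⟨W, _, K, w, hHK, hK⟩ := ih _ (by lia) H (hcompl ▸ hH) rfl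
    exact ⟨W, ‹_›, K, w, hGH.trans hHK, hK⟩
  push Not at hsmaller
  refine ⟨V, ‹_›, G, v, .of_isContained (IsContained.refl G), hG, hv, ?_, fun u => ?_⟩
  · by_contra hempty
    have hdel := ncard_edgeSet_le_induce_compl_singleton G v
    rw [Set.not_nonempty_iff_eq_empty.1 hempty, Set.ncard_empty, add_zero] at hdel
    have hlt := hsmaller (G.induce {v}ᶜ) (.of_isContained ⟨Copy.induce G _⟩)
    have hmono := ht_mono (Nat.sub_le (Nat.card V) 1)
    have : (G.edgeSet.ncard : ℝ) ≤ (G.induce {v}ᶜ).edgeSet.ncard := by exact_mod_cast hdel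
    linarith
  · let x : ({v}ᶜ : Set V) := ⟨u, u.2.ne'⟩
    have hlt := hsmaller (G.map (identify x)) (.map_identify (x := x) u.2.symm)
    have hcontr : (G.edgeSet.ncard : ℝ) ≤
        (G.map (identify x)).edgeSet.ncard + (G.commonNeighbors u v).ncard + 1 := by
      exact_mod_cast ncard_edgeSet_le_map_identify x
    rw [ncard_neighborSet_induce_neighborSet, commonNeighbors_symm]
    linarith

lemma isMinor_top_of_two_pow_mul_card_le (t : ℕ) {V : Type} [Finite V] [Nonempty V]
    (G : SimpleGraph V) (hG : 2 ^ t * Nat.card V ≤ 2 * G.edgeSet.ncard) :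
    IsMinor G (⊤ : SimpleGraph (Fin (t + 2))) := by
  induction t generalizing V with
  | zero =>
    have hpos := Nat.card_pos (α := V)
    exact isMinor_top_fin_two (by lia)
  | succ t ih =>
    obtain ⟨W, _, H, v, hGH, hedges, -, ⟨w, hw⟩, hdense⟩ :=
      exists_isMinor_dense_neighborSet (t := fun n => 2 ^ t * n)
        (fun m n hmn => by simp only; gcongr) (fun n hn => by positivity) G
        (by rw [pow_succ] at hG; exact_mod_cast (by lia : 2 ^ t * Nat.card V ≤ G.edgeSet.ncard))
    let J := H.induce (H.neighborSet v)
    have : Nonempty (H.neighborSet v) := ⟨w, hw⟩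
    have hdegree (u) : (2 : ℝ) ^ t ≤ (J.neighborSet u).ncard := by
      have hW : 1 ≤ Nat.card W := Nat.card_pos_iff.2 ⟨⟨v⟩, ‹_›⟩
      have hu := hdense u
      simp only [Nat.cast_sub hW] at hu
      have hlt : (2 : ℝ) ^ t < (J.neighborSet u).ncard + 1 := by push_cast at hu; linarith
      exact_mod_cast Nat.lt_succ_iff.1 (by exact_mod_cast hlt)
    have hJ : 2 ^ t * Nat.card (H.neighborSet v) ≤ 2 * J.edgeSet.ncard := by
      rw [mul_comm]
      exact_mod_cast card_mul_le_two_mul_ncard_edgeSet J hdegree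
    exact hGH.trans ((IsMinor.top_option_of_neighborSet (ih J hJ)).top_of_card_le (by simp))

end DenseNeighborhood

section DenseMinor

lemma exists_isMinor_card_le_two_mul {k : ℝ} (hk : 0 < k) {V : Type} [Finite V] [Nonempty V]
    (G : SimpleGraph V) (hG : k * Nat.card V ≤ G.edgeSet.ncard) :
    ∃ (W : Type) (_ : Finite W) (_ : Nonempty W) (H : SimpleGraph W) (κ : ℝ), IsMinor G H ∧
      k ≤ κ ∧ Nat.card W ≤ 2 * κ ∧ ∀ w, κ - 1 < (H.neighborSet w).ncard := by
  obtain ⟨W, _, H, v, hGH, hedges, hv, ⟨w, hw⟩, hdense⟩ :=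
    exists_isMinor_dense_neighborSet (t := fun n => k * n)
      (fun m n hmn => by simp only; gcongr) (fun n hn => by positivity) G hG
  have hW : 1 ≤ Nat.card W := Nat.card_pos_iff.2 ⟨⟨v⟩, ‹_›⟩
  have hW' : (1 : ℝ) ≤ Nat.card W := by exact_mod_cast hW
  set κ : ℝ := H.edgeSet.ncard / Nat.card W with hκ
  have hκ_mul : κ * Nat.card W = H.edgeSet.ncard := div_mul_cancel₀ _ (by positivity)
  have hkκ : k ≤ κ := by rw [hκ, le_div_iff₀ (by positivity)]; exact hedges
  refine ⟨H.neighborSet v, inferInstance, ⟨⟨w, hw⟩⟩, H.induce (H.neighborSet v), κ,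
    hGH.trans (.of_isContained ⟨Copy.induce H _⟩), hkκ, ?_, fun u => ?_⟩
  · rw [Nat.card_coe_set_eq, hκ, ← mul_div_assoc, le_div_iff₀ (by positivity)]
    exact_mod_cast hv
  · have hu := hdense u
    simp only [Nat.cast_sub hW, Nat.cast_one, ← hκ_mul] at hu
    nlinarith [mul_nonneg (sub_nonneg.2 hkκ) (sub_nonneg.2 hW')]

lemma sub_one_mul_sqrt_sub_one_le {x : ℝ} (hx : 1 ≤ x) :
    (x - 1) * √(x - 1) ≤ (1 - 1 / x) * (1 - 1 / (2 * x)) * (x * √x) := by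
  have hx₀ : 0 < x := by linarith
  have hinv : 1 / (2 * x) ≤ 1 := by rw [div_le_one (by positivity)]; linarith
  have hsqrt : √(x - 1) ≤ (1 - 1 / (2 * x)) * √x := by
    refine Real.sqrt_le_iff.2 ⟨mul_nonneg (by linarith) (Real.sqrt_nonneg x), ?_⟩
    have hsq : ((1 - 1 / (2 * x)) * √x) ^ 2 = x - 1 + 1 / (4 * x) := by
      rw [mul_pow, Real.sq_sqrt hx₀.le]
      field_simp
      ring
    have : 0 ≤ 1 / (4 * x) := by positivity
    linarith
  calc (x - 1) * √(x - 1) ≤ (x - 1) * ((1 - 1 / (2 * x)) * √x) := by gcongr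
    _ = _ := by field_simp

lemma mul_sub_one_mul_sqrt_sub_one_le {c n e : ℝ} (hc : 0 ≤ c) (hn : 1 ≤ n)
    (he : c * (n * √n) ≤ e) (hen : 2 * e ≤ n ^ 2) :
    c * ((n - 1) * √(n - 1)) ≤ e - 3 / 4 * (2 * e / n) + 1 / 4 := by
  have hinv : 1 / n ≤ 1 := (div_le_one (by positivity)).2 hn
  have hinv' : 1 / (2 * n) ≤ 1 := (div_le_one (by positivity)).2 (by linarith)
  have hquarter : 2 * e / n ^ 2 ≤ 1 := (div_le_one (by positivity)).2 hen
  calc c * ((n - 1) * √(n - 1)) ≤ c * ((1 - 1 / n) * (1 - 1 / (2 * n)) * (n * √n)) :=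
        mul_le_mul_of_nonneg_left (sub_one_mul_sqrt_sub_one_le hn) hc
    _ = (1 - 1 / n) * (1 - 1 / (2 * n)) * (c * (n * √n)) := by ring
    _ ≤ (1 - 1 / n) * (1 - 1 / (2 * n)) * e :=
        mul_le_mul_of_nonneg_left he (mul_nonneg (sub_nonneg.2 hinv) (sub_nonneg.2 hinv'))
    _ = e - 3 / 4 * (2 * e / n) + 1 / 4 * (2 * e / n ^ 2) := by
        field_simp
        ring
    _ ≤ _ := by linarith

lemma exists_isMinor_three_quarters_dense {c : ℝ} (hc : 0 < c) {V : Type} [Finite V] [Nonempty V]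
    (G : SimpleGraph V) (hG : c * (Nat.card V * √(Nat.card V)) ≤ G.edgeSet.ncard) :
    ∃ (W : Type) (_ : Finite W) (_ : Nonempty W) (H : SimpleGraph W) (M : ℝ), IsMinor G H ∧
      4 * c ^ 2 ≤ M ∧ Nat.card W ≤ M ∧ ∀ w, 3 / 4 * M - 5 / 4 < (H.neighborSet w).ncard := by
  obtain ⟨W, _, H, v, hGH, hedges, hv, ⟨w, hw⟩, hdense⟩ :=
    exists_isMinor_dense_neighborSet (t := fun n => c * (n * √n))
      (fun m n hmn => by simp only; gcongr) (fun n hn => by positivity) G hG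
  have hW : 1 ≤ Nat.card W := Nat.card_pos_iff.2 ⟨⟨v⟩, ‹_›⟩
  set n : ℝ := (Nat.card W : ℝ) with hn
  have hn₁ : 1 ≤ n := by rw [hn]; exact_mod_cast hW
  set e : ℝ := (H.edgeSet.ncard : ℝ) with he
  have hen : 2 * e ≤ n ^ 2 := by rw [hn, he]; exact_mod_cast two_mul_ncard_edgeSet_le H
  refine ⟨H.neighborSet v, inferInstance, ⟨⟨w, hw⟩⟩, H.induce (H.neighborSet v), 2 * e / n,
    hGH.trans (.of_isContained ⟨Copy.induce H _⟩), ?_, ?_, fun u => ?_⟩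
  · rw [le_div_iff₀ (by positivity)]
    have hsqrt : √n * √n = n := Real.mul_self_sqrt (by positivity)
    have hc_le : 2 * c ≤ √n := by
      refine le_of_mul_le_mul_right ?_ (by positivity : 0 < n * √n)
      nlinarith
    nlinarith [mul_le_mul_of_nonneg_left hc_le (by positivity : 0 ≤ c * n)]
  · rw [Nat.card_coe_set_eq, le_div_iff₀ (by positivity), hn, he]
    exact_mod_cast hv
  · have hu := hdense u
    simp only [Nat.cast_sub hW, Nat.cast_one, ← hn] at hu
    linarith [mul_sub_one_mul_sqrt_sub_one_le hc.le hn₁ hedges hen]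

-- Mader's first reduction makes the order at most twice the density; maximizing `e / n ^ (3 / 2)`
-- over the minors then pushes the minimum degree up to three quarters of the order.
lemma exists_isMinor_forall_three_quarters_le_degree {k : ℝ} (hk : 1 < k) {V : Type} [Finite V]
    [Nonempty V] (G : SimpleGraph V) (hG : k * Nat.card V ≤ G.edgeSet.ncard) :
    ∃ (W : Type) (_ : Finite W) (_ : Nonempty W) (H : SimpleGraph W) (M : ℝ), IsMinor G H ∧
      k / 2 - 1 ≤ M ∧ Nat.card W ≤ M ∧ ∀ w, 3 / 4 * M - 5 / 4 < (H.neighborSet w).ncard := by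
  obtain ⟨U, _, _, K, κ, hGK, hkκ, hcard, hdegree⟩ :=
    exists_isMinor_card_le_two_mul (by linarith) G hG
  set n : ℝ := (Nat.card U : ℝ) with hn
  set e : ℝ := (K.edgeSet.ncard : ℝ)
  have hn₀ : 0 < n := by rw [hn]; exact_mod_cast Nat.card_pos (α := U)
  have hsum : n * (κ - 1) ≤ 2 * e := card_mul_le_two_mul_ncard_edgeSet K fun v => (hdegree v).le
  have he₀ : 0 < e := by nlinarith
  obtain ⟨W, hW₁, hW₂, H, M, hKH, hM, hH⟩ :=
    exists_isMinor_three_quarters_dense (c := e / (n * √n)) (by positivity) K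
      (by rw [div_mul_cancel₀ _ (by positivity)])
  refine ⟨W, hW₁, hW₂, H, M, hGK.trans hKH, ?_, hH⟩
  have hc_sq : 4 * (e / (n * √n)) ^ 2 = (2 * e / n) ^ 2 / n := by
    rw [div_pow, mul_pow, Real.sq_sqrt hn₀.le]
    field_simp
    ring
  have havg : κ - 1 ≤ 2 * e / n := by rw [le_div_iff₀ hn₀]; linarith
  calc k / 2 - 1 ≤ κ / 2 - 1 := by linarith
    _ ≤ (κ - 1) ^ 2 / (2 * κ) := by
      rw [le_div_iff₀ (by linarith)]
      nlinarith
    _ ≤ (2 * e / n) ^ 2 / n := by gcongr; linarith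
    _ = 4 * (e / (n * √n)) ^ 2 := hc_sq.symm
    _ ≤ M := hM

end DenseMinor

section RandomPermutation

variable {V ι : Type} [Fintype V] {I J : Finset V} {E F : (V → V) → Prop}

open Classical in
/-- The probability that a uniformly random permutation of `V` satisfies `E`. Events are predicates
of arbitrary maps `V → V`, so that `DependsOn E J` says that `E` is determined by the values of the
permutation on `J`. -/
noncomputable def permProb (E : (V → V) → Prop) : ℝ :=
  Finset.card {σ : Equiv.Perm V | E σ} / Fintype.card (Equiv.Perm V)

lemma permProb_le_one (E : (V → V) → Prop) : permProb E ≤ 1 := by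
  classical
  exact div_le_one_of_le₀ (by exact_mod_cast Finset.card_le_univ _) (by positivity)

lemma permProb_mono (h : ∀ σ : Equiv.Perm V, E σ → F σ) : permProb E ≤ permProb F := by
  classical
  unfold permProb
  gcongr with σ
  exact h σ

open Classical in
lemma sum_permProb (s : Finset ι) (E : ι → (V → V) → Prop) :
    ∑ j ∈ s, permProb (E j) =
      (∑ σ : Equiv.Perm V, (Finset.card {j ∈ s | E j σ} : ℝ)) / Fintype.card (Equiv.Perm V) := by
  simp_rw [permProb, ← Finset.sum_div, ← Nat.cast_sum]
  congr 2
  exact Finset.sum_card_bipartiteAbove_eq_sum_card_bipartiteBelow (t := Finset.univ)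
    fun j (σ : Equiv.Perm V) => E j σ

lemma permProb_exists_le (s : Finset ι) (E : ι → (V → V) → Prop) :
    permProb (fun f => ∃ j ∈ s, E j f) ≤ ∑ j ∈ s, permProb (E j) := by
  classical
  rw [sum_permProb, permProb, ← Finset.sum_boole]
  gcongr with σ
  split_ifs with hσ
  · obtain ⟨j, hj, hEj⟩ := hσ
    exact_mod_cast Finset.card_pos.2 ⟨j, Finset.mem_filter.2 ⟨hj, hEj⟩⟩
  · positivity

lemma permProb_lt_card_le [Fintype ι] (A : (V → V) → Finset ι) {τ : ℝ} (hτ : 0 < τ) :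
    permProb (fun f => τ < (A f).card) ≤ (∑ j, permProb (fun f => j ∈ A f)) / τ := by
  classical
  rw [sum_permProb, permProb, le_div_iff₀ hτ, div_mul_eq_mul_div, ← Finset.sum_boole,
    Finset.sum_mul]
  gcongr with σ
  calc _ ≤ ((A σ).card : ℝ) := by
        split_ifs with hσ
        · rw [one_mul]
          exact hσ.le
        · rw [zero_mul]
          positivity
    _ = _ := by congr; ext j; simp

-- The deletion method: every event that occurs costs at most one element of `κ`.
lemma exists_perm_forall_not {κ : Type} [Fintype ι] [Fintype κ] (E : ι → (V → V) → Prop)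
    (φ : ι → κ) {r : ℕ} (hr : r + ∑ j, permProb (E j) < Fintype.card κ) :
    ∃ (σ : Equiv.Perm V) (K : Finset κ), r < K.card ∧ ∀ j, φ j ∈ K → ¬ E j σ := by
  classical
  have hsum : ∑ σ : Equiv.Perm V, (Finset.card {j | E j σ} : ℝ) <
      ∑ _σ : Equiv.Perm V, ((Fintype.card κ : ℝ) - r) := by
    rw [sum_permProb, ← lt_sub_iff_add_lt', div_lt_iff₀ (by positivity)] at hr
    rwa [Finset.sum_const, Finset.card_univ, nsmul_eq_mul, mul_comm]
  obtain ⟨σ, -, hσ⟩ := Finset.exists_lt_of_sum_lt hsum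
  let D : Finset κ := Finset.image φ {j | E j σ}
  have hD : r + D.card < Fintype.card κ := by
    have hcard : D.card ≤ Finset.card {j | E j σ} := Finset.card_image_le
    have : r + Finset.card {j | E j σ} < Fintype.card κ := by
      exact_mod_cast lt_sub_iff_add_lt'.1 hσ
    lia
  refine ⟨σ, Dᶜ, by rw [Finset.card_compl]; lia, fun j hj hE => ?_⟩
  exact Finset.mem_compl.1 hj (Finset.mem_image_of_mem φ (by simpa using hE))

lemma permProb_and_apply_mem_comm {T : (V → V) → Finset V} {i l : V} (hi : i ∉ J) (hl : l ∉ J)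
    (hE : DependsOn E J) (hT : DependsOn T J) :
    permProb (fun f => E f ∧ f i ∈ T f) = permProb (fun f => E f ∧ f l ∈ T f) := by
  classical
  have hagree (σ : Equiv.Perm V) : ∀ j ∈ J, (σ * Equiv.swap i l) j = σ j := fun j hj => by
    rw [Equiv.Perm.mul_apply, Equiv.swap_apply_of_ne_of_ne (ne_of_mem_of_not_mem hj hi)
      (ne_of_mem_of_not_mem hj hl)]
  unfold permProb
  congr 2
  refine Finset.card_equiv (Equiv.mulRight (Equiv.swap i l)) fun σ => ?_
  simp only [Finset.mem_filter, Finset.mem_univ, true_and, Equiv.coe_mulRight]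
  rw [hE (hagree σ), hT (hagree σ), Equiv.Perm.mul_apply, Equiv.swap_apply_right]

lemma permProb_and_apply_mem_le {T : (V → V) → Finset V} {i : V} {q : ℝ} (hi : i ∉ J)
    (hE : DependsOn E J) (hT : DependsOn T J)
    (hq : ∀ σ : Equiv.Perm V, E σ → (T σ).card ≤ q * (Fintype.card V - J.card)) :
    permProb (fun f => E f ∧ f i ∈ T f) ≤ q * permProb E := by
  classical
  have hJ : ((Jᶜ).card : ℝ) = Fintype.card V - J.card := by
    rw [Finset.card_compl, Nat.cast_sub (Finset.card_le_univ J)]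
  have hJ_pos : 0 < ((Jᶜ).card : ℝ) := by
    exact_mod_cast Finset.card_pos.2 ⟨i, Finset.mem_compl.2 hi⟩
  have hsum : (Jᶜ).card * permProb (fun f => E f ∧ f i ∈ T f) =
      ∑ l ∈ Jᶜ, permProb (fun f => E f ∧ f l ∈ T f) := by
    rw [← nsmul_eq_mul, ← Finset.sum_const]
    exact Finset.sum_congr rfl fun l hl =>
      permProb_and_apply_mem_comm hi (Finset.mem_compl.1 hl) hE hT
  have hcount (σ : Equiv.Perm V) : (Finset.card {l ∈ Jᶜ | E σ ∧ σ l ∈ T σ} : ℝ) ≤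
      if E σ then q * (Jᶜ).card else 0 := by
    split_ifs with hσ
    · rw [hJ]
      refine le_trans ?_ (hq σ hσ)
      exact_mod_cast Finset.card_le_card_of_injOn σ (by simp +contextual [Set.MapsTo])
        σ.injective.injOn
    · simp [hσ]
  refine le_of_mul_le_mul_left ?_ hJ_pos
  calc _ = _ := hsum
    _ ≤ (∑ σ : Equiv.Perm V, if E σ then q * (Jᶜ).card else 0) /
        Fintype.card (Equiv.Perm V) := by
      rw [sum_permProb]
      gcongr with σ
      exact le_of_eq_of_le (by congr!) (hcount σ)
    _ = _ := by
      rw [← Finset.sum_filter, Finset.sum_const, nsmul_eq_mul, permProb]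
      ring

lemma permProb_and_forall_mem_le {T : V → (V → V) → Finset V} {q : ℝ} (hq : 0 ≤ q)
    (hIJ : Disjoint I J) (hE : DependsOn E J) (hT : ∀ i ∈ I, DependsOn (T i) J)
    (hcard : ∀ i ∈ I, ∀ σ : Equiv.Perm V, E σ →
      (T i σ).card ≤ q * (Fintype.card V - (J.card + I.card) + 1)) :
    permProb (fun f => E f ∧ ∀ i ∈ I, f i ∈ T i f) ≤ q ^ I.card * permProb E := by
  classical
  induction I using Finset.induction_on with
  | empty => simp
  | insert i I hi ih =>
    rw [Finset.disjoint_insert_left] at hIJ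
    simp only [Finset.forall_mem_insert, Finset.card_insert_of_notMem hi, Nat.cast_add,
      Nat.cast_one] at hT hcard ⊢
    have hE' : DependsOn (fun f => E f ∧ ∀ j ∈ I, f j ∈ T j f) ↑(J ∪ I) := fun f g hfg => by
      have hfgJ : ∀ j ∈ (J : Set V), f j = g j := fun j hj =>
        hfg j (Finset.mem_union_left I hj)
      simp only [hE hfgJ]
      congr! 3 with j hj
      rw [hfg j (Finset.mem_union_right J hj), hT.2 j hj hfgJ]
    have hstep := permProb_and_apply_mem_le (i := i) (T := T i) (q := q)
      (by simp [hi, hIJ.1]) hE' (hT.1.mono (by simp)) fun σ hσ => by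
        rw [Finset.card_union_of_disjoint hIJ.2.symm]
        push_cast
        linarith [hcard.1 σ hσ.1]
    have hI := ih hIJ.2 hT.2 fun j hj σ hσ => (hcard.2 j hj σ hσ).trans (by gcongr; simp)
    calc _ ≤ _ := permProb_mono fun σ hσ => ⟨⟨hσ.1, hσ.2.2⟩, hσ.2.1⟩
      _ ≤ _ := hstep
      _ ≤ q * (q ^ I.card * permProb E) := by gcongr
      _ = _ := by ring

lemma permProb_forall_mem_le {T : V → Finset V} {q : ℝ} (hq : 0 ≤ q)
    (hcard : ∀ i ∈ I, (T i).card ≤ q * (Fintype.card V - I.card + 1)) :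
    permProb (fun f => ∀ i ∈ I, f i ∈ T i) ≤ q ^ I.card := by
  have h := permProb_and_forall_mem_le (E := fun _ => True) (T := fun i _ => T i) hq
    (Finset.disjoint_empty_right I) (by simp [dependsOn_const])
    (fun i _ => by simp [dependsOn_const]) fun i hi _ _ => by simpa using hcard i hi
  simp only [true_and] at h
  exact h.trans (mul_le_of_le_one_right (by positivity) (permProb_le_one _))

end RandomPermutation

section RandomBlocks

variable {V : Type} {G : SimpleGraph V}

lemma exists_cut_of_not_connected_induce {S : Set V} {s : V} (hs : s ∈ S)
    (h : ¬ (G.induce S).Connected) :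
    ∃ B ⊆ S, B.Nonempty ∧ s ∉ B ∧ ∀ a ∈ S \ B, ∀ b ∈ B, ¬ G.Adj a b := by
  have hunreachable : ∃ y, ¬ (G.induce S).Reachable ⟨s, hs⟩ y := by
    by_contra! hreach
    exact h ((connected_iff_exists_forall_reachable _).2 ⟨⟨s, hs⟩, hreach⟩)
  obtain ⟨y, hy⟩ := hunreachable
  refine ⟨Subtype.val '' {v : S | ¬ (G.induce S).Reachable ⟨s, hs⟩ v}, by simp, ⟨y, y, hy, rfl⟩,
    ?_, ?_⟩
  · rintro ⟨v, hv, rfl⟩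
    exact hv (Reachable.refl _)
  · rintro a ⟨haS, ha⟩ _ ⟨b, hb, rfl⟩ hab
    have hab' : (G.induce S).Adj ⟨a, haS⟩ b := induce_adj.2 hab
    refine hb (Reachable.trans ?_ hab'.reachable)
    by_contra hreach
    exact ha ⟨⟨a, haS⟩, hreach, rfl⟩

lemma exists_pairwise_disjoint_card_eq [Fintype V] {N b : ℕ} (h : N * b ≤ Fintype.card V) :
    ∃ I : Fin N → Finset V, Pairwise (fun k l => Disjoint (I k) (I l)) ∧ ∀ k, (I k).card = b := by
  obtain ⟨g⟩ : Nonempty (Fin N × Fin b ↪ V) :=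
    Function.Embedding.nonempty_of_card_le (by simpa using h)
  refine ⟨fun k => Finset.univ.map ((Function.Embedding.sectR k (Fin b)).trans g), ?_, by simp⟩
  intro k l hkl
  simp [Finset.disjoint_left, hkl.symm]

variable (G) in
open Classical in
/-- The vertices without a neighbour in `S`. A set joined to `S` by no edge is contained in
`undominated G S`, so this set should be small for the branch sets of a clique minor. -/
noncomputable def undominated [Fintype V] (S : Set V) : Finset V := {w | ∀ u ∈ S, ¬ G.Adj u w}

lemma dependsOn_undominated_image [Fintype V] (I : Finset V) :
    DependsOn (fun f : V → V => undominated G (f '' I)) I :=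
  fun _ _ h => by simp only [Set.image_congr h]

variable [Fintype V] {I A B : Finset V} {q : ℝ}

lemma permProb_not_adj_le {s t : V} (hst : s ≠ t)
    (hG : ∀ v, (Gᶜ.neighborSet v).ncard ≤ q * (Fintype.card V - 1)) (hq : 0 ≤ q) :
    permProb (fun f => ¬ G.Adj (f s) (f t)) ≤ q := by
  classical
  have h := permProb_and_apply_mem_le (J := {s}) (i := t) (E := fun _ => True)
    (T := fun f => Gᶜ.neighborFinset (f s)) (q := q) (by simpa using hst.symm)
    (fun _ _ _ => rfl) (fun f g hfg => by beta_reduce; rw [hfg s (by simp)])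
    fun σ _ => by simpa [ncard_neighborSet_eq_degree] using hG (σ s)
  refine (permProb_mono fun σ hσ => ?_).trans
    (h.trans (mul_le_of_le_one_right hq (permProb_le_one _)))
  rw [true_and, mem_neighborFinset, compl_adj]
  exact ⟨σ.injective.ne hst, hσ⟩

-- Expose first the images of one `s ∈ A` and one `t ∈ B`. Given these, the image of each further
-- element of `A` must be a non-neighbour of that of `t`, and the image of each further element of
-- `B` a non-neighbour of that of `s`.
lemma permProb_forall_not_adj_le (hA : A.Nonempty) (hB : B.Nonempty) (hAB : Disjoint A B)
    (hq : 0 ≤ q)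
    (hG : ∀ v, (Gᶜ.neighborSet v).ncard ≤ q * (Fintype.card V - (A.card + B.card) + 1)) :
    permProb (fun f => ∀ a ∈ A, ∀ b ∈ B, ¬ G.Adj (f a) (f b)) ≤ q ^ (A.card + B.card - 1) := by
  classical
  obtain ⟨s, hs⟩ := hA
  obtain ⟨t, ht⟩ := hB
  have hst : s ≠ t := Finset.disjoint_iff_ne.1 hAB s hs t ht
  set I := A.erase s ∪ B.erase t with hI
  have hI_card : I.card + 2 = A.card + B.card := by
    have hA_card := Finset.card_erase_add_one hs
    have hB_card := Finset.card_erase_add_one ht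
    rw [hI, Finset.card_union_of_disjoint (hAB.mono (Finset.erase_subset _ _)
      (Finset.erase_subset _ _))]
    lia
  have hcard : (A.card + B.card : ℝ) = I.card + 2 := by exact_mod_cast hI_card.symm
  rw [hcard] at hG
  have hroot := permProb_not_adj_le (G := G) (q := q) hst (fun v => (hG v).trans (by
    gcongr; linarith [(I.card.cast_nonneg : (0 : ℝ) ≤ I.card)])) hq
  let T (i : V) (f : V → V) : Finset V := Gᶜ.neighborFinset (f (if i ∈ A then t else s))
  have hrest := permProb_and_forall_mem_le (E := fun f => ¬ G.Adj (f s) (f t)) (T := T) (I := I)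
    (J := {s, t}) hq (by simp [hI, Finset.disjoint_right.1 hAB ht, Finset.disjoint_left.1 hAB hs])
    (fun f g hfg => by beta_reduce; rw [hfg s (by simp), hfg t (by simp)])
    (fun i _ f g hfg => by simp only [T]; rw [hfg]; split_ifs <;> simp) fun i _ σ _ => by
      rw [card_neighborFinset_eq_degree, ← ncard_neighborSet_eq_degree, Finset.card_pair hst]
      refine (hG _).trans_eq ?_
      push_cast
      ring
  calc _ ≤ permProb (fun f => ¬ G.Adj (f s) (f t) ∧ ∀ i ∈ I, f i ∈ T i f) := by
        refine permProb_mono fun σ hσ => ⟨hσ s hs t ht, fun i hi => ?_⟩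
        rw [mem_neighborFinset, compl_adj]
        rcases Finset.mem_union.1 hi with hi | hi <;> have hi := Finset.mem_of_mem_erase hi
        · rw [if_pos hi]
          exact ⟨σ.injective.ne (Finset.disjoint_iff_ne.1 hAB i hi t ht).symm,
            fun h => hσ i hi t ht h.symm⟩
        · rw [if_neg (Finset.disjoint_right.1 hAB hi)]
          exact ⟨σ.injective.ne (Finset.disjoint_iff_ne.1 hAB s hs i hi), hσ s hs i hi⟩
    _ ≤ q ^ I.card * q := hrest.trans (by gcongr)
    _ = q ^ (A.card + B.card - 1) := by rw [← pow_succ, ← hI_card]; rfl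

lemma permProb_not_connected_induce_le (hI : I.Nonempty) (hq : 0 ≤ q)
    (hG : ∀ v, (Gᶜ.neighborSet v).ncard ≤ q * (Fintype.card V - I.card + 1)) :
    permProb (fun f => ¬ (G.induce (f '' I)).Connected) ≤
      (2 ^ (I.card - 1) - 1) * q ^ (I.card - 1) := by
  classical
  obtain ⟨s, hs⟩ := hI
  let cuts := (I.erase s).powerset.erase ∅
  have hcuts : (cuts.card : ℝ) = 2 ^ (I.card - 1) - 1 := by
    rw [Finset.card_erase_of_mem (Finset.empty_mem_powerset _), Finset.card_powerset,
      Finset.card_erase_of_mem hs, Nat.cast_sub Nat.one_le_two_pow]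
    norm_cast
  calc _ ≤ permProb (fun f => ∃ B ∈ cuts, ∀ a ∈ I \ B, ∀ b ∈ B, ¬ G.Adj (f a) (f b)) := by
        refine permProb_mono fun σ hσ => ?_
        obtain ⟨B, hBS, hB_ne, hsB, hB⟩ :=
          exists_cut_of_not_connected_induce (Set.mem_image_of_mem σ hs) hσ
        obtain ⟨_, hy⟩ := hB_ne
        obtain ⟨i, hi, rfl⟩ := hBS hy
        refine ⟨{j ∈ I | σ j ∈ B}, ?_, fun a ha b hb => hB _ ?_ _ (Finset.mem_filter.1 hb).2⟩
        · rw [Finset.mem_erase, Finset.mem_powerset]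
          refine ⟨Finset.ne_empty_of_mem (Finset.mem_filter.2 ⟨hi, hy⟩), fun j hj => ?_⟩
          obtain ⟨hjI, hjB⟩ := Finset.mem_filter.1 hj
          exact Finset.mem_erase.2 ⟨fun h => hsB (h ▸ hjB), hjI⟩
        · obtain ⟨haI, haB⟩ := Finset.mem_sdiff.1 ha
          exact ⟨Set.mem_image_of_mem σ haI, fun h => haB (Finset.mem_filter.2 ⟨haI, h⟩)⟩
    _ ≤ ∑ B ∈ cuts, permProb (fun f => ∀ a ∈ I \ B, ∀ b ∈ B, ¬ G.Adj (f a) (f b)) :=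
        permProb_exists_le _ _
    _ ≤ ∑ _B ∈ cuts, q ^ (I.card - 1) := by
        refine Finset.sum_le_sum fun B hB => ?_
        obtain ⟨hB_ne, hBI⟩ := Finset.mem_erase.1 hB
        rw [Finset.mem_powerset, Finset.subset_erase] at hBI
        have hcard := Finset.card_sdiff_add_card_eq_card hBI.1
        have h := permProb_forall_not_adj_le (G := G) (q := q)
          ⟨s, Finset.mem_sdiff.2 ⟨hs, hBI.2⟩⟩ (Finset.nonempty_iff_ne_empty.2 hB_ne)
          Finset.sdiff_disjoint hq (by simpa only [← Nat.cast_add, hcard] using hG)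
        rwa [hcard] at h
    _ = _ := by rw [Finset.sum_const, nsmul_eq_mul, hcuts]

lemma permProb_lt_card_undominated_le {p τ : ℝ} (hq : 0 ≤ q) (hτ : 0 < τ)
    (hG : ∀ v, ((Gᶜ.neighborSet v).ncard + 1 : ℝ) ≤ q * (Fintype.card V - I.card + 1))
    (hp : Fintype.card V * q ^ I.card ≤ p * τ) :
    permProb (fun f => τ < (undominated G (f '' I)).card) ≤ p := by
  classical
  have hmem (w : V) : permProb (fun f => w ∈ undominated G (f '' I)) ≤ q ^ I.card := by
    refine le_trans (permProb_mono fun σ hσ => ?_)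
      (permProb_forall_mem_le (T := fun _ => insert w (Gᶜ.neighborFinset w)) hq fun _ _ => ?_)
    · intro i hi
      have hnadj := (Finset.mem_filter.1 hσ).2 (σ i) (Set.mem_image_of_mem σ hi)
      rw [Finset.mem_insert, mem_neighborFinset, compl_adj]
      exact or_iff_not_imp_left.2 fun hne => ⟨Ne.symm hne, fun h => hnadj h.symm⟩
    · rw [Finset.card_insert_of_notMem (by simp), card_neighborFinset_eq_degree,
        ← ncard_neighborSet_eq_degree]
      exact_mod_cast hG w
  calc _ ≤ _ := permProb_lt_card_le _ hτ
    _ ≤ (∑ _w : V, q ^ I.card) / τ := by gcongr; exact hmem _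
    _ ≤ p := by simpa [div_le_iff₀ hτ] using hp

lemma permProb_subset_undominated_le {I' : Finset V} {β τ : ℝ} (hII' : Disjoint I' I)
    (hβ : 0 ≤ β) (hτ : τ ≤ β * (Fintype.card V - (I.card + I'.card) + 1)) :
    permProb (fun f => (undominated G (f '' I)).card ≤ τ ∧
      ∀ i ∈ I', f i ∈ undominated G (f '' I)) ≤ β ^ I'.card := by
  have hdep : DependsOn (fun f : V → V => undominated G (f '' I)) I := dependsOn_undominated_image I
  refine (permProb_and_forall_mem_le hβ hII' (fun f g hfg => ?_) (fun _ _ => hdep)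
    fun _ _ σ hσ => hσ.trans hτ).trans (mul_le_of_le_one_right (by positivity) (permProb_le_one _))
  simp only [hdep hfg]

end RandomBlocks

section RandomPartition

variable {V : Type} {G : SimpleGraph V}

lemma isMinor_top_of_forall_connected {κ : Type} {S : κ → Set V}
    (hS : Pairwise fun k l => Disjoint (S k) (S l)) (hconn : ∀ k, (G.induce (S k)).Connected)
    (hadj : ∀ k l, k ≠ l → ∃ u ∈ S k, ∃ v ∈ S l, G.Adj u v) :
    IsMinor G (⊤ : SimpleGraph κ) :=
  ⟨S, fun k => Set.nonempty_coe_sort.1 (hconn k).nonempty, hconn, hS, hadj⟩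

lemma exists_mem_adj_of_not_subset_undominated [Fintype V] {σ : V → V} {A B : Finset V}
    (h : ¬ ∀ b ∈ B, σ b ∈ undominated G (σ '' A)) : ∃ u ∈ σ '' A, ∃ v ∈ σ '' B, G.Adj u v := by
  push Not at h
  obtain ⟨b, hb, hbA⟩ := h
  simp only [undominated, Finset.mem_filter, Finset.mem_univ, true_and] at hbA
  push Not at hbA
  obtain ⟨u, hu, hub⟩ := hbA
  exact ⟨u, hu, σ b, Set.mem_image_of_mem σ hb, hub⟩

variable [Fintype V] {N r : ℕ}

-- Discard a block of a random permutation if it is disconnected, if it has more than `τ`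
-- undominated vertices, or if it has no edge to some later block.
lemma exists_perm_forall_connected_forall_adj {I : Fin N → Finset V} {τ p₁ p₂ p₃ : ℝ}
    (h₁ : ∀ k, permProb (fun f => ¬ (G.induce (f '' I k)).Connected) ≤ p₁)
    (h₂ : ∀ k, permProb (fun f => τ < (undominated G (f '' I k)).card) ≤ p₂)
    (h₃ : ∀ k l, k < l → permProb (fun f => (undominated G (f '' I k)).card ≤ τ ∧
      ∀ i ∈ I l, f i ∈ undominated G (f '' I k)) ≤ p₃)
    (hr : r + (N * p₁ + (N * p₂ + N.choose 2 * p₃)) < N) :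
    ∃ (σ : Equiv.Perm V) (K : Finset (Fin N)), r < K.card ∧
      (∀ k ∈ K, (G.induce (σ '' I k)).Connected) ∧
      ∀ k ∈ K, ∀ l, k < l → ∃ u ∈ σ '' I k, ∃ v ∈ σ '' I l, G.Adj u v := by
  classical
  let disconnected (k : Fin N) (f : V → V) : Prop := ¬ (G.induce (f '' I k)).Connected
  let weak (k : Fin N) (f : V → V) : Prop := τ < (undominated G (f '' I k)).card
  let unjoined (x : {x : Fin N × Fin N // x.1 < x.2}) (f : V → V) : Prop :=
    (undominated G (f '' I x.1.1)).card ≤ τ ∧ ∀ i ∈ I x.1.2, f i ∈ undominated G (f '' I x.1.1)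
  have hdisconnected : ∑ k, permProb (disconnected k) ≤ N * p₁ :=
    (Finset.sum_le_card_nsmul _ _ _ fun k _ => h₁ k).trans_eq (by simp)
  have hweak : ∑ k, permProb (weak k) ≤ N * p₂ :=
    (Finset.sum_le_card_nsmul _ _ _ fun k _ => h₂ k).trans_eq (by simp)
  have hunjoined : ∑ x, permProb (unjoined x) ≤ N.choose 2 * p₃ := by
    have hpairs : Fintype.card {x : Fin N × Fin N // x.1 < x.2} = N.choose 2 := by
      rw [Fintype.card_subtype, Fintype.card_product_filter_lt, Fintype.card_fin]
    rw [← hpairs, ← nsmul_eq_mul]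
    exact Finset.sum_le_card_nsmul _ _ _ fun x _ => h₃ _ _ x.2
  obtain ⟨σ, K, hK, hgood⟩ := exists_perm_forall_not (r := r)
    (Sum.elim disconnected (Sum.elim weak unjoined)) (Sum.elim id (Sum.elim id (·.1.1))) (by
      simp only [Fintype.sum_sum_type, Sum.elim_inl, Sum.elim_inr, Fintype.card_fin]
      linarith)
  refine ⟨σ, K, hK, fun k hk => not_not.1 (hgood (.inl k) hk), fun k hk l hkl => ?_⟩
  exact exists_mem_adj_of_not_subset_undominated fun h =>
    hgood (.inr (.inr ⟨(k, l), hkl⟩)) hk ⟨not_lt.1 (hgood (.inr (.inl k)) hk), h⟩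

lemma isMinor_top_of_neighborSet_compl_le {b : ℕ} {q₁ q p β τ : ℝ} (hb : 0 < b)
    (hN : N * b ≤ Fintype.card V) (hq₁ : 0 ≤ q₁) (hq : 0 ≤ q) (hβ : 0 ≤ β) (hτ : 0 < τ)
    (hG₁ : ∀ v, (Gᶜ.neighborSet v).ncard ≤ q₁ * (Fintype.card V - b + 1))
    (hG : ∀ v, ((Gᶜ.neighborSet v).ncard + 1 : ℝ) ≤ q * (Fintype.card V - b + 1))
    (hp : Fintype.card V * q ^ b ≤ p * τ) (hτβ : τ ≤ β * (Fintype.card V - 2 * b + 1))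
    (hr : r + (N * ((2 ^ (b - 1) - 1) * q₁ ^ (b - 1)) + (N * p + N.choose 2 * β ^ b)) < N) :
    IsMinor G (⊤ : SimpleGraph (Fin (r + 1))) := by
  obtain ⟨I, hI_disj, hI_card⟩ := exists_pairwise_disjoint_card_eq hN
  have hdisconnected (k : Fin N) := permProb_not_connected_induce_le (G := G) (I := I k)
    (Finset.card_pos.1 (by rwa [hI_card])) hq₁ (by simpa only [hI_card] using hG₁)
  have hweak (k : Fin N) := permProb_lt_card_undominated_le (G := G) (I := I k) (q := q) hq hτ
    (by simpa only [hI_card] using hG) (by simpa only [hI_card] using hp)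
  have hunjoined (k l : Fin N) (hkl : k < l) := permProb_subset_undominated_le (G := G)
    (hI_disj hkl.ne') hβ (τ := τ) (by simpa only [hI_card, ← two_mul] using hτβ)
  simp only [hI_card] at hdisconnected hunjoined
  obtain ⟨σ, K, hK, hconn, hadj⟩ :=
    exists_perm_forall_connected_forall_adj hdisconnected hweak hunjoined hr
  refine IsMinor.top_of_card_le (isMinor_top_of_forall_connected (S := fun k : K => σ '' I k)
    (fun k l hkl => ?_) (fun k => hconn k k.2) fun k l hkl => ?_) (by simpa using hK)
  · refine (Set.disjoint_image_iff σ.injective).2 ?_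
    exact_mod_cast hI_disj (Subtype.coe_ne_coe.2 hkl)
  · rcases lt_or_gt_of_ne (Subtype.coe_ne_coe.2 hkl) with h | h
    · exact hadj k k.2 l h
    · obtain ⟨u, hu, v, hv, huv⟩ := hadj l l.2 k h
      exact ⟨v, hv, u, hu, huv.symm⟩

end RandomPartition

section Parameters

variable {V : Type} [Fintype V] {G : SimpleGraph V} {M : ℝ}

lemma lt_card_of_three_quarters_dense [Nonempty V]
    (hG : ∀ v, 3 / 4 * M - 5 / 4 < (G.neighborSet v).ncard) :
    3 / 4 * M - 1 / 4 < Fintype.card V := by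
  classical
  obtain ⟨v⟩ := ‹Nonempty V›
  have hdegree : (G.degree v + 1 : ℝ) ≤ Fintype.card V := by
    exact_mod_cast G.degree_lt_card_verts v
  have hv := hG v
  rw [ncard_neighborSet_eq_degree] at hv
  linarith

lemma neighborSet_compl_add_le_of_three_quarters_dense {b : ℕ} {c q : ℝ} (hM : Fintype.card V ≤ M)
    (hG : ∀ v, 3 / 4 * M - 5 / 4 < (G.neighborSet v).ncard) (hq : q ≤ 1)
    (hb : 1 / 4 + c + q * (b - 1) ≤ (q - 1 / 4) * M) (v : V) :
    (Gᶜ.neighborSet v).ncard + c ≤ q * (Fintype.card V - b + 1) := by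
  classical
  have hdegree : ((Gᶜ.neighborSet v).ncard : ℝ) = Fintype.card V - 1 - G.degree v := by
    rw [ncard_neighborSet_eq_degree, degree_compl, Nat.sub_sub,
      Nat.cast_sub (by have := G.degree_lt_card_verts v; lia)]
    push_cast
    ring
  have hv := hG v
  rw [ncard_neighborSet_eq_degree] at hv
  have := mul_le_mul_of_nonneg_left hM (sub_nonneg.2 hq)
  linarith

-- About `1.822 * r` blocks of size `3`, where `1.822` bounds `√(log₂ 10)` from below.
lemma isMinor_top_of_three_quarters_dense_of_le_sixteen [Nonempty V] {r : ℕ}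
    (hM : Fintype.card V ≤ M) (hG : ∀ v, 3 / 4 * M - 5 / 4 < (G.neighborSet v).ncard)
    (hr₁ : 10 ≤ r) (hr₂ : r ≤ 16) (hrM : 4 * r * 1.822 - 1 ≤ M) :
    IsMinor G (⊤ : SimpleGraph (Fin (r + 1))) := by
  have hn := lt_card_of_three_quarters_dense hG
  have hr₁' : (10 : ℝ) ≤ r := by exact_mod_cast hr₁
  have hr₂' : (r : ℝ) ≤ 16 := by exact_mod_cast hr₂
  let N := ⌊(1.822 * r - 1 / 3 : ℝ)⌋₊
  have hN_le : (N : ℝ) ≤ 1.822 * r - 1 / 3 := Nat.floor_le (by linarith)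
  have hN_gt : 1.822 * r - 4 / 3 < (N : ℝ) := by
    have := Nat.lt_floor_add_one (1.822 * r - 1 / 3 : ℝ)
    change _ < (N : ℝ) + 1 at this
    linarith
  refine isMinor_top_of_neighborSet_compl_le (N := N) (b := 3) (q₁ := 0.261) (q := 0.2755)
    (p := 1 / 6) (β := 0.1384) (τ := 6 * (Fintype.card V * 0.2755 ^ 3)) (by norm_num) ?_
    (by norm_num) (by norm_num) (by norm_num) ?_ ?_ ?_ ?_ ?_ ?_
  · rify
    linarith
  · linarith
  · simpa using neighborSet_compl_add_le_of_three_quarters_dense (b := 3) (c := 0) (q := 0.261)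
      hM hG (by norm_num) (by linarith)
  · exact neighborSet_compl_add_le_of_three_quarters_dense hM hG (by norm_num)
      (by norm_num; linarith)
  · linarith
  · norm_num
    linarith
  · rw [Nat.cast_choose_two]
    norm_num
    nlinarith [mul_nonneg (sub_nonneg.2 hr₁') (sub_nonneg.2 hr₂')]

lemma mul_eight_point_eight_mul_pow_pow_le {r c : ℕ} (hc : 2 ≤ c) (hr : r ≤ 2 ^ ((c + 1) ^ 2)) :
    r * (8.8 * 0.27 ^ (c + 2)) ^ (c + 2) ≤ (0.01 : ℝ) := by
  have hr' : (r : ℝ) ≤ 2 ^ ((c + 1) ^ 2) := by exact_mod_cast hr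
  have hexponent : (2 : ℝ) ^ ((c + 1) ^ 2) = 2 * (2 ^ c) ^ (c + 2) := by
    rw [← pow_mul, ← pow_succ']
    ring_nf
  have hpow {x : ℝ} (hx₀ : 0 ≤ x) (hx₁ : x ≤ 1) : x ^ (c + 2) ≤ x ^ 4 :=
    pow_le_pow_of_le_one hx₀ hx₁ (by lia)
  calc r * (8.8 * 0.27 ^ (c + 2)) ^ (c + 2)
      ≤ (2 : ℝ) ^ ((c + 1) ^ 2) * (8.8 * 0.27 ^ (c + 2)) ^ (c + 2) := by gcongr
    _ = 2 * (2.2 * 0.54 ^ (c + 2)) ^ (c + 2) := by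
        rw [hexponent, mul_assoc, ← mul_pow, show (0.54 : ℝ) = 2 * 0.27 by norm_num, mul_pow 2,
          pow_add 2 c 2]
        ring
    _ ≤ 2 * (2.2 * 0.54 ^ 4) ^ (c + 2) := by
        gcongr 2 * (2.2 * ?_) ^ (c + 2)
        exact hpow (by norm_num) (by norm_num)
    _ ≤ 2 * (2.2 * 0.54 ^ 4) ^ 4 := by
        gcongr 2 * ?_
        exact hpow (by norm_num) (by norm_num)
    _ ≤ 0.01 := by norm_num

lemma two_pow_sub_one_mul_pow_le {c : ℕ} (hc : 2 ≤ c) :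
    (2 ^ (c + 1) - 1) * 0.26 ^ (c + 1) ≤ (0.1407 : ℝ) :=
  calc (2 ^ (c + 1) - 1) * 0.26 ^ (c + 1) ≤ (2 : ℝ) ^ (c + 1) * 0.26 ^ (c + 1) := by
        gcongr
        linarith
    _ = 0.52 ^ (c + 1) := by
        rw [← mul_pow]
        norm_num
    _ ≤ 0.52 ^ 3 := pow_le_pow_of_le_one (by norm_num) (by norm_num) (by lia)
    _ ≤ 0.1407 := by norm_num

-- About `1.5 * r` blocks of size `c + 2`, each discarded with probability at most
-- `0.1407 + 1 / 8 + 0.0075`, where the summands correspond to the three reasons for discarding it.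
lemma isMinor_top_of_three_quarters_dense_of_le_two_pow [Nonempty V] {r c : ℕ}
    (hM : Fintype.card V ≤ M) (hG : ∀ v, 3 / 4 * M - 5 / 4 < (G.neighborSet v).ncard)
    (hr : 17 ≤ r) (hc : 2 ≤ c) (hrc : r ≤ 2 ^ ((c + 1) ^ 2)) (hrM : 4 * r * c - 1 ≤ M) :
    IsMinor G (⊤ : SimpleGraph (Fin (r + 1))) := by
  have hn := lt_card_of_three_quarters_dense hG
  have hr' : (17 : ℝ) ≤ r := by exact_mod_cast hr
  have hc' : (2 : ℝ) ≤ c := by exact_mod_cast hc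
  have hrc₁ : (17 : ℝ) * c ≤ r * c := by gcongr
  have hrc₂ : (r : ℝ) * 2 ≤ r * c := by gcongr
  let N := 3 * r / 2 - 1
  have hN_ge : (3 * r : ℝ) ≤ 2 * N + 3 := by exact_mod_cast (by lia : 3 * r ≤ 2 * N + 3)
  have hN_le : (2 * N + 2 : ℝ) ≤ 3 * r := by exact_mod_cast (by lia : 2 * N + 2 ≤ 3 * r)
  have hdisconnected := two_pow_sub_one_mul_pow_le hc
  have hunjoined := mul_eight_point_eight_mul_pow_pow_le hc hrc
  refine isMinor_top_of_neighborSet_compl_le (N := N) (b := c + 2) (q₁ := 0.26) (q := 0.27)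
    (p := 1 / 8) (β := 8.8 * 0.27 ^ (c + 2)) (τ := 8 * (Fintype.card V * 0.27 ^ (c + 2)))
    (by lia) ?_ (by norm_num) (by norm_num) (by positivity) (by positivity) ?_ ?_
    (by linarith) ?_ ?_
  · rify
    nlinarith
  · simpa using neighborSet_compl_add_le_of_three_quarters_dense (b := c + 2) (c := 0) (q := 0.26)
      hM hG (by norm_num) (by push_cast; linarith)
  · exact neighborSet_compl_add_le_of_three_quarters_dense hM hG (by norm_num)
      (by push_cast; linarith)
  · have hpow : (0 : ℝ) < 0.27 ^ (c + 2) := by positivity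
    push_cast
    nlinarith
  · set B : ℝ := (8.8 * 0.27 ^ (c + 2)) ^ (c + 2)
    have hB : 0 ≤ B := by positivity
    have hNB : N * B ≤ 0.015 := by nlinarith
    have hpairs : N.choose 2 * B ≤ N * 0.0075 := by
      rw [Nat.cast_choose_two]
      nlinarith [(N.cast_nonneg : (0 : ℝ) ≤ N)]
    have hblocks := mul_le_mul_of_nonneg_left hdisconnected N.cast_nonneg
    rw [show c + 2 - 1 = c + 1 by lia]
    linarith

end Parameters

section CliqueMinor

variable {V : Type} {r : ℕ}

lemma div_le_logb_two_of_two_pow_le_pow {p q : ℕ} (hq : 0 < q) (h : 2 ^ p ≤ r ^ q) :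
    (p / q : ℝ) ≤ Real.logb 2 r := by
  have hr : 0 < r := Nat.pos_of_ne_zero fun hr =>
    (Nat.two_pow_pos p).ne' (by simp [hr, hq.ne'] at h)
  rw [div_le_iff₀ (by positivity), mul_comm, ← Real.logb_pow,
    Real.le_logb_iff_rpow_le (by norm_num) (by positivity), Real.rpow_natCast]
  exact_mod_cast h

lemma one_le_sqrt_logb_two (hr : 2 ≤ r) : 1 ≤ √(Real.logb 2 r) := by
  have := div_le_logb_two_of_two_pow_le_pow (p := 1) (q := 1) one_pos (by simpa using hr)
  exact Real.one_le_sqrt.2 (by simpa using this)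

lemma two_pow_sub_one_le_mul_sqrt_logb (hr₁ : 2 ≤ r) (hr₂ : r ≤ 9) :
    2 ^ (r - 1) ≤ 16 * r * √(Real.logb 2 r) := by
  obtain rfl | hr₂ := hr₂.eq_or_lt
  · have hsqrt : (16 / 9 : ℝ) ≤ √(Real.logb 2 (9 : ℕ)) := Real.le_sqrt_of_sq_le
      (le_trans (by norm_num) (div_le_logb_two_of_two_pow_le_pow (p := 256) (q := 81)
        (by norm_num) (by norm_num)))
    calc (2 : ℝ) ^ (9 - 1) ≤ 16 * (9 : ℕ) * (16 / 9) := by norm_num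
      _ ≤ _ := by gcongr
  · have hsqrt := one_le_sqrt_logb_two hr₁
    calc (2 : ℝ) ^ (r - 1) ≤ 16 * r * 1 := by interval_cases r <;> norm_num
      _ ≤ _ := by gcongr

lemma exists_nat_lt_sqrt_logb_le_two_pow (hr : 17 ≤ r) :
    ∃ c : ℕ, 2 ≤ c ∧ c < √(Real.logb 2 r) ∧ r ≤ 2 ^ ((c + 1) ^ 2) := by
  have hr' : (17 : ℝ) ≤ r := by exact_mod_cast hr
  have hlogb : 2 ^ 2 < Real.logb 2 r := by
    rw [Real.lt_logb_iff_rpow_lt (by norm_num) (by linarith)]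
    norm_num
    linarith
  have hceil : 2 < ⌈√(Real.logb 2 r)⌉₊ :=
    Nat.lt_ceil.2 (by exact_mod_cast Real.lt_sqrt_of_sq_lt hlogb)
  obtain ⟨c, hc⟩ := Nat.exists_eq_succ_of_ne_zero (by lia : ⌈√(Real.logb 2 r)⌉₊ ≠ 0)
  refine ⟨c, by lia, Nat.lt_ceil.1 (by lia), ?_⟩
  have hle : Real.logb 2 r ≤ ((c + 1) ^ 2 : ℕ) := by
    have := Nat.le_ceil √(Real.logb 2 r)
    rw [hc, Real.sqrt_le_left (by positivity)] at this
    exact_mod_cast this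
  rw [Real.logb_le_iff_le_rpow (by norm_num) (by linarith), Real.rpow_natCast] at hle
  exact_mod_cast hle

lemma isMinor_top_of_three_quarters_dense [Finite V] [Nonempty V] {G : SimpleGraph V} {M : ℝ}
    (hM : Nat.card V ≤ M) (hG : ∀ v, 3 / 4 * M - 5 / 4 < (G.neighborSet v).ncard) (hr : 10 ≤ r)
    (hrM : 4 * r * √(Real.logb 2 r) - 1 ≤ M) : IsMinor G (⊤ : SimpleGraph (Fin (r + 1))) := by
  have := Fintype.ofFinite V
  rw [Nat.card_eq_fintype_card] at hM
  rcases le_or_gt r 16 with hr' | hr'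
  · have hsqrt : (1.822 : ℝ) ≤ √(Real.logb 2 r) := Real.le_sqrt_of_sq_le
      (le_trans (by norm_num) (div_le_logb_two_of_two_pow_le_pow (p := 83) (q := 25)
        (by norm_num) ((by norm_num : 2 ^ 83 ≤ 10 ^ 25).trans (Nat.pow_le_pow_left hr 25))))
    exact isMinor_top_of_three_quarters_dense_of_le_sixteen hM hG hr hr'
      (le_trans (by gcongr) hrM)
  · obtain ⟨c, hc, hcr, hrc⟩ := exists_nat_lt_sqrt_logb_le_two_pow hr'
    exact isMinor_top_of_three_quarters_dense_of_le_two_pow hM hG hr' hc hrc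
      (le_trans (by gcongr) hrM)

lemma isMinor_top_of_mul_sqrt_logb_mul_card_lt [Finite V] [Nonempty V] (G : SimpleGraph V)
    (hG : 8 * r * √(Real.logb 2 r) * Nat.card V < G.edgeSet.ncard) :
    IsMinor G (⊤ : SimpleGraph (Fin (r + 1))) := by
  rcases Nat.lt_or_ge r 2 with hr | hr
  · have hpos : (0 : ℝ) < G.edgeSet.ncard := lt_of_le_of_lt (by positivity) hG
    exact (isMinor_top_fin_two (by exact_mod_cast hpos)).top_of_card_le (by simpa using hr)
  rcases le_or_gt r 9 with hr' | hr'
  · have hcard : (2 ^ (r - 1) * Nat.card V : ℝ) ≤ 2 * G.edgeSet.ncard := by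
      have := mul_le_mul_of_nonneg_right (two_pow_sub_one_le_mul_sqrt_logb hr hr')
        (Nat.card V).cast_nonneg
      linarith
    have h := isMinor_top_of_two_pow_mul_card_le (r - 1) G (by exact_mod_cast hcard)
    rwa [show r - 1 + 2 = r + 1 by lia] at h
  · have hsqrt := one_le_sqrt_logb_two hr
    have hr₁ : (10 : ℝ) ≤ r := by exact_mod_cast hr'
    obtain ⟨W, _, _, H, M, hGH, hkM, hWM, hH⟩ :=
      exists_isMinor_forall_three_quarters_le_degree (by nlinarith) G hG.le
    exact hGH.trans (isMinor_top_of_three_quarters_dense hWM hH hr' (by linarith))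

end CliqueMinor

section MinorDensity

variable {V W : Type}

lemma bddAbove_setOf_isMinor_top [Finite V] (G : SimpleGraph V) :
    BddAbove {r : ℕ | IsMinor G (⊤ : SimpleGraph (Fin r))} :=
  ⟨Nat.card V, fun _ hr => by simpa using hr.card_le_s6⟩

variable [Fintype V] {G : SimpleGraph V}

lemma le_completeMinorSize {r : ℕ} (h : IsMinor G (⊤ : SimpleGraph (Fin r))) :
    r ≤ completeMinorSize G :=
  le_csSup (bddAbove_setOf_isMinor_top G) h

lemma isMinor_top_completeMinorSize [Nonempty V] (G : SimpleGraph V) :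
    IsMinor G (⊤ : SimpleGraph (Fin (completeMinorSize G))) :=
  Nat.sSup_mem ⟨1, isMinor_top_fin_one G⟩ (bddAbove_setOf_isMinor_top G)

lemma div_card_le_minorDensity [Finite W] {H : SimpleGraph W} (h : IsMinor G H) :
    (H.edgeSet.ncard / Nat.card W : ℝ) ≤ minorDensity G := by
  refine le_csSup ⟨Nat.card V, ?_⟩ ⟨W, Fintype.ofFinite W, H, h, rfl⟩
  rintro _ ⟨U, _, K, hK, rfl⟩
  refine div_le_of_le_mul₀ (by positivity) (by positivity) ?_
  have hedges : (2 * K.edgeSet.ncard : ℝ) ≤ Nat.card U ^ 2 := by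
    exact_mod_cast two_mul_ncard_edgeSet_le K
  have hcard : (Nat.card U * Nat.card U : ℝ) ≤ Nat.card V * Nat.card U := by
    gcongr
    exact hK.card_le_s6
  rw [Nat.card_coe_set_eq]
  nlinarith [(K.edgeSet.ncard.cast_nonneg : (0 : ℝ) ≤ _)]

lemma minorDensity_le_of_forall [Nonempty V] {c : ℝ}
    (h : ∀ (W : Type) [Finite W] (H : SimpleGraph W), IsMinor G H →
      (H.edgeSet.ncard / Nat.card W : ℝ) ≤ c) : minorDensity G ≤ c := by
  refine csSup_le ⟨_, Fin 1, inferInstance, ⊤, isMinor_top_fin_one G, rfl⟩ ?_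
  rintro _ ⟨W, _, H, hH, rfl⟩
  exact h W H hH

lemma ncard_edgeSet_top_fin (r : ℕ) : (⊤ : SimpleGraph (Fin r)).edgeSet.ncard = r.choose 2 := by
  rw [← coe_edgeFinset, Set.ncard_coe_finset, card_edgeFinset_top_eq_card_choose_two,
    Fintype.card_fin]

end MinorDensity

/-- **Lemma** (Thomason). For every finite graph `G`,
`(r(G) - 1)/2 ≤ δ(G) ≤ 8·r(G)·√(log₂ r(G))`, where `r(G)` is the largest `r` such that
`K_r` is a minor of `G` and `δ(G)` is the minor density of `G`. -/
theorem minorDensity_le_and_ge_completeMinorSize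
    {V : Type} [Fintype V] [Nonempty V] (G : SimpleGraph V) :
    ((completeMinorSize G : ℝ) - 1) / 2 ≤ minorDensity G ∧
    minorDensity G ≤
      8 * (completeMinorSize G : ℝ) * Real.sqrt (Real.logb 2 (completeMinorSize G)) := by
  constructor
  · have hpos : 0 < completeMinorSize G := le_completeMinorSize (isMinor_top_fin_one G)
    have h := div_card_le_minorDensity (isMinor_top_completeMinorSize G)
    rw [ncard_edgeSet_top_fin, Nat.cast_choose_two, Nat.card_fin] at h
    exact le_of_eq_of_le (by field_simp) h
  · refine minorDensity_le_of_forall fun W _ H hH => ?_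
    cases isEmpty_or_nonempty W
    · rw [Nat.card_of_isEmpty, Nat.cast_zero, div_zero]
      positivity
    · rw [div_le_iff₀ (by exact_mod_cast Nat.card_pos)]
      by_contra! hlt
      have hclique := hH.trans (isMinor_top_of_mul_sqrt_logb_mul_card_lt H hlt)
      exact (le_completeMinorSize hclique).not_gt (Nat.lt_succ_self _)
end

section
/- Any finite connected graph G with n vertices, diameter D, and treewidth at most k admits, for every collection of parts, a shortcut with congestion at most 8kD·⌈log₂ n⌉ and dilation at most 8k(2D+1); in particular, such graphs admit shortcuts with congestion O(kD log n) and dilation O(kD). -/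
open SimpleGraph

/-- `G` has treewidth at most `k`: there is a tree decomposition of `G` all of whose bags
have at most `k + 1` vertices. -/
def HasTreewidthLE {V : Type} (G : SimpleGraph V) (k : ℕ) : Prop :=
  ∃ (ι : Type) (_ : Fintype ι) (T : SimpleGraph ι) (B : ι → Set V),
    T.IsTree ∧
    (∀ v : V, ∃ i, v ∈ B i) ∧
    (∀ v : V, (T.induce {i | v ∈ B i}).Connected) ∧
    (∀ u v : V, G.Adj u v → ∃ i, u ∈ B i ∧ v ∈ B i) ∧
    (∀ i, (B i).ncard ≤ k + 1)

/-!
Hang `G` from a root by a shortest-path tree and let every part climb towards the root, stopping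
at the overloaded vertices, those reached by `8kD` parts or more. The climbing paths of a part form
its shortcut. Stopping at overloaded vertices bounds the congestion and cuts the tree into
connected blocks; a part meeting few blocks has small dilation, because each block has diameter at
most `2D`.

In a graph of small treewidth, two families of disjoint connected sets have few intersecting pairs:
two intersecting subtrees of a rooted tree contain one of each other's top nodes, so every
intersecting pair is seen in the bag at the top node of one of its two members. Applied to blocks
and parts, this shows that overloaded vertices are rare, and then that at most a third of the parts
meet many blocks. Those parts are served again in the next of logarithmically many rounds.
-/

lemma exists_set_forall_mem_iff {α : Type*} {rel : α → α → Prop} (hrel : WellFounded rel)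
    (p : Set α → α → Prop)
    (hp : ∀ s t a, (∀ b, rel b a → (b ∈ s ↔ b ∈ t)) → p s a → p t a) :
    ∃ s : Set α, ∀ a, a ∈ s ↔ p s a := by
  let mem : α → Prop := hrel.fix fun a ih => p {b | ∃ h : rel b a, ih b h} a
  have hmem (a : α) : mem a ↔ p {b | ∃ _ : rel b a, mem b} a :=
    iff_of_eq (hrel.fix_eq _ a)
  refine ⟨{a | mem a}, fun a => (hmem a).trans ⟨hp _ _ a ?_, hp _ _ a ?_⟩⟩
  · exact fun b hb => exists_prop_of_true hb
  · exact fun b hb => Iff.symm (exists_prop_of_true hb)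

section Counting

open Finset

variable {α β : Type*} {r : α → β → Prop} [∀ a b, Decidable (r a b)]

lemma three_mul_card_filter_bipartiteBelow_le {s o : Finset α} {t : Finset β} {δ : ℕ} (hos : o ⊆ s)
    (hso : #s ≤ #o + 1) (hr : ∑ a ∈ s, #(t.bipartiteAbove r a) ≤ δ * (#s + #t))
    (ho : ∀ a ∈ o, 4 * δ ≤ #(t.bipartiteAbove r a)) :
    3 * #{b ∈ t | 4 * δ < #(s.bipartiteBelow r b)} ≤ #t := by
  set bad := {b ∈ t | 4 * δ < #(s.bipartiteBelow r b)}
  set incidences := ∑ a ∈ s, #(t.bipartiteAbove r a) with hincidences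
  have heavy : #o * (4 * δ) ≤ incidences :=
    (card_nsmul_le_sum o _ _ ho).trans (sum_le_sum_of_subset hos)
  have light : #bad * (4 * δ + 1) ≤ incidences := by
    rw [hincidences, sum_card_bipartiteAbove_eq_sum_card_bipartiteBelow]
    exact (card_nsmul_le_sum bad (fun b => #(s.bipartiteBelow r b)) _
      fun b hb => (mem_filter.1 hb).2).trans (sum_le_sum_of_subset (filter_subset _ _))
  have upper : incidences ≤ δ * (#o + 1 + #t) :=
    hr.trans (Nat.mul_le_mul_left δ (Nat.add_le_add_right hso _))
  by_contra! hbad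
  have : (#t + 1) * (4 * δ) ≤ 3 * #bad * (4 * δ) := Nat.mul_le_mul_right _ hbad
  nlinarith

open scoped Classical in
lemma card_filter_not_disjoint_le_ncard {ℬ : Finset (Set α)}
    (hℬ : (ℬ : Set (Set α)).PairwiseDisjoint id) {X : Set α} (hX : X.Finite) :
    #{B ∈ ℬ | ¬Disjoint B X} ≤ X.ncard := by
  rw [Set.ncard_eq_toFinset_card X hX]
  refine card_le_card_of_forall_subsingleton (fun B x => x ∈ B) (fun B hB => ?_) ?_
  · obtain ⟨x, hxB, hxX⟩ := Set.not_disjoint_iff.1 (mem_filter.1 hB).2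
    exact ⟨x, hX.mem_toFinset.2 hxX, hxB⟩
  · rintro x - A ⟨hA, hxA⟩ B ⟨hB, hxB⟩
    exact hℬ.elim_set (mem_filter.1 hA).1 (mem_filter.1 hB).1 x hxA hxB

end Counting

section ClosestPoint

variable {V : Type*} {G : SimpleGraph V}

lemma dist_lt_of_mem_tail_support {u v x : V} {p : G.Walk u v} (hp : p.length = G.dist u v)
    (hx : x ∈ p.support.tail) : G.dist x v < G.dist u v := by
  classical
  cases p with
  | nil => simp at hx
  | cons h q =>
    simp only [Walk.support_cons, List.tail_cons] at hx
    calc G.dist x v ≤ (q.dropUntil x hx).length := dist_le _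
      _ ≤ q.length := q.length_dropUntil_le_length hx
      _ < G.dist u v := by rw [← hp, Walk.length_cons]; exact Nat.lt_succ_self _

lemma exists_isPath_append_of_closest (hG : G.Connected) {S : Set V}
    (hS : (G.induce S).Connected) {r s t : V} (hs : s ∈ S) (ht : t ∈ S)
    (hmin : ∀ x ∈ S, G.dist t r ≤ G.dist x r) :
    ∃ (p : G.Walk s t) (q : G.Walk t r), (∀ x ∈ p.support, x ∈ S) ∧
      q.length = G.dist t r ∧ (p.append q).IsPath := by
  classical
  obtain ⟨p₀, hp₀⟩ := hS.exists_isPath ⟨s, hs⟩ ⟨t, ht⟩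
  obtain ⟨q, hq, hqlen⟩ := hG.exists_path_of_dist t r
  let p : G.Walk s t := p₀.map (Embedding.induce S).toHom
  have hpS : ∀ x ∈ p.support, x ∈ S := by
    intro x hx
    obtain ⟨y, -, rfl⟩ := List.mem_map.1 (p₀.support_map _ ▸ hx)
    exact y.2
  refine ⟨p, q, hpS, hqlen, ?_⟩
  rw [Walk.isPath_def, Walk.support_append, List.nodup_append']
  refine ⟨(hp₀.map Subtype.val_injective).support_nodup, hq.support_nodup.tail, ?_⟩
  intro x hxp hxq
  exact (hmin x (hpS x hxp)).not_gt (dist_lt_of_mem_tail_support hqlen hxq)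

lemma mem_of_closest_of_dist_le {T : SimpleGraph V} (hT : T.IsTree) {S S' : Set V}
    (hS : (T.induce S).Connected) (hS' : (T.induce S').Connected) (hSS' : ¬Disjoint S S')
    {r t t' : V} (ht : t ∈ S) (ht' : t' ∈ S') (hmin : ∀ x ∈ S, T.dist t r ≤ T.dist x r)
    (hmin' : ∀ x ∈ S', T.dist t' r ≤ T.dist x r) (htt' : T.dist t r ≤ T.dist t' r) :
    t' ∈ S := by
  obtain ⟨s, hs, hs'⟩ := Set.not_disjoint_iff.1 hSS'
  obtain ⟨p, q, hpS, hq, hpq⟩ := exists_isPath_append_of_closest hT.connected hS hs ht hmin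
  obtain ⟨p', q', -, -, hpq'⟩ :=
    exists_isPath_append_of_closest hT.connected hS' hs' ht' hmin'
  have heq : p.append q = p'.append q' :=
    congrArg Subtype.val ((hT.isAcyclic.subsingleton_path s r).elim ⟨_, hpq⟩ ⟨_, hpq'⟩)
  have hmem : t' ∈ (p.append q).support := by
    rw [heq, Walk.mem_support_append_iff]
    exact Or.inl p'.end_mem_support
  rw [Walk.support_append, List.mem_append] at hmem
  exact hmem.elim (hpS t') fun h => absurd (dist_lt_of_mem_tail_support hq h) htt'.not_gt

end ClosestPoint

section Incidences

open Finset

variable {V : Type*} {G : SimpleGraph V}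

/-- A collection of parts: pairwise disjoint vertex sets, each inducing a connected subgraph. The
parts are not indexed, since disjoint nonempty sets are distinct. -/
structure IsPartCollection (G : SimpleGraph V) (𝒬 : Finset (Set V)) : Prop where
  connected : ∀ P ∈ 𝒬, (G.induce P).Connected
  pairwiseDisjoint : (𝒬 : Set (Set V)).PairwiseDisjoint id

lemma IsPartCollection.subset {𝒬 ℛ : Finset (Set V)} (h𝒬 : IsPartCollection G 𝒬) (h : ℛ ⊆ 𝒬) :
    IsPartCollection G ℛ where
  connected P hP := h𝒬.connected P (h hP)
  pairwiseDisjoint := h𝒬.pairwiseDisjoint.subset (coe_subset.2 h)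

open scoped Classical in
lemma IsPartCollection.card_le [Finite V] {𝒬 : Finset (Set V)} (h𝒬 : IsPartCollection G 𝒬) :
    #𝒬 ≤ Nat.card V := by
  have hmeet : ∀ P ∈ 𝒬, ¬Disjoint P Set.univ := fun P hP => by
    rw [Set.disjoint_univ]
    exact (Set.nonempty_coe_sort.1 (h𝒬.connected P hP).nonempty).ne_empty
  simpa only [filter_true_of_mem hmeet, Set.ncard_univ] using
    card_filter_not_disjoint_le_ncard h𝒬.pairwiseDisjoint (Set.toFinite Set.univ)

open scoped Classical in
/-- Any two collections of parts of `G` have at most `δ` times as many intersecting pairs as they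
have members. This is the only consequence of bounded treewidth that the construction of shortcuts
needs; it plays the role of the density of bipartite minors of `G`. -/
def IncidenceDensityLE (G : SimpleGraph V) (δ : ℕ) : Prop :=
  ∀ 𝒜 ℬ : Finset (Set V), IsPartCollection G 𝒜 → IsPartCollection G ℬ →
    ∑ A ∈ 𝒜, #{B ∈ ℬ | ¬Disjoint A B} ≤ δ * (#𝒜 + #ℬ)

lemma IncidenceDensityLE.mono {δ δ' : ℕ} (h : IncidenceDensityLE G δ) (hδ : δ ≤ δ') :
    IncidenceDensityLE G δ' :=
  fun 𝒜 ℬ h𝒜 hℬ => (h 𝒜 ℬ h𝒜 hℬ).trans (Nat.mul_le_mul_right _ hδ)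

variable {ι : Type*} {T : SimpleGraph ι} {B : ι → Set V}

lemma connected_induce_setOf_not_disjoint_bag
    (hnode : ∀ v, (T.induce {i | v ∈ B i}).Connected)
    (hedge : ∀ u v, G.Adj u v → ∃ i, u ∈ B i ∧ v ∈ B i)
    {A : Set V} (hA : (G.induce A).Connected) :
    (T.induce {i | ¬Disjoint A (B i)}).Connected := by
  set S := {i | ¬Disjoint A (B i)}
  have hS {v : V} (hv : v ∈ A) : {i | v ∈ B i} ⊆ S :=
    fun i hi => Set.not_disjoint_iff.2 ⟨v, hv, hi⟩
  have hsame {v : V} (hv : v ∈ A) {i j : ι} (hi : v ∈ B i) (hj : v ∈ B j) :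
      (T.induce S).Reachable ⟨i, hS hv hi⟩ ⟨j, hS hv hj⟩ :=
    ((hnode v).preconnected ⟨i, hi⟩ ⟨j, hj⟩).map (T.induceHomOfLE (hS hv)).toHom
  have hwalk {u v : A} (p : (G.induce A).Walk u v) {i j : ι} (hi : u.1 ∈ B i) (hj : v.1 ∈ B j) :
      (T.induce S).Reachable ⟨i, hS u.2 hi⟩ ⟨j, hS v.2 hj⟩ := by
    induction p generalizing i with
    | nil => exact hsame (Subtype.prop _) hi hj
    | cons h _ ih =>
      obtain ⟨l, hl, hl'⟩ := hedge _ _ h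
      exact (hsame (Subtype.prop _) hi hl).trans (ih hl' hj)
  obtain ⟨v, hv⟩ := hA.nonempty
  obtain ⟨i, hi⟩ := (hnode v).nonempty
  refine (connected_iff _).2 ⟨?_, ⟨⟨i, hS hv hi⟩⟩⟩
  rintro ⟨i, hi⟩ ⟨j, hj⟩
  obtain ⟨u, hu, hui⟩ := Set.not_disjoint_iff.1 hi
  obtain ⟨v, hv, hvj⟩ := Set.not_disjoint_iff.1 hj
  obtain ⟨p⟩ := hA.preconnected ⟨u, hu⟩ ⟨v, hv⟩
  exact hwalk p hui hvj

lemma exists_topNode (hT : T.IsTree) (hnode : ∀ v, (T.induce {i | v ∈ B i}).Connected)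
    (hedge : ∀ u v, G.Adj u v → ∃ i, u ∈ B i ∧ v ∈ B i) :
    ∃ top : Set V → ι, ∀ A A' : Set V, (G.induce A).Connected → (G.induce A').Connected →
      ¬Disjoint A A' → ¬Disjoint A (B (top A')) ∨ ¬Disjoint A' (B (top A)) := by
  obtain ⟨r⟩ := hT.connected.nonempty
  have hnodes {A : Set V} := connected_induce_setOf_not_disjoint_bag (A := A) hnode hedge
  have hclosest (A : Set V) : ∃ t, (G.induce A).Connected → ¬Disjoint A (B t) ∧
      ∀ i, ¬Disjoint A (B i) → T.dist t r ≤ T.dist i r := by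
    by_cases hA : (G.induce A).Connected
    · have hne := Set.nonempty_coe_sort.1 (hnodes hA).nonempty
      exact ⟨_, fun _ => ⟨Function.argminOn_mem (T.dist · r) _ hne,
        fun i hi => Function.argminOn_le (T.dist · r) _ hi⟩⟩
    · exact ⟨r, fun h => absurd h hA⟩
  choose top htop using hclosest
  refine ⟨top, fun A A' hA hA' hAA' => ?_⟩
  obtain ⟨v, hv, hv'⟩ := Set.not_disjoint_iff.1 hAA'
  obtain ⟨i, hi⟩ := (hnode v).nonempty
  have hmeet : ¬Disjoint {i | ¬Disjoint A (B i)} {i | ¬Disjoint A' (B i)} :=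
    Set.not_disjoint_iff.2
      ⟨i, Set.not_disjoint_iff.2 ⟨v, hv, hi⟩, Set.not_disjoint_iff.2 ⟨v, hv', hi⟩⟩
  obtain ⟨ht, hmin⟩ := htop A hA
  obtain ⟨ht', hmin'⟩ := htop A' hA'
  refine (le_total (T.dist (top A) r) (T.dist (top A') r)).imp (fun h => ?_) fun h => ?_
  · exact mem_of_closest_of_dist_le hT (hnodes hA) (hnodes hA') hmeet ht ht' hmin hmin' h
  · exact mem_of_closest_of_dist_le hT (hnodes hA') (hnodes hA) (fun h' => hmeet h'.symm)
      ht' ht hmin' hmin h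

lemma incidenceDensityLE_of_treeDecomposition [Finite V] (hT : T.IsTree)
    (hnode : ∀ v, (T.induce {i | v ∈ B i}).Connected)
    (hedge : ∀ u v, G.Adj u v → ∃ i, u ∈ B i ∧ v ∈ B i) {w : ℕ}
    (hcard : ∀ i, (B i).ncard ≤ w) : IncidenceDensityLE G w := by
  classical
  obtain ⟨top, htop⟩ := exists_topNode hT hnode hedge
  have hfew {𝒞 : Finset (Set V)} (h𝒞 : IsPartCollection G 𝒞) (i : ι) :
      #{C ∈ 𝒞 | ¬Disjoint C (B i)} ≤ w :=
    (card_filter_not_disjoint_le_ncard h𝒞.pairwiseDisjoint (Set.toFinite _)).trans (hcard i)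
  intro 𝒜 ℬ h𝒜 hℬ
  calc ∑ A ∈ 𝒜, #{A' ∈ ℬ | ¬Disjoint A A'}
      ≤ ∑ A ∈ 𝒜, (#{A' ∈ ℬ | ¬Disjoint A (B (top A'))} +
          #{A' ∈ ℬ | ¬Disjoint A' (B (top A))}) := by
        refine sum_le_sum fun A hA => (card_le_card fun A' hA' => ?_).trans (card_union_le _ _)
        obtain ⟨hA', hAA'⟩ := mem_filter.1 hA'
        simpa only [mem_union, mem_filter, hA', true_and] using
          htop A A' (h𝒜.connected A hA) (hℬ.connected A' hA') hAA'
    _ = ∑ A' ∈ ℬ, #{A ∈ 𝒜 | ¬Disjoint A (B (top A'))} +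
          ∑ A ∈ 𝒜, #{A' ∈ ℬ | ¬Disjoint A' (B (top A))} := by
        rw [sum_add_distrib]
        exact congrArg (· + _) (sum_card_bipartiteAbove_eq_sum_card_bipartiteBelow _)
    _ ≤ #ℬ * w + #𝒜 * w :=
        add_le_add (sum_le_card_nsmul _ _ _ fun _ _ => hfew h𝒜 _)
          (sum_le_card_nsmul _ _ _ fun _ _ => hfew hℬ _)
    _ = w * (#𝒜 + #ℬ) := by ring

end Incidences

lemma incidenceDensityLE_of_hasTreewidthLE {V : Type} [Finite V] {G : SimpleGraph V} {k : ℕ}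
    (h : HasTreewidthLE G k) : IncidenceDensityLE G (k + 1) := by
  obtain ⟨ι, _, T, B, hT, -, hnode, hedge, hcard⟩ := h
  exact incidenceDensityLE_of_treeDecomposition hT hnode hedge hcard

lemma pos_of_hasTreewidthLE {V : Type} [Finite V] {G : SimpleGraph V} {k : ℕ}
    (h : HasTreewidthLE G k) {u v : V} (huv : G.Adj u v) : 0 < k := by
  obtain ⟨ι, _, T, B, -, -, -, hedge, hcard⟩ := h
  obtain ⟨i, hu, hv⟩ := hedge u v huv
  have : 1 < (B i).ncard := (Set.one_lt_ncard (Set.toFinite _)).2 ⟨u, hu, v, hv, huv.ne⟩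
  have := hcard i
  omega

/- Along a geodesic, vertices whose distances from `u` are distinct multiples of `ℓ + 1` have
distinct colours. -/
lemma dist_lt_ncard_range_mul {V β : Type*} {G : SimpleGraph V} (hG : G.Connected)
    {color : V → β} (hfin : (Set.range color).Finite) {ℓ : ℕ}
    (hℓ : ∀ u v, color u = color v → G.dist u v ≤ ℓ) (u v : V) :
    G.dist u v < (Set.range color).ncard * (ℓ + 1) := by
  by_contra! hlong
  obtain ⟨p, hp⟩ := hG.exists_walk_length_eq_dist u v
  have hdist {n : ℕ} (hn : n ≤ G.dist u v) : G.dist u (p.getVert n) = n := by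
    have htake := dist_le (p.take n)
    have hdrop := dist_le (p.drop n)
    have htri := hG.dist_triangle (u := u) (v := p.getVert n) (w := v)
    rw [Walk.take_length] at htake
    rw [Walk.drop_length] at hdrop
    omega
  set b := (Set.range color).ncard
  have hmul {i : ℕ} (hi : i ≤ b) : i * (ℓ + 1) ≤ G.dist u v :=
    (Nat.mul_le_mul_right _ hi).trans hlong
  have hle {i j : ℕ} (hi : i ≤ b) (hj : j ≤ b)
      (hij : color (p.getVert (i * (ℓ + 1))) = color (p.getVert (j * (ℓ + 1)))) : i ≤ j := by
    refine Nat.lt_succ_iff.1 (Nat.lt_of_mul_lt_mul_right (a := ℓ + 1) ?_)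
    calc i * (ℓ + 1) = G.dist u (p.getVert (i * (ℓ + 1))) := (hdist (hmul hi)).symm
      _ ≤ G.dist u (p.getVert (j * (ℓ + 1))) + ℓ :=
        hG.dist_triangle.trans (Nat.add_le_add_left (hℓ _ _ hij.symm) _)
      _ = j * (ℓ + 1) + ℓ := by rw [hdist (hmul hj)]
      _ < (j + 1) * (ℓ + 1) := by rw [Nat.succ_mul]; omega
  have hinj : Set.InjOn (fun i => color (p.getVert (i * (ℓ + 1)))) (Set.Iic b) :=
    fun i hi j hj hij => le_antisymm (hle hi hj hij) (hle hj hi hij.symm)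
  have hcard : (Set.Iic b).ncard ≤ b :=
    Set.ncard_le_ncard_of_injOn _ (fun i _ => Set.mem_range_self _) hinj hfin
  rw [Set.ncard_eq_toFinset_card', Set.toFinset_Iic, Nat.card_Iic] at hcard
  exact hcard.not_gt b.lt_succ_self

/-- A spanning tree of `G` in which every vertex descends from the root `r` along a shortest path,
encoded by its parent map. The value `parent r` is junk. -/
structure ShortestPathTree {V : Type*} (G : SimpleGraph V) (r : V) where
  parent : V → V
  adj_parent : ∀ {v}, v ≠ r → G.Adj v (parent v)
  dist_parent_lt : ∀ {v}, v ≠ r → G.dist (parent v) r < G.dist v r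

namespace ShortestPathTree

open Relation

variable {V : Type*} {G : SimpleGraph V} {r : V}

lemma nonempty_of_connected (hG : G.Connected) (r : V) : Nonempty (ShortestPathTree G r) := by
  have hcloser (v : V) : ∃ w, v ≠ r → G.Adj v w ∧ G.dist w r < G.dist v r := by
    obtain ⟨p, hp⟩ := hG.exists_walk_length_eq_dist v r
    cases p with
    | nil => exact ⟨r, fun h => absurd rfl h⟩
    | @cons _ w _ h q =>
      exact ⟨w, fun _ => ⟨h, (dist_le q).trans_lt (hp ▸ Nat.lt_succ_self _)⟩⟩
  choose parent hparent using hcloser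
  exact ⟨⟨parent, fun h => (hparent _ h).1, fun h => (hparent _ h).2⟩⟩

variable (T : ShortestPathTree G r) {O O' : Set V} {P : Set V} {u v x y : V}

/-- One step towards the root, from a vertex that is neither the root nor in the set `O` of
stopping vertices. -/
def Step (O : Set V) (u v : V) : Prop :=
  u ≠ r ∧ u ∉ O ∧ T.parent u = v

/-- `u` reaches `v` by climbing towards the root without going past a vertex of `O`. -/
def Climbs (O : Set V) : V → V → Prop :=
  ReflTransGen (T.Step O)

/-- The vertices that reach `x` by climbing; for `x` the root or in `O`, these are the blocks into
which the tree falls when the edge above each vertex of `O` is removed. -/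
def block (O : Set V) (x : V) : Set V :=
  {v | T.Climbs O v x}

/-- The union of the paths climbed from the vertices of `P`. -/
def shortcut (O : Set V) (P : Set V) : G.Subgraph where
  verts := {v | ∃ u ∈ P, T.Climbs O u v}
  Adj a b := (∃ u ∈ P, T.Climbs O u a) ∧ T.Step O a b ∨ (∃ u ∈ P, T.Climbs O u b) ∧ T.Step O b a
  adj_sub := by
    rintro a b (⟨-, har, -, rfl⟩ | ⟨-, hbr, -, rfl⟩)
    · exact T.adj_parent har
    · exact (T.adj_parent hbr).symm
  edge_vert := by
    rintro a b (⟨ha, -⟩ | ⟨⟨u, hu, hub⟩, hba⟩)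
    · exact ha
    · exact ⟨u, hu, hub.tail hba⟩
  symm := ⟨fun _ _ => Or.symm⟩

variable {T}

lemma Climbs.dist_le (h : T.Climbs O u v) : G.dist v r ≤ G.dist u r := by
  induction h with
  | refl => exact le_rfl
  | tail _ hstep ih =>
    obtain ⟨hr, -, rfl⟩ := hstep
    exact (T.dist_parent_lt hr).le.trans ih

lemma Climbs.congr (h : T.Climbs O u v)
    (hO : ∀ w, G.dist v r < G.dist w r → (w ∈ O ↔ w ∈ O')) : T.Climbs O' u v := by
  induction h using ReflTransGen.head_induction_on with
  | refl => exact .refl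
  | @head a c hstep hcv ih =>
    obtain ⟨hr, haO, rfl⟩ := hstep
    have hlt : G.dist v r < G.dist a r :=
      (Climbs.dist_le hcv).trans_lt (T.dist_parent_lt hr)
    exact ih.head ⟨hr, mt (hO a hlt).2 haO, rfl⟩

lemma Climbs.eq_of_mem_insert (h : T.Climbs O x y) (hx : x ∈ insert r O) : x = y := by
  refine h.cases_head.resolve_right ?_
  rintro ⟨z, ⟨hr, hxO, -⟩, -⟩
  exact hx.elim hr hxO

lemma Climbs.unique (hx : T.Climbs O u x) (hy : T.Climbs O u y) (hxO : x ∈ insert r O)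
    (hyO : y ∈ insert r O) : x = y := by
  have hstep : Relator.RightUnique (T.Step O) := fun _ _ _ h h' => h.2.2.symm.trans h'.2.2
  exact (ReflTransGen.total_of_right_unique hstep hx hy).elim
    (fun h => Climbs.eq_of_mem_insert h hxO) fun h => (Climbs.eq_of_mem_insert h hyO).symm

variable (T) in
lemma exists_climbs (O : Set V) (v : V) : ∃ x ∈ insert r O, T.Climbs O v x := by
  induction hn : G.dist v r using Nat.strong_induction_on generalizing v with
  | _ n ih =>
    by_cases hv : v ∈ insert r O
    · exact ⟨v, hv, .refl⟩
    · obtain ⟨hr, hvO⟩ := not_or.1 hv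
      obtain ⟨x, hx, hclimb⟩ := ih _ (hn ▸ T.dist_parent_lt hr) (T.parent v) rfl
      exact ⟨x, hx, hclimb.head ⟨hr, hvO, rfl⟩⟩

lemma not_disjoint_block_iff : ¬Disjoint (T.block O x) P ↔ x ∈ (T.shortcut O P).verts :=
  Set.not_disjoint_iff.trans (exists_congr fun _ => and_comm)

variable (T) in
lemma connected_induce_block (O : Set V) (x : V) : (G.induce (T.block O x)).Connected := by
  have hx : x ∈ T.block O x := ReflTransGen.refl
  have hreach {v : V} (hv : T.Climbs O v x) :
      (G.induce (T.block O x)).Reachable ⟨v, hv⟩ ⟨x, hx⟩ := by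
    induction hv using ReflTransGen.head_induction_on with
    | refl => rfl
    | @head a c hstep hcx ih =>
      obtain ⟨hr, -, rfl⟩ := id hstep
      have hadj : (G.induce (T.block O x)).Adj ⟨a, hcx.head hstep⟩ ⟨T.parent a, hcx⟩ :=
        T.adj_parent hr
      exact hadj.reachable.trans ih
  exact (connected_iff _).2 ⟨fun u v => (hreach u.2).trans (hreach v.2).symm, ⟨⟨x, hx⟩⟩⟩

open scoped Classical in
lemma isPartCollection_image_block {K : Finset V} (hK : ↑K ⊆ insert r O) :
    IsPartCollection G (K.image (T.block O)) where
  connected := Finset.forall_mem_image.2 fun x _ => T.connected_induce_block O x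
  pairwiseDisjoint := by
    rw [Finset.coe_image]
    rintro _ ⟨x, hx, rfl⟩ _ ⟨y, hy, rfl⟩ hxy
    exact Set.disjoint_left.2 fun v hvx hvy =>
      hxy (congrArg _ (Climbs.unique hvx hvy (hK hx) (hK hy)))

open Finset

/- The condition is circular only in appearance: whether `v` is overloaded depends on the
overloaded vertices farther from the root than `v`. -/
open scoped Classical in
lemma exists_overloaded [Finite V] (T : ShortestPathTree G r) (𝒬 : Finset (Set V)) (c : ℕ) :
    ∃ O : Finset V, ∀ v, v ∈ O ↔ c ≤ #{P ∈ 𝒬 | v ∈ (T.shortcut O P).verts} := by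
  have hwf : WellFounded fun w v => G.dist v r < G.dist w r :=
    Finite.wellFounded_of_trans_of_irrefl _
  obtain ⟨O, hO⟩ := exists_set_forall_mem_iff hwf
    (fun O v => c ≤ #{P ∈ 𝒬 | v ∈ (T.shortcut O P).verts}) fun O O' v hOO' hv =>
      hv.trans (card_le_card (monotone_filter_right 𝒬
        fun P _ ⟨u, hu, huv⟩ => ⟨u, hu, Climbs.congr huv hOO'⟩))
  exact ⟨O.toFinite.toFinset, by simpa using hO⟩

open scoped Classical in
lemma card_filter_mem_edgeSet_shortcut_le {𝒬 : Finset (Set V)} {c : ℕ}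
    (hO : ∀ v ∉ O, #{P ∈ 𝒬 | v ∈ (T.shortcut O P).verts} ≤ c) (e : Sym2 V) :
    #{P ∈ 𝒬 | e ∈ (T.shortcut O P).edgeSet} ≤ c := by
  induction e using Sym2.ind with
  | _ a b =>
    have hends {P : Set V} (h : s(a, b) ∈ (T.shortcut O P).edgeSet) :
        a ∈ (T.shortcut O P).verts ∧ b ∈ (T.shortcut O P).verts := ⟨h.fst_mem, h.snd_mem⟩
    rcases eq_empty_or_nonempty {P ∈ 𝒬 | s(a, b) ∈ (T.shortcut O P).edgeSet} with h | ⟨P, hP⟩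
    · simp only [h, card_empty, zero_le]
    · rcases (mem_filter.1 hP).2 with ⟨-, -, haO, -⟩ | ⟨-, -, hbO, -⟩
      · exact (card_le_card (monotone_filter_right 𝒬 fun _ _ h => (hends h).1)).trans (hO a haO)
      · exact (card_le_card (monotone_filter_right 𝒬 fun _ _ h => (hends h).2)).trans (hO b hbO)

lemma mem_verts_shortcut (hu : u ∈ P) : u ∈ (T.shortcut O P).verts :=
  ⟨u, hu, .refl⟩

lemma exists_walk_of_shortcut_le {W : G.Subgraph} (hW : T.shortcut O P ≤ W)
    (hu : u ∈ (T.shortcut O P).verts) (h : T.Climbs O u x) :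
    ∃ (hx : x ∈ (T.shortcut O P).verts) (p : W.coe.Walk ⟨u, hW.1 hu⟩ ⟨x, hW.1 hx⟩),
      p.length + G.dist x r ≤ G.dist u r := by
  induction h with
  | refl => exact ⟨hu, .nil, (Nat.zero_add _).le⟩
  | @tail a b _ hstep ih =>
    obtain ⟨ha, p, hp⟩ := ih
    have hadj : (T.shortcut O P).Adj a b := Or.inl ⟨ha, hstep⟩
    have hlt : G.dist b r < G.dist a r := hstep.2.2 ▸ T.dist_parent_lt hstep.1
    refine ⟨hadj.snd_mem, p.concat (hW.2 hadj).coe, ?_⟩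
    rw [Walk.length_concat]
    omega

end ShortestPathTree

section Shortcuts

open Finset ShortestPathTree

variable {V : Type} {G : SimpleGraph V} {r : V} {T : ShortestPathTree G r} {P : Set V}

lemma verts_partGraph_shortcut (O : Set V) :
    (partGraph G P (T.shortcut O P)).verts = (T.shortcut O P).verts :=
  Set.union_eq_self_of_subset_left fun _ => mem_verts_shortcut

lemma connected_partGraph_shortcut (hP : (G.induce P).Connected) (O : Set V) :
    (partGraph G P (T.shortcut O P)).coe.Connected := by
  have hW : T.shortcut O P ≤ partGraph G P (T.shortcut O P) := le_sup_right
  let f : G.induce P →g (partGraph G P (T.shortcut O P)).coe :=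
    { toFun := fun a => ⟨a.1, Or.inl a.2⟩
      map_rel' := fun {a b} hab => Or.inl ⟨a.2, b.2, hab⟩ }
  have hreach (v : (partGraph G P (T.shortcut O P)).verts) :
      ∃ a, (partGraph G P (T.shortcut O P)).coe.Reachable (f a) v := by
    obtain ⟨a, ha, hav⟩ := (verts_partGraph_shortcut O).subset v.2
    obtain ⟨_, p, _⟩ := exists_walk_of_shortcut_le hW (mem_verts_shortcut ha) hav
    exact ⟨⟨a, ha⟩, p.reachable⟩
  refine (connected_iff _).2 ⟨fun u v => ?_, hP.nonempty.map f⟩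
  obtain ⟨a, ha⟩ := hreach u
  obtain ⟨b, hb⟩ := hreach v
  exact ha.symm.trans (((hP.preconnected a b).map f).trans hb)

open scoped Classical in
lemma dist_partGraph_shortcut_le {D : ℕ} (hD : ∀ v, G.dist v r ≤ D)
    (hP : (G.induce P).Connected) (O : Finset V) : ∀ u v,
    (partGraph G P (T.shortcut O P)).coe.dist u v ≤
      #{A ∈ (insert r O).image (T.block O) | ¬Disjoint A P} * (2 * D + 1) := by
  set W := partGraph G P (T.shortcut O P)
  have hW : T.shortcut O P ≤ W := le_sup_right
  have hverts (u : W.verts) : u.1 ∈ (T.shortcut O P).verts :=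
    (verts_partGraph_shortcut _).subset u.2
  have hconn : W.coe.Connected := connected_partGraph_shortcut hP O
  choose top htop hclimb using T.exists_climbs O
  let color (u : W.verts) : Set V := T.block O (top u)
  have hrange : Set.range color ⊆ {A ∈ (insert r O).image (T.block O) | ¬Disjoint A P} := by
    rintro _ ⟨u, rfl⟩
    obtain ⟨hmem, -⟩ := exists_walk_of_shortcut_le hW (hverts u) (hclimb u)
    exact mem_filter.2
      ⟨mem_image_of_mem _ (mem_coe.1 (coe_insert r O ▸ htop u)), not_disjoint_block_iff.2 hmem⟩
  have hdiam (u v : W.verts) (huv : color u = color v) : W.coe.dist u v ≤ 2 * D := by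
    have huv' : T.Climbs O u (top v) := huv.subset (hclimb u)
    obtain ⟨_, p, hp⟩ := exists_walk_of_shortcut_le hW (hverts u) huv'
    obtain ⟨_, q, hq⟩ := exists_walk_of_shortcut_le hW (hverts v) (hclimb v)
    calc W.coe.dist u v ≤ (p.append q.reverse).length := W.coe.dist_le _
      _ = p.length + q.length := by rw [Walk.length_append, Walk.length_reverse]
      _ ≤ D + D := by have := hD u; have := hD v; omega
      _ = 2 * D := (two_mul D).symm
  intro u v
  calc W.coe.dist u v ≤ (Set.range color).ncard * (2 * D + 1) :=
        (dist_lt_ncard_range_mul hconn ((finite_toSet _).subset hrange) hdiam u v).le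
    _ ≤ _ := Nat.mul_le_mul_right _
        ((Set.ncard_le_ncard hrange (finite_toSet _)).trans_eq (Set.ncard_coe_finset _))

open scoped Classical in
/-- `H P`, for `P` ranging over the parts in `𝒬`, is a shortcut with congestion at most `c` and
dilation at most `d`. Connectedness is part of the dilation bound because `SimpleGraph.dist` is `0`
between vertices in different components. -/
structure IsShortcut (G : SimpleGraph V) (𝒬 : Finset (Set V)) (H : Set V → G.Subgraph)
    (c d : ℕ) : Prop where
  congestion : ∀ e, #{P ∈ 𝒬 | e ∈ (H P).edgeSet} ≤ c
  dilation : ∀ P ∈ 𝒬, (partGraph G P (H P)).coe.Connected ∧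
    ∀ u v, (partGraph G P (H P)).coe.dist u v ≤ d

variable {𝒬 ℛ : Finset (Set V)} {D δ c c' d : ℕ}

open scoped Classical in
lemma IsShortcut.union {H H' : Set V → G.Subgraph} (h : IsShortcut G 𝒬 H c d)
    (h' : IsShortcut G ℛ H' c' d) :
    IsShortcut G (𝒬 ∪ ℛ) (fun P => if P ∈ 𝒬 then H P else H' P) (c + c') d where
  congestion e := by
    refine le_trans (card_le_card fun P hP => ?_)
      ((card_union_le _ _).trans (add_le_add (h.congestion e) (h'.congestion e)))
    grind
  dilation P hP := by
    by_cases hPQ : P ∈ 𝒬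
    · rw [if_pos hPQ]
      exact h.dilation P hPQ
    · rw [if_neg hPQ]
      exact h'.dilation P ((mem_union.1 hP).resolve_left hPQ)

lemma isShortcut_bot_of_subsingleton [Subsingleton V] (h𝒬 : IsPartCollection G 𝒬) :
    IsShortcut G 𝒬 ⊥ c d where
  congestion e := by simp
  dilation P hP := by
    obtain ⟨v, hv⟩ := (h𝒬.connected P hP).nonempty
    have : Nonempty (partGraph G P ⊥).verts := ⟨⟨v, Or.inl hv⟩⟩
    exact ⟨(connected_iff _).2 ⟨.of_subsingleton, this⟩, fun u v => by
      rw [Subsingleton.elim u v, dist_self]; exact Nat.zero_le d⟩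

open scoped Classical in
lemma exists_isShortcut_sdiff [Finite V] (hG : G.Connected) (hD : ∀ v, G.dist v r ≤ D)
    (hD0 : 0 < D) (hδ : IncidenceDensityLE G δ) (h𝒬 : IsPartCollection G 𝒬) :
    ∃ bad ⊆ 𝒬, 3 * #bad ≤ #𝒬 ∧
      ∃ H, IsShortcut G (𝒬 \ bad) H (4 * δ * D) (4 * δ * (2 * D + 1)) := by
  obtain ⟨T⟩ := ShortestPathTree.nonempty_of_connected hG r
  obtain ⟨O, hO⟩ := T.exists_overloaded 𝒬 (4 * δ * D)
  set blocks := (insert r O).image (T.block O)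
  set bad := {P ∈ 𝒬 | 4 * δ < #{A ∈ blocks | ¬Disjoint A P}}
  have hblocks : IsPartCollection G blocks :=
    isPartCollection_image_block (coe_insert r O).subset
  have hheavy : ∀ A ∈ O.image (T.block O), 4 * δ ≤ #{P ∈ 𝒬 | ¬Disjoint A P} := by
    refine forall_mem_image.2 fun x hx => ?_
    simp only [not_disjoint_block_iff]
    exact (Nat.le_mul_of_pos_right _ hD0).trans ((hO x).1 hx)
  have hblocks_card : #blocks ≤ #(O.image (T.block O)) + 1 := by
    rw [show blocks = _ from image_insert ..]
    exact card_insert_le _ _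
  have hbad : 3 * #bad ≤ #𝒬 :=
    three_mul_card_filter_bipartiteBelow_le (image_subset_image (subset_insert r O)) hblocks_card
      (hδ _ _ hblocks h𝒬) hheavy
  refine ⟨bad, filter_subset _ _, hbad, T.shortcut O, fun e => ?_, fun P hP => ?_⟩
  · have hlight : ∀ v ∉ O, #{P ∈ 𝒬 | v ∈ (T.shortcut O P).verts} ≤ 4 * δ * D :=
      fun v hv => (not_le.1 (mt (hO v).2 hv)).le
    exact (card_le_card (filter_subset_filter _ sdiff_subset)).trans
      (card_filter_mem_edgeSet_shortcut_le hlight e)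
  · obtain ⟨hP𝒬, hPbad⟩ := mem_sdiff.1 hP
    have hfew : #{A ∈ blocks | ¬Disjoint A P} ≤ 4 * δ :=
      not_lt.1 fun h => hPbad (mem_filter.2 ⟨hP𝒬, h⟩)
    have hP' := h𝒬.connected P hP𝒬
    exact ⟨connected_partGraph_shortcut hP' O, fun u v =>
      (dist_partGraph_shortcut_le hD hP' O u v).trans (Nat.mul_le_mul_right _ hfew)⟩

lemma exists_isShortcut_of_incidenceDensityLE [Finite V] (hG : G.Connected)
    (hD : ∀ v, G.dist v r ≤ D) (hD0 : 0 < D) (hδ : IncidenceDensityLE G δ)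
    (h𝒬 : IsPartCollection G 𝒬) {L : ℕ} (hL : #𝒬 < 3 ^ L) :
    ∃ H, IsShortcut G 𝒬 H (4 * δ * D * L) (4 * δ * (2 * D + 1)) := by
  classical
  induction L generalizing 𝒬 with
  | zero =>
    obtain rfl : 𝒬 = ∅ := card_eq_zero.1 (Nat.lt_one_iff.1 hL)
    exact ⟨⊥, by simp, by simp⟩
  | succ L ih =>
    obtain ⟨bad, hsub, hcard, H, hH⟩ := exists_isShortcut_sdiff hG hD hD0 hδ h𝒬
    obtain ⟨H', hH'⟩ := ih (h𝒬.subset hsub) (by rw [pow_succ] at hL; omega)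
    have hunion := hH.union hH'
    rw [sdiff_union_of_subset hsub, add_comm, ← Nat.mul_succ] at hunion
    exact ⟨_, hunion⟩

lemma exists_isShortcut_of_hasTreewidthLE [Finite V] (hG : G.Connected)
    (hD : ∀ u v, G.dist u v ≤ D) {k : ℕ} (htw : HasTreewidthLE G k)
    (h𝒬 : IsPartCollection G 𝒬) :
    ∃ H, IsShortcut G 𝒬 H (8 * k * D * Nat.clog 2 (Nat.card V)) (8 * k * (2 * D + 1)) := by
  rcases subsingleton_or_nontrivial V with _ | _
  · exact ⟨⊥, isShortcut_bot_of_subsingleton h𝒬⟩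
  obtain ⟨r⟩ := hG.nonempty
  obtain ⟨s, hrs⟩ := hG.preconnected.exists_adj_of_nontrivial r
  have hk : 0 < k := pos_of_hasTreewidthLE htw hrs
  have hD0 : 0 < D := (hG.pos_dist_of_ne hrs.ne).trans_le (hD r s)
  have hδ : IncidenceDensityLE G (2 * k) :=
    (incidenceDensityLE_of_hasTreewidthLE htw).mono (by omega)
  have hclog : Nat.clog 2 (Nat.card V) ≠ 0 :=
    (Nat.clog_pos one_lt_two Finite.one_lt_card).ne'
  have hcard : #𝒬 < 3 ^ Nat.clog 2 (Nat.card V) :=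
    calc #𝒬 ≤ Nat.card V := h𝒬.card_le
      _ ≤ 2 ^ Nat.clog 2 (Nat.card V) := Nat.le_pow_clog one_lt_two _
      _ < 3 ^ Nat.clog 2 (Nat.card V) := Nat.pow_lt_pow_left (by norm_num) hclog
  have hconst : 4 * (2 * k) = 8 * k := by ring
  simpa only [hconst] using
    exists_isShortcut_of_incidenceDensityLE hG (hD · r) hD0 hδ h𝒬 hcard

end Shortcuts

/-- **Corollary.** Any finite connected graph `G` with `n` vertices, diameter `D`, and
treewidth at most `k` admits, for every collection of parts, a shortcut with congestion at
most `8kD⌈log₂ n⌉` and dilation at most `8k(2D+1)`. -/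
theorem shortcuts_of_treewidth
    {V : Type} [Fintype V] (G : SimpleGraph V) (hG : G.Connected)
    (D : ℕ) (hD : ∀ u v : V, G.dist u v ≤ D)
    (k : ℕ) (htw : HasTreewidthLE G k)
    (m : ℕ) (P : Fin m → Set V)
    (hdisj : Pairwise fun i j => Disjoint (P i) (P j))
    (hconn : ∀ i, (G.induce (P i)).Connected) :
    ∃ H : Fin m → G.Subgraph,
      (∀ e : Sym2 V,
        {i : Fin m | e ∈ (H i).edgeSet}.ncard ≤ 8 * k * D * Nat.clog 2 (Fintype.card V)) ∧
      (∀ i, (partGraph G (P i) (H i)).coe.Connected ∧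
        ∀ u v, (partGraph G (P i) (H i)).coe.dist u v ≤ 8 * k * (2 * D + 1)) := by
  classical
  have hinj : Function.Injective P := fun i j hij => by
    by_contra hne
    have hempty : P i = ∅ := disjoint_self.1 (by simpa only [hij] using hdisj hne)
    exact (Set.nonempty_coe_sort.1 (hconn i).nonempty).ne_empty hempty
  have hparts : IsPartCollection G (Finset.univ.map ⟨P, hinj⟩) :=
    { connected := Finset.forall_mem_map.2 fun i _ => hconn i
      pairwiseDisjoint := by
        rw [Finset.coe_map, Finset.coe_univ]
        rintro _ ⟨i, -, rfl⟩ _ ⟨j, -, rfl⟩ hij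
        exact hdisj fun h => hij (congrArg P h) }
  obtain ⟨H, hH⟩ := exists_isShortcut_of_hasTreewidthLE hG hD htw hparts
  refine ⟨fun i => H (P i), fun e => ?_, fun i => hH.dilation _ (by simp)⟩
  have hcongestion := hH.congestion e
  rw [Finset.filter_map, Finset.card_map, Nat.card_eq_fintype_card] at hcongestion
  simpa [← Set.ncard_coe_finset] using hcongestion
end
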